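/- (Mahlburg) Let l ≥ 5 be prime and let i and j be positive integers. Then there are infinitely many arithmetic progressions Ak + B (i.e., infinitely many pairs of positive integers (A, B)) such that M(m, l^j, Ak + B) ≡ 0 (mod l^i) simultaneously for every integer m with 0 ≤ m ≤ l^j − 1 and every natural number k. -/

import Mathlib

/-!
Let `P = ∑ p(n) qⁿ` be the partition series. The proof has three ingredients.

*The crank and quasimodular forms.* For `n ≥ 2` the partitions of `n`, weighted by `z ^ crank`, are
counted by `∏ (1 - qⁱ) / ((1 - z qⁱ) (1 - z⁻¹ qⁱ))` (`crank_gf`; the proof uses the `q`-binomial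
theorem). Putting `z = exp u` and differentiating at `u = 0`, the `k`-th power moment of the crank
is the `n`-th coefficient of `P F`, where `F` is a polynomial in the series
`∑ (1 - (-1)ʲ) σⱼ(n) qⁿ` (`crank_moment`). Such an `F` is a combination of products `E₂ʲ h` with `h`
modular of even weight and level one (`aeval_mem_quasi`).

*Congruences for coefficients of `P F`.* Fix a prime `Q ≠ 2, 3, l`. Given `b`, there is a `K` such
that, whenever `24 n - 1 = l Q ^ (2 t K - 1) m` with `t > 0` and `Q ∤ m`, the `n`-th coefficient of
`P F` is divisible by `l ^ b` (`good_quasi`). For modular `F = h` this is `U_step`: modulo `l ^ b`, the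
series `P h` becomes modular after multiplication by a power of `∏ (1 - qⁿ)` which is congruent to a
series in `q ^ l`, and applying `U_l` and dividing by a power of `Δ` gives `η ^ r H` with `0 ≤ r < 24`
and `H` of level one. The Hecke operator `T(Q ^ 2)` acts on the forms `η ^ r H` and gives a recurrence
for their coefficients at `Q ^ (2 k - 1) m`. Modulo `l ^ b` this recurrence lives in a finite set and
is reversible, so it is periodic, and it starts from the value `0` (`eta_tower_dvd`). Powers of `E₂`
are reached by applying `24 q d/dq - 1`, which multiplies the `n`-th coefficient by `24 n - 1` and maps
`P E₂ʲ h` to a nonzero multiple of `P E₂ʲ⁺¹ h` plus terms with lower powers of `E₂` (`good_step`).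
The transformation behaviour of `η` under the matrices occurring in `T(Q ^ 2)` comes from Poisson
summation applied to its theta series, with the multipliers expressed as Gauss sums (`eta_shift`).

*From moments to residue classes.* By the previous point all sums of binomial coefficients
`Ring.choose (crank π) k` over the partitions `π` of suitable `n` are divisible by high powers of `l`.
The indicator function of a residue class modulo `l ^ j` is continuous on `ℤ_[l]`, so by Mahler's
theorem it is, modulo `l ^ i`, a finite `ℤ_[l]`-combination of binomial coefficients
(`exists_mahler_approx`). Summing over all partitions of `n` gives the congruence, and the admissible
`n` contain an arithmetic progression (`exists_progression`), all of whose tails qualify.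
-/

/-- `p n` is the number of partitions of `n`. -/
def partitionCount (n : ℕ) : ℕ := Fintype.card (Nat.Partition n)

/-- The Andrews–Garvan crank of a partition `π`: if `π` has no parts equal to 1,
the crank is the largest part; otherwise, letting `ω` be the number of parts equal
to 1 and `o` the number of parts strictly larger than `ω`, the crank is `o - ω`. -/
def Nat.Partition.crank {n : ℕ} (π : n.Partition) : ℤ :=
  if π.parts.count 1 = 0 then (π.parts.sup : ℤ)
  else ((π.parts.filter (fun x => π.parts.count 1 < x)).card : ℤ) - (π.parts.count 1 : ℤ)

/-- `M m q k`: the number of partitions of `k` whose crank is congruent to `m` mod `q`. -/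
def crankCountMod (m : ℤ) (q : ℕ) (k : ℕ) : ℕ :=
  Fintype.card {π : k.Partition // π.crank ≡ m [ZMOD q]}

namespace MahlburgCrank

/-! ### The `q`-binomial theorem for a nilpotent `q` -/

section QBinomial

open Finset

variable {S : Type*} [CommRing S]

/-- The `q`-binomial theorem, in a ring where `q` is nilpotent so that both sides are finite:
`∑ (a;q)ⱼ/(q;q)ⱼ tʲ = (at;q)_∞/(t;q)_∞` for `t` a multiple of `q`. -/
theorem qBinomial {q : S} {N : ℕ} (hq : q ^ (N + 1) = 0) (a t t' : S) (ht : t = q * t')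
    (c : ℕ → S) (hc0 : c 0 = 1)
    (hc : ∀ j, c (j + 1) * (1 - q ^ (j + 1)) = c j * (1 - a * q ^ j)) :
    (∏ n ∈ range N, (1 - q ^ n * t)) * ∑ j ∈ range (N + 1), c j * t ^ j
      = ∏ n ∈ range N, (1 - a * q ^ n * t) := by
  have step : ∀ w w' : S, w = q * w' →
      (1 - w) * ∑ j ∈ range (N + 1), c j * w ^ j
        = (1 - a * w) * ∑ j ∈ range (N + 1), c j * (q * w) ^ j := by
    intro w w' hw
    have hwN : w ^ (N + 1) = 0 := by rw [hw, mul_pow, hq, zero_mul]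
    have h1 : ∑ j ∈ range (N + 1), c j * w ^ j - ∑ j ∈ range (N + 1), c j * (q * w) ^ j
        = ∑ j ∈ range (N + 1), c j * (1 - q ^ j) * w ^ j := by
      rw [← sum_sub_distrib]
      exact sum_congr rfl fun j _ => by ring
    have h2 : ∑ j ∈ range (N + 1), c j * (1 - q ^ j) * w ^ j
        = ∑ j ∈ range N, c j * (1 - a * q ^ j) * w ^ (j + 1) := by
      rw [sum_range_succ']
      simp only [pow_zero, sub_self, mul_zero, zero_mul, add_zero]
      exact sum_congr rfl fun j _ => by rw [hc]
    have h3 : ∑ j ∈ range (N + 1), c j * (1 - a * q ^ j) * w ^ (j + 1)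
        = ∑ j ∈ range N, c j * (1 - a * q ^ j) * w ^ (j + 1) := by
      rw [sum_range_succ, hwN]; simp
    have h4 : ∑ j ∈ range (N + 1), c j * (1 - a * q ^ j) * w ^ (j + 1)
        = w * ∑ j ∈ range (N + 1), c j * w ^ j
          - a * w * ∑ j ∈ range (N + 1), c j * (q * w) ^ j := by
      rw [mul_sum, mul_sum, ← sum_sub_distrib]
      exact sum_congr rfl fun j _ => by ring
    linear_combination h1 + h2 - h3 + h4
  have iter : ∀ n, (∏ k ∈ range n, (1 - q ^ k * t)) * ∑ j ∈ range (N + 1), c j * t ^ j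
      = (∏ k ∈ range n, (1 - a * q ^ k * t)) *
        ∑ j ∈ range (N + 1), c j * (q ^ n * t) ^ j := by
    intro n
    induction n with
    | zero => simp
    | succ n ih =>
      have := step (q ^ n * t) (q ^ n * t') (by rw [ht]; ring)
      rw [prod_range_succ, prod_range_succ]
      have e : q * (q ^ n * t) = q ^ (n + 1) * t := by ring
      rw [e] at this
      linear_combination (1 - q ^ n * t) * ih + (∏ k ∈ range n, (1 - a * q ^ k * t)) * this
  rw [iter N]
  have h0 : q ^ N * t = 0 := by rw [ht, ← mul_assoc, ← pow_succ, hq, zero_mul]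
  rw [h0, sum_range_succ']
  simp [hc0]

/-- The product formula behind the crank generating function, for `q` nilpotent.  Here `α`, `β`
and `γ` are the inverses of `1 - qⁱ`, `1 - z qⁱ` and `1 - z⁻¹ qⁱ`. -/
theorem crank_identity {q z z' : S} {N : ℕ} (hq : q ^ (N + 1) = 0) (hz : z * z' = 1)
    (α β γ : ℕ → S) (hα : ∀ i, α (i + 1) * (1 - q ^ (i + 1)) = 1)
    (hβ : ∀ i, β (i + 1) * (1 - z * q ^ (i + 1)) = 1)
    (hγ : ∀ i, γ (i + 1) * (1 - z' * q ^ (i + 1)) = 1) :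
    (1 - q) * ∑ j ∈ range (N + 1), (z' * q) ^ j * (∏ i ∈ range j, α (i + 1)) *
        (∏ i ∈ Ico j N, β (i + 1))
      = ∏ i ∈ range N, ((1 - q ^ (i + 1)) * β (i + 1) * γ (i + 1)) := by
  have hprod : ∀ n, (∏ i ∈ range n, β (i + 1)) * ∏ i ∈ range n, (1 - z * q ^ (i + 1)) = 1 := by
    intro n; rw [← prod_mul_distrib]; exact prod_eq_one fun i _ => hβ i
  have hprodγ : (∏ i ∈ range N, γ (i + 1)) * ∏ i ∈ range N, (1 - z' * q ^ (i + 1)) = 1 := by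
    rw [← prod_mul_distrib]; exact prod_eq_one fun i _ => hγ i
  set c : ℕ → S := fun j => (∏ i ∈ range j, α (i + 1)) * ∏ i ∈ range j, (1 - z * q ^ (i + 1))
    with hc
  have key := qBinomial hq (z * q) (q * z') z' rfl c (by simp [hc]) (by
    intro j
    simp only [hc, prod_range_succ]
    have := hα j
    linear_combination (∏ i ∈ range j, α (i + 1)) * (∏ i ∈ range j, (1 - z * q ^ (i + 1)))
      * (1 - z * q ^ (j + 1)) * this)
  have hterm : ∀ j ∈ range (N + 1), (z' * q) ^ j * (∏ i ∈ range j, α (i + 1)) *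
        (∏ i ∈ Ico j N, β (i + 1)) = (∏ i ∈ range N, β (i + 1)) * (c j * (q * z') ^ j) := by
    intro j hj
    have hj' : j ≤ N := by simpa [Nat.lt_succ_iff] using hj
    rw [← prod_range_mul_prod_Ico _ hj']
    have := hprod j
    simp only [hc]
    rw [mul_comm q z']
    linear_combination (-(z' * q) ^ j * (∏ i ∈ range j, α (i + 1)) *
      (∏ i ∈ Ico j N, β (i + 1))) * this
  rw [sum_congr rfl hterm, ← mul_sum]
  have hL : ∏ n ∈ range N, (1 - q ^ n * (q * z')) = ∏ i ∈ range N, (1 - z' * q ^ (i + 1)) :=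
    prod_congr rfl fun i _ => by ring
  have hR : (1 - q) * ∏ n ∈ range N, (1 - z * q * q ^ n * (q * z'))
      = ∏ i ∈ range N, (1 - q ^ (i + 1)) := by
    have e : ∏ n ∈ range N, (1 - z * q * q ^ n * (q * z'))
        = ∏ n ∈ range N, (1 - q ^ (n + 1 + 1)) :=
      prod_congr rfl fun i _ => by linear_combination (-q ^ (i + 2)) * hz
    have e2 := prod_range_succ' (fun i => (1 - q ^ (i + 1))) N
    rw [prod_range_succ, hq] at e2
    rw [e]
    simp only [sub_zero, mul_one, zero_add, pow_one] at e2
    rw [e2, mul_comm]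
  rw [hL] at key
  rw [prod_mul_distrib, prod_mul_distrib, ← hR]
  linear_combination (∏ i ∈ range N, β (i + 1)) * (1 - q) * (∏ i ∈ range N, γ (i + 1)) * key
    - (1 - q) * (∏ i ∈ range N, β (i + 1)) * (∑ j ∈ range (N + 1), c j * (q * z') ^ j) * hprodγ

/-- Euler's identity `∑ wᵏ/(q;q)ₖ = 1/(w;q)_∞` at `w = zq`, for `q` nilpotent. -/
theorem euler_identity {q z : S} {N : ℕ} (hq : q ^ (N + 1) = 0)
    (α β : ℕ → S) (hα : ∀ i, α (i + 1) * (1 - q ^ (i + 1)) = 1)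
    (hβ : ∀ i, β (i + 1) * (1 - z * q ^ (i + 1)) = 1) :
    ∑ k ∈ range (N + 1), (z * q) ^ k * ∏ i ∈ range k, α (i + 1)
      = ∏ i ∈ range N, β (i + 1) := by
  have key := qBinomial hq 0 (q * z) z rfl (fun j => ∏ i ∈ range j, α (i + 1)) (by simp) (by
    intro j
    simp only [prod_range_succ]
    linear_combination (∏ i ∈ range j, α (i + 1)) * hα j)
  have hprod : (∏ i ∈ range N, β (i + 1)) * ∏ i ∈ range N, (1 - z * q ^ (i + 1)) = 1 := by
    rw [← prod_mul_distrib]; exact prod_eq_one fun i _ => hβ i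
  have hL : ∏ n ∈ range N, (1 - q ^ n * (q * z)) = ∏ i ∈ range N, (1 - z * q ^ (i + 1)) :=
    prod_congr rfl fun i _ => by ring
  have hS : ∑ k ∈ range (N + 1), (z * q) ^ k * ∏ i ∈ range k, α (i + 1)
      = ∑ j ∈ range (N + 1), (∏ i ∈ range j, α (i + 1)) * (q * z) ^ j :=
    sum_congr rfl fun i _ => by ring
  rw [hL] at key
  simp only [zero_mul, sub_zero, prod_const_one] at key
  rw [hS]
  linear_combination (∏ i ∈ range N, β (i + 1)) * key
    - (∑ j ∈ range (N + 1), (∏ i ∈ range j, α (i + 1)) * (q * z) ^ j) * hprod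

end QBinomial

/-! ### The generating function of the crank -/

section CrankGF

open Finset PowerSeries

variable {R : Type*} [CommRing R]

/-- The geometric series `1 / (1 - c Xⁱ)` (for `i ≥ 1`). -/
noncomputable def geo (c : R) (i : ℕ) : R⟦X⟧ := invOfUnit (1 - C c * X ^ i) 1

theorem geo_mul (c : R) (i : ℕ) : geo c (i + 1) * (1 - C c * X ^ (i + 1)) = 1 := by
  rw [mul_comm]; exact mul_invOfUnit _ _ (by simp)

/-- The sum over the partitions of `n` of a multiplicative weight, in which a part `i` of
multiplicity `c` contributes `f i c`. -/
noncomputable def wsum (n : ℕ) (f : ℕ → ℕ → R) : R :=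
  ∑ p : n.Partition, ∏ i ∈ p.parts.toFinset, f i (p.parts.count i)

/-- The generating function of `wsum` is the product, over the part sizes, of the generating
functions of the multiplicities. -/
theorem wsum_eq (n N : ℕ) (hn : n ≤ N) (f : ℕ → ℕ → R) (F : ℕ → R⟦X⟧)
    (hF : ∀ i < N, ∀ m, coeff m (F i) = if m = 0 then 1 else
      if (i + 1) ∣ m then f (i + 1) (m / (i + 1)) else 0) :
    wsum n f = coeff n (∏ i ∈ range N, F i) := by
  let _ : TopologicalSpace R := ⊥
  have : DiscreteTopology R := ⟨rfl⟩
  open scoped PowerSeries.WithPiTopology in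
  set f' : ℕ → ℕ → R := fun i c => if i ≤ N then f i c else 0 with hf'
  have h1 : wsum n f = coeff n (Nat.Partition.genFun f') := by
    rw [Nat.Partition.coeff_genFun, wsum]
    refine sum_congr rfl fun p _ => ?_
    rw [Finsupp.prod, Multiset.toFinsupp_support]
    refine prod_congr rfl fun i hi => ?_
    rw [Multiset.toFinsupp_apply, hf']
    have : i ≤ n := by
      have := Multiset.le_sum_of_mem (Multiset.mem_toFinset.mp hi)
      rwa [p.parts_sum] at this
    simp [this.trans hn]
  have h2 := Nat.Partition.hasProd_genFun f'
  have h3 : ∀ i, i < N → 1 + ∑' j, f' (i + 1) (j + 1) • (X : R⟦X⟧) ^ ((i + 1) * (j + 1)) = F i := by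
    intro i hi
    ext m
    have hsum := Nat.Partition.summable_genFun_term f' i
    rw [map_add, hsum.map_tsum _ (WithPiTopology.continuous_coeff _ _), hF i hi m]
    rcases Nat.eq_zero_or_pos m with rfl | hm
    · have : ∀ j, coeff 0 (f' (i + 1) (j + 1) • (X : R⟦X⟧) ^ ((i + 1) * (j + 1))) = 0 := by
        intro j; simp
      simp [this]
    · have e1 : coeff m (1 : R⟦X⟧) = 0 := by rw [coeff_one, if_neg hm.ne']
      rw [e1, zero_add, if_neg hm.ne']
      split_ifs with hd
      · obtain ⟨d, rfl⟩ := hd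
        have hd : 0 < d := Nat.pos_of_mul_pos_left hm
        rw [tsum_eq_single (d - 1)]
        · rw [Nat.sub_add_cancel hd, Nat.mul_div_cancel_left _ (Nat.succ_pos i)]
          have : i + 1 ≤ N := hi
          simp [hf', this]
        · intro b hb
          have : (i + 1) * d ≠ (i + 1) * (b + 1) := by
            intro h
            have := Nat.eq_of_mul_eq_mul_left (Nat.succ_pos i) h
            omega
          rw [map_smul, coeff_X_pow, if_neg this, smul_zero]
      · convert tsum_zero with b
        have : m ≠ (i + 1) * (b + 1) := fun h => hd ⟨_, h⟩
        rw [map_smul, coeff_X_pow, if_neg this, smul_zero]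
  have h4 : HasProd (fun i ↦ 1 + ∑' j, f' (i + 1) (j + 1) • (X : R⟦X⟧) ^ ((i + 1) * (j + 1)))
      (∏ i ∈ range N, F i) := by
    rw [prod_congr rfl fun i hi => (h3 i (mem_range.mp hi)).symm]
    refine hasProd_prod_of_ne_finset_one fun i hi => ?_
    have : ¬ (i + 1 ≤ N) := by simpa using hi
    simp [hf', this]
  rw [h1, h2.unique h4]

theorem coeff_geo (c : R) (i m : ℕ) : coeff m (geo c (i + 1)) =
    if m = 0 then 1 else if (i + 1) ∣ m then c ^ (m / (i + 1)) else 0 := by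
  have h : geo c (i + 1) = PowerSeries.mk fun m => if (i + 1) ∣ m then c ^ (m / (i + 1)) else 0 := by
    have e : (PowerSeries.mk fun m => if (i + 1) ∣ m then c ^ (m / (i + 1)) else 0)
        * (1 - C c * X ^ (i + 1)) = 1 := by
      ext m
      rw [mul_sub, mul_one, map_sub, coeff_mk, mul_left_comm, coeff_C_mul, coeff_mul_X_pow',
        coeff_one, coeff_mk]
      rcases Nat.eq_zero_or_pos m with rfl | hm
      · simp
      · rw [if_neg hm.ne']
        by_cases hle : i + 1 ≤ m
        · rw [if_pos hle]
          obtain ⟨k, rfl⟩ := Nat.exists_eq_add_of_le hle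
          simp only [Nat.add_sub_cancel_left]
          by_cases hd : (i + 1) ∣ k
          · rw [if_pos ((Nat.dvd_add_right dvd_rfl).mpr hd), if_pos hd,
              Nat.add_div_left _ (Nat.succ_pos i), pow_succ]
            ring
          · rw [if_neg (fun h => hd ((Nat.dvd_add_right dvd_rfl).mp h)), if_neg hd]
            simp
        · rw [if_neg hle, if_neg (fun h => hle (Nat.le_of_dvd hm h))]
          simp
    calc geo c (i + 1) = geo c (i + 1) * ((PowerSeries.mk fun m =>
          if (i + 1) ∣ m then c ^ (m / (i + 1)) else 0) * (1 - C c * X ^ (i + 1))) := by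
            rw [e, mul_one]
      _ = (PowerSeries.mk fun m => if (i + 1) ∣ m then c ^ (m / (i + 1)) else 0) *
          (geo c (i + 1) * (1 - C c * X ^ (i + 1))) := by ring
      _ = _ := by rw [geo_mul, mul_one]
  rw [h, coeff_mk]
  rcases Nat.eq_zero_or_pos m with rfl | hm
  · simp
  · simp [hm.ne']

/-- `1 / ((1 - X)(1 - X²) ⋯ (1 - Xᵏ))`. -/
noncomputable def aP (R : Type*) [CommRing R] (k : ℕ) : R⟦X⟧ := ∏ i ∈ range k, geo (1 : R) (i + 1)

theorem one_sub_mul_aP_succ (k : ℕ) :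
    (1 - X) * aP R (k + 1) = ∏ i ∈ range k, geo (1 : R) (i + 1 + 1) := by
  have := geo_mul (1 : R) 0
  simp only [zero_add, map_one, one_mul, pow_one] at this
  rw [aP, prod_range_succ', zero_add, mul_left_comm, mul_comm (1 - X), this, mul_one]

/-- Partitions of `n` without ones and with all parts at most `k`. -/
theorem wsum_noOnes {n N k : ℕ} (hn : 2 ≤ n) (hnN : n ≤ N) (hk : k ≤ N) :
    wsum n (fun i _ => if i = 1 then (0 : R) else if i ≤ k then 1 else 0)
      = coeff n ((1 - X) * aP R k) := by
  obtain ⟨M, rfl⟩ : ∃ M, N = M + 1 := ⟨N - 1, by omega⟩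
  rw [wsum_eq n (M + 1) hnN _ (fun i => if i = 0 then 1 else if i + 1 ≤ k then
    geo 1 (i + 1) else 1)]
  · rw [prod_range_succ', if_pos rfl, mul_one]
    rcases Nat.eq_zero_or_pos k with rfl | hk0
    · have : ∀ i, ¬ (i + 1 + 1 ≤ 0) := by omega
      have h3 : n ≠ 0 := by omega
      have h4 : n ≠ 1 := by omega
      simp [aP, coeff_one, coeff_X, h3, h4]
    · obtain ⟨k, rfl⟩ : ∃ k', k = k' + 1 := ⟨k - 1, by omega⟩
      rw [one_sub_mul_aP_succ, ← prod_range_mul_prod_Ico _ (by omega : k ≤ M)]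
      rw [prod_eq_one (s := Ico k M), mul_one]
      · congr 1
        refine prod_congr rfl fun i hi => ?_
        have : i < k := mem_range.mp hi
        rw [if_neg (by omega), if_pos (by omega)]
      · intro i hi
        rw [mem_Ico] at hi
        rw [if_neg (by omega), if_neg (by omega)]
  · intro i hi m
    by_cases h0 : i = 0
    · subst h0; simp [coeff_one]
    · have : i + 1 ≠ 1 := by omega
      simp only [h0, if_false, this]
      split_ifs <;> simp_all [coeff_geo, coeff_one]

/-- The generating function of the partitions with a prescribed number `j ≥ 1` of ones, weighted by
`z` to the number of parts larger than `j`. -/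
theorem wsum_ones {n N j : ℕ} (hnN : n ≤ N) (hj0 : 1 ≤ j) (hj : j ≤ N) (z : R) (Z : ℕ → R)
    (ψ : R⟦X⟧) (hψ : ∀ m, coeff m ψ = if m = 0 then 1 else Z m) :
    wsum n (fun i c => if i = 1 then Z c else if i ≤ j then 1 else z ^ c)
      = coeff n (ψ * ((1 - X) * (aP R j * ∏ i ∈ Ico j N, geo z (i + 1)))) := by
  rw [wsum_eq n N hnN _ (fun i => if i = 0 then ψ else if i + 1 ≤ j then
    geo 1 (i + 1) else geo z (i + 1))]
  · congr 1
    obtain ⟨j, rfl⟩ : ∃ k', j = k' + 1 := ⟨j - 1, by omega⟩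
    rw [← mul_assoc (1 - X), one_sub_mul_aP_succ, ← prod_range_mul_prod_Ico _ hj,
      prod_range_succ', if_pos rfl, mul_assoc, mul_left_comm]
    congr 1
    congr 1
    · refine prod_congr rfl fun i hi => ?_
      have : i < j := mem_range.mp hi
      rw [if_neg (by omega), if_pos (by omega)]
    · refine prod_congr rfl fun i hi => ?_
      rw [mem_Ico] at hi
      rw [if_neg (by omega), if_neg (by omega)]
  · intro i hi m
    by_cases h0 : i = 0
    · subst h0; simp [hψ]
    · have : i + 1 ≠ 1 := by omega
      simp only [h0, if_false, this]
      split_ifs <;> simp_all [coeff_geo]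

/-- The contribution to the crank generating function of the partitions with exactly `j ≥ 1` ones. -/
theorem sum_ones_eq {n N j : ℕ} (hnN : n ≤ N) (hj0 : 1 ≤ j) (hj : j ≤ N) (z : R) :
    ∑ p : n.Partition, (if p.parts.count 1 = j then
        z ^ (p.parts.filter (fun x => j < x)).card else 0)
      = coeff n (X ^ j * ((1 - X) * (aP R j * ∏ i ∈ Ico j N, geo z (i + 1)))) := by
  have h1 := wsum_ones (n := n) hnN hj0 hj z (fun c => if c = j then 1 else 0)
    (1 + X ^ j) (by intro m; rcases Nat.eq_zero_or_pos m with rfl | hm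
                    · have : j ≠ 0 := by omega
                      simp [this]
                    · simp [coeff_X_pow, coeff_one, hm.ne'])
  have h0 := wsum_ones (n := n) hnN hj0 hj z (fun _ => 0) 1 (by intro m; simp [coeff_one])
  have : X ^ j * ((1 - X) * (aP R j * ∏ i ∈ Ico j N, geo z (i + 1)))
    = (1 + X ^ j) * ((1 - X) * (aP R j * ∏ i ∈ Ico j N, geo z (i + 1)))
      - 1 * ((1 - X) * (aP R j * ∏ i ∈ Ico j N, geo z (i + 1))) := by ring
  rw [this, map_sub, ← h1, ← h0, wsum, wsum, ← sum_sub_distrib]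
  refine sum_congr rfl fun p _ => ?_
  by_cases h : 1 ∈ p.parts.toFinset
  · have hc : p.parts.count 1 ≠ 0 := by
      rw [Multiset.mem_toFinset] at h
      exact (Multiset.count_pos.mpr h).ne'
    have e0 : ∏ i ∈ p.parts.toFinset, (if i = 1 then (0 : R) else if i ≤ j then 1
        else z ^ p.parts.count i) = 0 := prod_eq_zero h (by simp)
    rw [e0, sub_zero]
    rw [← mul_prod_erase _ _ h, if_pos rfl]
    split_ifs with hcj
    · rw [one_mul, ← Multiset.toFinset_sum_count_eq, ← prod_pow_eq_pow_sum]
      symm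
      have hsub : (p.parts.filter (fun x => j < x)).toFinset ⊆ p.parts.toFinset.erase 1 := by
        intro x hx
        simp only [Multiset.toFinset_filter, Finset.mem_filter, Multiset.mem_toFinset] at hx
        simp only [mem_erase, Multiset.mem_toFinset]
        exact ⟨by omega, hx.1⟩
      rw [← prod_subset hsub]
      · refine prod_congr rfl fun i hi => ?_
        simp only [Multiset.toFinset_filter, Finset.mem_filter, Multiset.mem_toFinset] at hi
        rw [if_neg (by omega), if_neg (by omega), Multiset.count_filter, if_pos hi.2]
      · intro i hi hi'
        simp only [Multiset.toFinset_filter, Finset.mem_filter, Multiset.mem_toFinset] at hi'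
        rw [mem_erase, Multiset.mem_toFinset] at hi
        have : i ≤ j := by by_contra hlt; exact hi' ⟨hi.2, by omega⟩
        rw [if_neg hi.1, if_pos this]
    · simp
  · have hc : p.parts.count 1 = 0 := by
      rw [Multiset.mem_toFinset] at h
      exact Multiset.count_eq_zero.mpr h
    rw [if_neg (by omega), eq_comm, sub_eq_zero]
    refine prod_congr rfl fun i hi => ?_
    have : i ≠ 1 := by rintro rfl; exact h hi
    rw [if_neg this, if_neg this]

/-- The contribution to the crank generating function of the partitions without ones, sorted by
their largest part. -/
theorem sum_noOnes_eq {n N : ℕ} (hn : 2 ≤ n) (hnN : n ≤ N) (z : R) :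
    ∑ p : n.Partition, (if p.parts.count 1 = 0 then z ^ p.parts.sup else 0)
      = coeff n ((1 - X) * ∑ k ∈ range (N + 1), (C z * X) ^ k * aP R k) := by
  set A : ℕ → R := fun k => wsum n (fun i _ => if i = 1 then (0 : R) else if i ≤ k then 1 else 0)
  have hA : ∀ k ≤ N, A k = coeff n ((1 - X) * aP R k) := fun k hk => wsum_noOnes hn hnN hk
  have hA' : ∀ k, A k = ∑ p : n.Partition, (if p.parts.count 1 = 0 ∧ p.parts.sup ≤ k
      then (1 : R) else 0) := by
    intro k
    refine sum_congr rfl fun p _ => ?_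
    split_ifs with h
    · refine prod_eq_one fun i hi => ?_
      rw [Multiset.mem_toFinset] at hi
      have h1 : i ≠ 1 := by rintro rfl; exact Multiset.count_eq_zero.mp h.1 hi
      beta_reduce
      rw [if_neg h1, if_pos ((Multiset.le_sup hi).trans h.2)]
    · rw [not_and_or] at h
      rcases h with h | h
      · have : 1 ∈ p.parts.toFinset := by
          rw [Multiset.mem_toFinset]; exact Multiset.count_ne_zero.mp h
        exact prod_eq_zero this (by simp)
      · rw [Multiset.sup_le] at h
        push Not at h
        obtain ⟨b, hb, hbk⟩ := h
        refine prod_eq_zero (Multiset.mem_toFinset.mpr hb) ?_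
        beta_reduce
        rw [if_neg (not_le.mpr hbk)]; simp
  have hL : ∑ p : n.Partition, (if p.parts.count 1 = 0 then z ^ p.parts.sup else 0)
      = ∑ k ∈ range N, z ^ (k + 1) * (A (k + 1) - A k) := by
    simp_rw [hA', ← sum_sub_distrib, mul_sum]
    rw [sum_comm]
    refine sum_congr rfl fun p _ => ?_
    by_cases h : p.parts.count 1 = 0
    · have hs : p.parts.sup ≤ n := by
        rw [Multiset.sup_le]
        intro b hb
        have := Multiset.le_sum_of_mem hb
        rwa [p.parts_sum] at this
      have hs1 : 1 ≤ p.parts.sup := by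
        by_contra h0
        have h0 : p.parts.sup = 0 := by omega
        have : p.parts = 0 := by
          rw [Multiset.eq_zero_iff_forall_notMem]
          intro a ha
          have := Multiset.le_sup ha
          have := p.parts_pos ha
          omega
        have hsum := p.parts_sum
        rw [this, Multiset.sum_zero] at hsum
        omega
      rw [if_pos h, sum_eq_single (p.parts.sup - 1)]
      · rw [Nat.sub_add_cancel hs1, if_pos ⟨h, le_rfl⟩, if_neg (by omega)]; ring
      · intro b _ hb
        by_cases h1 : p.parts.sup ≤ b
        · rw [if_pos ⟨h, by omega⟩, if_pos ⟨h, h1⟩]; ring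
        · rw [if_neg (by omega), if_neg (by omega)]; ring
      · intro hh; exfalso; apply hh; rw [mem_range]; omega
    · simp [h]
  rw [hL, sum_range_succ', mul_add, map_add]
  have hlast : coeff n ((1 - X) * ((C z * X) ^ 0 * aP R 0)) = 0 := by
    have h3 : n ≠ 0 := by omega
    have h4 : n ≠ 1 := by omega
    simp [aP, coeff_one, coeff_X, h3, h4]
  rw [hlast, add_zero, mul_sum, map_sum]
  refine sum_congr rfl fun k hk => ?_
  have hk : k < N := mem_range.mp hk
  rw [hA _ hk, hA _ hk.le, ← map_sub, ← coeff_C_mul]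
  congr 1
  have := geo_mul (1 : R) k
  rw [map_one, one_mul] at this
  have e : aP R (k + 1) = aP R k * geo 1 (k + 1) := by rw [aP, aP, prod_range_succ]
  rw [e, map_pow]
  linear_combination (C z ^ (k + 1) * (1 - X) * aP R k) * this

/-- The crank generating function: for `n ≥ 2` the crank has the weight enumerator given by
`∏ (1 - Xⁱ) / ((1 - z Xⁱ)(1 - z⁻¹ Xⁱ))`. -/
theorem crank_gf {n N : ℕ} (hn : 2 ≤ n) (hnN : n ≤ N) (z : Rˣ) :
    ∑ p : n.Partition, ((z ^ p.crank : Rˣ) : R)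
      = coeff n (∏ i ∈ range N, ((1 - X ^ (i + 1)) * geo (z : R) (i + 1) *
          geo ((z⁻¹ : Rˣ) : R) (i + 1))) := by
  have hsplit : ∑ p : n.Partition, ((z ^ p.crank : Rˣ) : R)
      = ∑ p : n.Partition, (if p.parts.count 1 = 0 then (z : R) ^ p.parts.sup else 0)
        + ∑ j ∈ range N, ((z⁻¹ : Rˣ) : R) ^ (j + 1) * ∑ p : n.Partition,
          (if p.parts.count 1 = j + 1 then
            (z : R) ^ (p.parts.filter (fun x => j + 1 < x)).card else 0) := by
    simp_rw [mul_sum]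
    rw [sum_comm, ← sum_add_distrib]
    refine sum_congr rfl fun p _ => ?_
    rw [Nat.Partition.crank]
    split_ifs with h
    · have : ∀ j, ¬ (p.parts.count 1 = j + 1) := by omega
      rw [h] 
      simp
    · have hle : p.parts.count 1 ≤ N := by
        refine le_trans ?_ hnN
        have h1 : p.parts.count 1 ≤ p.parts.card := Multiset.count_le_card _ _
        have h2 : p.parts.card ≤ p.parts.sum := by
          have := Multiset.card_nsmul_le_sum (s := p.parts) (a := 1) fun x hx => p.parts_pos hx
          simpa using this
        rw [p.parts_sum] at h2
        omega
      rw [sum_eq_single (p.parts.count 1 - 1)]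
      · rw [Nat.sub_add_cancel (by omega), if_pos rfl, zero_add, zpow_sub, zpow_natCast,
          zpow_natCast, ← inv_pow]
        push_cast
        ring
      · intro b _ hb
        rw [if_neg (by omega), mul_zero]
      · intro hh; exfalso; apply hh; rw [mem_range]; omega
  rw [hsplit, sum_noOnes_eq hn hnN]
  have h2 : ∑ j ∈ range N, ((z⁻¹ : Rˣ) : R) ^ (j + 1) * ∑ p : n.Partition,
          (if p.parts.count 1 = j + 1 then
            (z : R) ^ (p.parts.filter (fun x => j + 1 < x)).card else 0)
      = coeff n (∑ j ∈ range N, (C ((z⁻¹ : Rˣ) : R) * X) ^ (j + 1) * ((1 - X) *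
          (aP R (j + 1) * ∏ i ∈ Ico (j + 1) N, geo (z : R) (i + 1)))) := by
    rw [map_sum]
    refine sum_congr rfl fun j hj => ?_
    rw [sum_ones_eq hnN (by omega) (mem_range.mp hj), ← coeff_C_mul, map_pow,
      mul_pow, mul_assoc]
  rw [h2]
  -- the remaining identity holds modulo `X ^ (N + 1)`
  set π := Ideal.Quotient.mk (Ideal.span {(X : R⟦X⟧) ^ (N + 1)}) with hπ
  have hqn : (π X) ^ (N + 1) = 0 := by
    rw [← map_pow]; exact Ideal.Quotient.eq_zero_iff_mem.mpr (Ideal.mem_span_singleton_self _)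
  have hcoeff : ∀ f g : R⟦X⟧, π f = π g → coeff n f = coeff n g := by
    intro f g h
    rw [Ideal.Quotient.eq, Ideal.mem_span_singleton, X_pow_dvd_iff] at h
    have := h n (by omega)
    rwa [map_sub, sub_eq_zero] at this
  have hgeo : ∀ (c : R) i, π (geo c (i + 1)) * (1 - π (C c) * (π X) ^ (i + 1)) = 1 := by
    intro c i
    have := congrArg π (geo_mul c i)
    simpa using this
  have hzz : π (C (z : R)) * π (C ((z⁻¹ : Rˣ) : R)) = 1 := by
    rw [← map_mul, ← map_mul]; simp
  have I1 := crank_identity (q := π X) (z := π (C (z : R))) (z' := π (C ((z⁻¹ : Rˣ) : R))) hqn hzz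
    (fun i => π (geo 1 i)) (fun i => π (geo (z : R) i)) (fun i => π (geo ((z⁻¹ : Rˣ) : R) i))
    (fun i => by simpa using hgeo 1 i) (fun i => hgeo _ i) (fun i => hgeo _ i)
  have I2 := euler_identity (q := π X) (z := π (C (z : R))) hqn
    (fun i => π (geo 1 i)) (fun i => π (geo (z : R) i))
    (fun i => by simpa using hgeo 1 i) (fun i => hgeo _ i)
  have h1X : coeff n (1 - X : R⟦X⟧) = 0 := by
    have h3 : n ≠ 0 := by omega
    have h4 : n ≠ 1 := by omega
    simp [coeff_one, coeff_X, h3, h4]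
  rw [← map_add]
  apply hcoeff
  simp only [map_add, map_mul, map_sum, map_prod, map_pow, map_sub, map_one, aP] at I1 I2 ⊢
  rw [sum_range_succ'] at I1
  simp only [range_zero, prod_empty, pow_zero, one_mul, ← range_eq_Ico] at I1
  rw [← I1, I2, mul_add, mul_sum]
  refine Eq.trans (add_comm _ _) ?_
  congr 1
  exact sum_congr rfl fun j _ => by ring

end CrankGF

/-! ### Power moments of the crank -/

section Moments

open Finset PowerSeries

/-- The derivation `xⱼ ↦ xⱼ₊₁` of `ℚ[x₀, x₁, …]`. -/
noncomputable def shiftD : Derivation ℚ (MvPolynomial ℕ ℚ) (MvPolynomial ℕ ℚ) :=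
  MvPolynomial.mkDerivation ℚ fun j => MvPolynomial.X (j + 1)

/-- The polynomials `Yₖ` with `Dᵏ C = C · Yₖ(S, DS, D²S, …)` whenever `DC = C · S`. -/
noncomputable def momentPoly : ℕ → MvPolynomial ℕ ℚ
  | 0 => 1
  | k + 1 => shiftD (momentPoly k) + momentPoly k * MvPolynomial.X 0

theorem derivation_aeval {B : Type*} [CommRing B] [Algebra ℚ B] (D : Derivation ℚ B B) (s : ℕ → B)
    (hs : ∀ j, D (s j) = s (j + 1)) (p : MvPolynomial ℕ ℚ) :
    D (MvPolynomial.aeval s p) = MvPolynomial.aeval s (shiftD p) := by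
  induction p using MvPolynomial.induction_on with
  | C a => simp
  | add p q hp hq => simp [hp, hq]
  | mul_X p n hp =>
    rw [map_mul, Derivation.leibniz, Derivation.leibniz, hp, MvPolynomial.aeval_X, hs, shiftD,
      MvPolynomial.mkDerivation_X]
    simp

/-- Iterates of a derivation on an element `c` with logarithmic derivative `s 0`. -/
theorem iterate_derivation {B : Type*} [CommRing B] [Algebra ℚ B] (D : Derivation ℚ B B)
    (s : ℕ → B) (hs : ∀ j, D (s j) = s (j + 1)) (c : B) (hc : D c = c * s 0) (k : ℕ) :
    (D)^[k] c = c * MvPolynomial.aeval s (momentPoly k) := by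
  induction k with
  | zero => simp [momentPoly]
  | succ k ih =>
    rw [Function.iterate_succ_apply', ih, Derivation.leibniz, derivation_aeval D s hs, hc,
      momentPoly, map_add, map_mul, MvPolynomial.aeval_X, smul_eq_mul, smul_eq_mul]
    ring

/-- `d/du` acting on the coefficients of a power series over `ℚ⟦u⟧`. -/
noncomputable def coeffD : Derivation ℚ (PowerSeries (PowerSeries ℚ)) (PowerSeries (PowerSeries ℚ)) :=
  Derivation.mk'
    { toFun := fun f => PowerSeries.mk fun n => derivative ℚ (coeff n f)
      map_add' := fun f g => by ext1 n; simp
      map_smul' := fun c f => by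
        ext1 n
        have : ∀ (c : ℚ) (g : PowerSeries (PowerSeries ℚ)), coeff n (c • g) = c • coeff n g := fun _ _ => rfl
        simp [this] }
    (fun f g => by
      ext1 n
      simp only [LinearMap.coe_mk, AddHom.coe_mk, coeff_mk, smul_eq_mul, map_add, coeff_mul,
        map_sum, Derivation.leibniz]
      rw [sum_add_distrib]
      congr 1
      rw [← Finset.Nat.sum_antidiagonal_swap]
      exact sum_congr rfl fun x _ => by simp)

theorem coeff_coeffD (n : ℕ) (f : PowerSeries (PowerSeries ℚ)) :
    coeff n (coeffD f) = derivative ℚ (coeff n f) := by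
  simp [coeffD]

theorem coeff_iterate_coeffD (n k : ℕ) (f : PowerSeries (PowerSeries ℚ)) :
    coeff n ((coeffD)^[k] f) = (derivative ℚ)^[k] (coeff n f) := by
  induction k with
  | zero => rfl
  | succ k ih => rw [Function.iterate_succ_apply', Function.iterate_succ_apply', coeff_coeffD, ih]

/-- The unit `exp u` of `ℚ⟦u⟧`. -/
noncomputable def expUnit : (PowerSeries ℚ)ˣ where
  val := exp ℚ
  inv := evalNegHom (exp ℚ)
  val_inv := exp_mul_exp_neg_eq_one
  inv_val := by rw [mul_comm]; exact exp_mul_exp_neg_eq_one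

theorem derivative_expUnit : derivative ℚ (expUnit : PowerSeries ℚ) = expUnit := derivative_exp ℚ

theorem derivative_expUnit_inv :
    derivative ℚ ((expUnit⁻¹ : (PowerSeries ℚ)ˣ) : PowerSeries ℚ) = -(expUnit⁻¹ : (PowerSeries ℚ)ˣ) := by
  have h : ((expUnit⁻¹ : (PowerSeries ℚ)ˣ) : PowerSeries ℚ) * expUnit = 1 := by simp
  have := (derivative ℚ).leibniz_of_mul_eq_one h
  rw [this, derivative_expUnit, smul_eq_mul, neg_mul, pow_two, mul_assoc, h, mul_one]

theorem iterate_derivative_smul (a : ℚ) (f : PowerSeries ℚ) (hf : derivative ℚ f = a • f) (k : ℕ) :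
    (derivative ℚ)^[k] f = a ^ k • f := by
  induction k with
  | zero => simp
  | succ k ih => rw [Function.iterate_succ_apply', ih, Derivation.map_smul, hf, smul_smul, pow_succ]

theorem derivative_expUnit_pow (m : ℕ) :
    derivative ℚ ((expUnit : PowerSeries ℚ) ^ m) = (m : ℚ) • (expUnit : PowerSeries ℚ) ^ m := by
  cases m with
  | zero => simp
  | succ m =>
    rw [Derivation.leibniz_pow, derivative_expUnit, smul_eq_mul, Nat.add_sub_cancel,
      ← pow_succ, ← Nat.cast_smul_eq_nsmul ℚ]

theorem derivative_expUnit_inv_pow (m : ℕ) :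
    derivative ℚ (((expUnit⁻¹ : (PowerSeries ℚ)ˣ) : PowerSeries ℚ) ^ m)
      = (-m : ℚ) • ((expUnit⁻¹ : (PowerSeries ℚ)ˣ) : PowerSeries ℚ) ^ m := by
  cases m with
  | zero => simp
  | succ m =>
    rw [Derivation.leibniz_pow, derivative_expUnit_inv, smul_eq_mul, Nat.add_sub_cancel, mul_neg,
      ← pow_succ, ← Nat.cast_smul_eq_nsmul ℚ, smul_neg, neg_smul]

theorem iterate_derivative_expUnit_zpow (c : ℤ) (k : ℕ) :
    (derivative ℚ)^[k] ((expUnit ^ c : (PowerSeries ℚ)ˣ) : PowerSeries ℚ)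
      = (c : ℚ) ^ k • ((expUnit ^ c : (PowerSeries ℚ)ˣ) : PowerSeries ℚ) := by
  apply iterate_derivative_smul
  obtain ⟨m, rfl | rfl⟩ := c.eq_nat_or_neg
  · simpa using derivative_expUnit_pow m
  · rw [zpow_neg, zpow_natCast, ← inv_pow]
    simpa using derivative_expUnit_inv_pow m

theorem constantCoeff_expUnit : constantCoeff (expUnit : PowerSeries ℚ) = 1 := constantCoeff_exp

theorem constantCoeff_expUnit_inv :
    constantCoeff ((expUnit⁻¹ : (PowerSeries ℚ)ˣ) : PowerSeries ℚ) = 1 := by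
  have h : ((expUnit⁻¹ : (PowerSeries ℚ)ˣ) : PowerSeries ℚ) * expUnit = 1 := by simp
  have := congrArg constantCoeff h
  rwa [map_mul, constantCoeff_expUnit, mul_one, map_one] at this

theorem constantCoeff_expUnit_zpow (c : ℤ) :
    constantCoeff ((expUnit ^ c : (PowerSeries ℚ)ˣ) : PowerSeries ℚ) = 1 := by
  obtain ⟨m, rfl | rfl⟩ := c.eq_nat_or_neg
  · simp [constantCoeff_expUnit]
  · rw [zpow_neg, zpow_natCast, ← inv_pow, Units.val_pow_eq_pow_val, map_pow,
      constantCoeff_expUnit_inv, one_pow]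

/-- `∑ (1 - (-1)ʲ) σⱼ(n) Xⁿ`. -/
noncomputable def sigmaSeries (j : ℕ) : PowerSeries ℚ :=
  PowerSeries.mk fun n => (1 - (-1) ^ j) * (ArithmeticFunction.sigma j n : ℚ)

/-- Logarithmic derivative, with respect to `u`, of one factor of the crank generating function. -/
noncomputable def crankLog (i : ℕ) : PowerSeries (PowerSeries ℚ) :=
  C (expUnit : PowerSeries ℚ) * X ^ (i + 1) * geo (expUnit : PowerSeries ℚ) (i + 1)
    - C ((expUnit⁻¹ : (PowerSeries ℚ)ˣ) : PowerSeries ℚ) * X ^ (i + 1)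
      * geo ((expUnit⁻¹ : (PowerSeries ℚ)ˣ) : PowerSeries ℚ) (i + 1)

theorem coeffD_C (a : PowerSeries ℚ) : coeffD (C a) = C (derivative ℚ a) := by
  ext1 n
  rw [coeff_coeffD, coeff_C, coeff_C]
  split_ifs <;> simp

theorem coeffD_X_pow (m : ℕ) : coeffD (X ^ m) = 0 := by
  ext1 n
  rw [coeff_coeffD, coeff_X_pow]
  split_ifs <;> simp

theorem coeffD_geo (a : PowerSeries ℚ) (i : ℕ) :
    coeffD (geo a (i + 1)) = geo a (i + 1) * (C (derivative ℚ a) * X ^ (i + 1) * geo a (i + 1)) := by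
  rw [coeffD.leibniz_of_mul_eq_one (geo_mul a i)]
  simp only [map_sub, Derivation.map_one_eq_zero, Derivation.leibniz, coeffD_C, coeffD_X_pow,
    smul_eq_mul]
  ring

/-- The logarithmic `u`-derivative of the crank generating function at `z = exp u`. -/
theorem coeffD_crankProd (N : ℕ) :
    coeffD (∏ i ∈ range N, ((1 - X ^ (i + 1)) * geo (expUnit : PowerSeries ℚ) (i + 1) *
          geo ((expUnit⁻¹ : (PowerSeries ℚ)ˣ) : PowerSeries ℚ) (i + 1)))
      = (∏ i ∈ range N, ((1 - X ^ (i + 1)) * geo (expUnit : PowerSeries ℚ) (i + 1) *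
          geo ((expUnit⁻¹ : (PowerSeries ℚ)ˣ) : PowerSeries ℚ) (i + 1)))
        * ∑ i ∈ range N, crankLog i := by
  induction N with
  | zero => simp
  | succ N ih =>
    rw [prod_range_succ, Derivation.leibniz, ih, sum_range_succ]
    simp only [Derivation.leibniz, map_sub, Derivation.map_one_eq_zero, coeffD_X_pow, coeffD_geo,
      smul_eq_mul, derivative_expUnit, derivative_expUnit_inv, crankLog, map_neg]
    ring

theorem coeff_crankLog (i m : ℕ) : coeff m (crankLog i) = if m ≠ 0 ∧ (i + 1) ∣ m then
    (expUnit : PowerSeries ℚ) ^ (m / (i + 1))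
      - ((expUnit⁻¹ : (PowerSeries ℚ)ˣ) : PowerSeries ℚ) ^ (m / (i + 1)) else 0 := by
  have h : ∀ a : PowerSeries ℚ, coeff m (C a * X ^ (i + 1) * geo a (i + 1))
      = if m ≠ 0 ∧ (i + 1) ∣ m then a ^ (m / (i + 1)) else 0 := by
    intro a
    have e : C a * X ^ (i + 1) * geo a (i + 1) = geo a (i + 1) - 1 := by
      linear_combination (-1 : PowerSeries (PowerSeries ℚ)) * geo_mul a i
    rw [e, map_sub, coeff_geo, coeff_one]
    rcases Nat.eq_zero_or_pos m with rfl | hm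
    · simp
    · simp [hm.ne']
  rw [crankLog, map_sub, h, h]
  split_ifs <;> simp

/-- At `u = 0`, the `u`-derivatives of the logarithmic derivative are divisor-sum series. -/
theorem coeff_aug_crankLog (N j m : ℕ) (hm : m ≤ N) :
    constantCoeff (coeff m ((coeffD)^[j] (∑ i ∈ range N, crankLog i)))
      = coeff m (sigmaSeries j) := by
  rw [coeff_iterate_coeffD, map_sum]
  have hd : ∀ (f g : PowerSeries ℚ), (derivative ℚ)^[j] (f - g)
      = (derivative ℚ)^[j] f - (derivative ℚ)^[j] g := fun f g => iterate_map_sub _ _ _ _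
  have hs : (derivative ℚ)^[j] (∑ i ∈ range N, coeff m (crankLog i))
      = ∑ i ∈ range N, (derivative ℚ)^[j] (coeff m (crankLog i)) := by
    have := map_sum (((derivative ℚ : PowerSeries ℚ →ₗ[ℚ] PowerSeries ℚ)) ^ j)
      (fun i => coeff m (crankLog i)) (range N)
    simpa only [Module.End.pow_apply, Derivation.coeFn_coe] using this
  rw [hs, map_sum, sigmaSeries, coeff_mk]
  have h1 : ∀ i, constantCoeff ((derivative ℚ)^[j] (coeff m (crankLog i)))
      = if m ≠ 0 ∧ (i + 1) ∣ m then (1 - (-1) ^ j) * ((m / (i + 1) : ℕ) : ℚ) ^ j else 0 := by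
    intro i
    rw [coeff_crankLog]
    split_ifs
    · rw [hd, iterate_derivative_smul _ _ (derivative_expUnit_pow _),
        iterate_derivative_smul _ _ (derivative_expUnit_inv_pow _)]
      have hsm : ∀ (c : ℚ) (f : PowerSeries ℚ), constantCoeff (c • f) = c * constantCoeff f := by
        intro c f; rw [← coeff_zero_eq_constantCoeff_apply, map_smul]; simp
      rw [map_sub, hsm, hsm, map_pow, map_pow, constantCoeff_expUnit, constantCoeff_expUnit_inv]
      rw [neg_pow]
      simp
      ring
    · rw [iterate_map_zero, map_zero]
  simp_rw [h1]
  rcases Nat.eq_zero_or_pos m with rfl | hm0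
  · simp
  · rw [ArithmeticFunction.sigma_apply, Nat.cast_sum, mul_sum,
      ← Nat.sum_div_divisors m (fun d => (1 - (-1) ^ j) * ((d ^ j : ℕ) : ℚ))]
    have e : ∑ i ∈ range N, (if m ≠ 0 ∧ (i + 1) ∣ m then
        (1 - (-1) ^ j) * ((m / (i + 1) : ℕ) : ℚ) ^ j else 0)
        = ∑ d ∈ (Ico 1 (N + 1)).filter (· ∣ m), (1 - (-1) ^ j) * ((m / d : ℕ) : ℚ) ^ j := by
      rw [sum_filter, sum_Ico_eq_sum_range]
      refine sum_congr rfl fun i _ => ?_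
      simp [hm0.ne', add_comm]
    rw [e]
    have e2 : (Ico 1 (N + 1)).filter (· ∣ m) = m.divisors := by
      ext d
      simp only [Finset.mem_filter, mem_Ico, Nat.mem_divisors]
      constructor
      · rintro ⟨-, h⟩; exact ⟨h, hm0.ne'⟩
      · rintro ⟨h, -⟩
        have := Nat.le_of_dvd hm0 h
        have := Nat.pos_of_dvd_of_pos h hm0
        exact ⟨⟨by omega, by omega⟩, h⟩
    rw [e2]
    simp

/-- The `k`-th power moment of the crank of the partitions of `n ≥ 2` is the `n`-th coefficient
of `∏ 1/(1 - Xⁱ)` times a polynomial in the series `sigmaSeries j`. -/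
theorem crank_moment {n N : ℕ} (hn : 2 ≤ n) (hnN : n ≤ N) (k : ℕ) :
    ∑ p : n.Partition, (p.crank : ℚ) ^ k
      = coeff n (aP ℚ N * MvPolynomial.aeval sigmaSeries (momentPoly k)) := by
  set aug : PowerSeries (PowerSeries ℚ) →+* PowerSeries ℚ := PowerSeries.map constantCoeff with haug
  set s : ℕ → PowerSeries (PowerSeries ℚ) := fun j => (coeffD)^[j] (∑ i ∈ range N, crankLog i)
    with hs
  have h1 := congrArg (fun f => constantCoeff ((derivative ℚ)^[k] f)) (crank_gf hn hnN expUnit)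
  simp only [← coeff_iterate_coeffD] at h1
  rw [iterate_derivation coeffD s (fun j => by rw [hs]; exact (Function.iterate_succ_apply' _ _ _).symm)
    _ (coeffD_crankProd N) k] at h1
  have h2 : constantCoeff ((derivative ℚ)^[k]
      (∑ p : n.Partition, ((expUnit ^ p.crank : (PowerSeries ℚ)ˣ) : PowerSeries ℚ)))
      = ∑ p : n.Partition, (p.crank : ℚ) ^ k := by
    have := map_sum (((derivative ℚ : PowerSeries ℚ →ₗ[ℚ] PowerSeries ℚ)) ^ k)
      (fun p : n.Partition => ((expUnit ^ p.crank : (PowerSeries ℚ)ˣ) : PowerSeries ℚ)) univ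
    simp only [Module.End.pow_apply, Derivation.coeFn_coe] at this
    rw [this, map_sum]
    refine sum_congr rfl fun p _ => ?_
    rw [iterate_derivative_expUnit_zpow, ← coeff_zero_eq_constantCoeff_apply, map_smul,
      coeff_zero_eq_constantCoeff_apply, constantCoeff_expUnit_zpow]
    simp
  rw [h2] at h1
  rw [h1]
  have h3 : ∀ f : PowerSeries (PowerSeries ℚ), constantCoeff (coeff n f) = coeff n (aug f) := by
    intro f; rw [haug, coeff_map]
  rw [h3, map_mul]
  have h4 : aug (∏ i ∈ range N, ((1 - X ^ (i + 1)) * geo (expUnit : PowerSeries ℚ) (i + 1) *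
          geo ((expUnit⁻¹ : (PowerSeries ℚ)ˣ) : PowerSeries ℚ) (i + 1))) = aP ℚ N := by
    rw [map_prod, aP]
    refine prod_congr rfl fun i _ => ?_
    have hg : ∀ a : PowerSeries ℚ, constantCoeff a = 1 → aug (geo a (i + 1)) = geo 1 (i + 1) := by
      intro a ha
      ext m
      rw [haug, coeff_map, coeff_geo, coeff_geo]
      split_ifs <;> simp [ha]
    rw [map_mul, map_mul, hg _ constantCoeff_expUnit, hg _ constantCoeff_expUnit_inv]
    have := geo_mul (1 : ℚ) i
    rw [map_one, one_mul, mul_comm] at this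
    have e : aug (1 - X ^ (i + 1)) = 1 - X ^ (i + 1) := by simp [haug]
    rw [e, this, one_mul]
  rw [h4]
  -- the series `s j` and `sigmaSeries j` agree up to order `N`
  have h5 : (X : PowerSeries ℚ) ^ (N + 1) ∣ aug (MvPolynomial.aeval s (momentPoly k))
      - MvPolynomial.aeval sigmaSeries (momentPoly k) := by
    generalize momentPoly k = p
    induction p using MvPolynomial.induction_on with
    | C a =>
      have : aug (MvPolynomial.aeval s (MvPolynomial.C a)) = MvPolynomial.aeval sigmaSeries
          (MvPolynomial.C a) := by
        rw [MvPolynomial.aeval_C, MvPolynomial.aeval_C]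
        exact RingHom.map_rat_algebraMap aug a
      rw [this, sub_self]; exact dvd_zero _
    | add p q hp hq =>
      simp only [map_add]
      have := dvd_add hp hq
      convert this using 1
      ring
    | mul_X p j hp =>
      simp only [map_mul, MvPolynomial.aeval_X]
      have hj : (X : PowerSeries ℚ) ^ (N + 1) ∣ aug (s j) - sigmaSeries j := by
        rw [X_pow_dvd_iff]
        intro m hm
        rw [map_sub, haug, coeff_map, hs, coeff_aug_crankLog N j m (by omega), sub_self]
      have := dvd_add (hp.mul_right (aug (s j)))
        (hj.mul_left (MvPolynomial.aeval sigmaSeries p))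
      convert this using 1
      ring
  have h6 := h5.mul_left (aP ℚ N)
  rw [mul_sub, X_pow_dvd_iff] at h6
  have := h6 n (by omega)
  rwa [map_sub, sub_eq_zero] at this

end Moments

open PowerSeries Function.Periodic Filter Topology
open scoped Real UpperHalfPlane

/-! ### Functions with a `q`-expansion, and the Dedekind eta function -/

/-- `f` is given on the upper half plane by the series `∑ gₙ q^n` with `q = exp (2 π i z / m)`. -/
def HasQ (m : ℝ) (f : ℂ → ℂ) (g : ℂ⟦X⟧) : Prop :=
  ∀ z : ℂ, 0 < z.im → HasSum (fun n : ℕ => coeff n g * qParam m z ^ n) (f z)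

namespace HasQ
variable {m : ℝ} {f f₁ f₂ : ℂ → ℂ} {g g₁ g₂ : ℂ⟦X⟧}

lemma congr (h : HasQ m f₁ g) (hf : ∀ z : ℂ, 0 < z.im → f₂ z = f₁ z) : HasQ m f₂ g := by
  intro z hz
  rw [hf z hz]; exact h z hz

lemma add (h₁ : HasQ m f₁ g₁) (h₂ : HasQ m f₂ g₂) :
    HasQ m (fun z => f₁ z + f₂ z) (g₁ + g₂) := by
  intro z hz
  simpa only [map_add, add_mul] using (h₁ z hz).add (h₂ z hz)

lemma sub (h₁ : HasQ m f₁ g₁) (h₂ : HasQ m f₂ g₂) :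
    HasQ m (fun z => f₁ z - f₂ z) (g₁ - g₂) := by
  intro z hz
  simpa only [map_sub, sub_mul] using (h₁ z hz).sub (h₂ z hz)

lemma smul (a : ℂ) (h : HasQ m f g) : HasQ m (fun z => a * f z) (a • g) := by
  intro z hz
  simpa only [coeff_smul, smul_eq_mul, mul_assoc] using (h z hz).mul_left a

lemma zero : HasQ m (fun _ => 0) 0 := by
  intro z hz
  simp [hasSum_zero]

lemma X_pow (r : ℕ) : HasQ m (fun z => qParam m z ^ r) (X ^ r) := by
  intro z hz
  have := hasSum_ite_eq r (qParam m z ^ r)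
  refine this.congr_fun fun n => ?_
  rw [coeff_X_pow]
  split_ifs with h <;> simp [h]

lemma one : HasQ m (fun _ => 1) 1 := by
  simpa using X_pow (m := m) 0

lemma sum {ι : Type*} (s : Finset ι) (F : ι → ℂ → ℂ) (G : ι → ℂ⟦X⟧)
    (h : ∀ i ∈ s, HasQ m (F i) (G i)) : HasQ m (fun z => ∑ i ∈ s, F i z) (∑ i ∈ s, G i) := by
  intro z hz
  simpa only [map_sum, Finset.sum_mul] using hasSum_sum fun i hi => h i hi z hz

lemma mul (h₁ : HasQ m f₁ g₁) (h₂ : HasQ m f₂ g₂) :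
    HasQ m (fun z => f₁ z * f₂ z) (g₁ * g₂) := by
  intro z hz
  have s₁ := (h₁ z hz).summable.norm
  have s₂ := (h₂ z hz).summable.norm
  have e := tsum_mul_tsum_eq_tsum_sum_antidiagonal_of_summable_norm s₁ s₂
  have s := (summable_norm_sum_mul_antidiagonal_of_summable_norm s₁ s₂).of_norm
  rw [(h₁ z hz).tsum_eq, (h₂ z hz).tsum_eq] at e
  have : HasSum _ _ := e ▸ s.hasSum
  refine this.congr_fun fun n => ?_
  rw [coeff_mul, Finset.sum_mul]
  refine Finset.sum_congr rfl fun x hx => ?_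
  rw [← Finset.HasAntidiagonal.mem_antidiagonal.mp hx, pow_add]; ring

lemma pow (h : HasQ m f g) (r : ℕ) : HasQ m (fun z => f z ^ r) (g ^ r) := by
  induction r with
  | zero => simpa using one
  | succ r ih => simpa only [pow_succ] using ih.mul h

lemma qParam_pow (m : ℝ) (k : ℕ) (hk : k ≠ 0) (z : ℂ) : qParam (k * m) z ^ k = qParam m z := by
  rw [qParam, qParam, ← Complex.exp_nat_mul]
  congr 1
  push_cast
  rcases eq_or_ne (m : ℂ) 0 with h | h
  · simp [h]
  · field_simp

/-- Refining the parameter `q` to `q^(1/k)`. -/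
lemma expand (h : HasQ m f g) (k : ℕ) (hk : k ≠ 0) : HasQ (k * m) f (g.expand k hk) := by
  intro z hz
  have h1 := h z hz
  have hinj : Function.Injective (fun n : ℕ => k * n) := mul_right_injective₀ hk
  refine (hinj.hasSum_iff (f := fun n : ℕ => coeff n (g.expand k hk) * qParam (k * m) z ^ n)
    (a := f z) ?_).mp ?_
  · intro n hn
    rw [coeff_expand_of_not_dvd, zero_mul]
    rintro ⟨c, rfl⟩
    exact hn ⟨c, rfl⟩
  · convert h1 using 2 with n
    simp only [Function.comp, coeff_expand_mul, pow_mul, qParam_pow m k hk]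

/-- Replacing `z` by `k z`. -/
lemma scale (h : HasQ m f g) (k : ℕ) (hk : k ≠ 0) :
    HasQ m (fun z => f (k * z)) (g.expand k hk) := by
  intro z hz
  have hz' : 0 < ((k : ℂ) * z).im := by
    have : (0 : ℝ) < k := by exact_mod_cast Nat.pos_of_ne_zero hk
    simpa using mul_pos this hz
  have h1 := h _ hz'
  have hinj : Function.Injective (fun n : ℕ => k * n) := mul_right_injective₀ hk
  refine (hinj.hasSum_iff (f := fun n : ℕ => coeff n (g.expand k hk) * qParam m z ^ n)
    (a := f (k * z)) ?_).mp ?_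
  · intro n hn
    rw [coeff_expand_of_not_dvd, zero_mul]
    rintro ⟨c, rfl⟩
    exact hn ⟨c, rfl⟩
  · convert h1 using 2 with n
    simp only [Function.comp, coeff_expand_mul, pow_mul]
    congr 2
    rw [qParam, qParam, ← Complex.exp_nat_mul]
    congr 1; ring

lemma of_disc {F : ℂ → ℂ} (hm : 0 < m)
    (h : ∀ x : ℂ, ‖x‖ < 1 → HasSum (fun n : ℕ => coeff n g * x ^ n) (F x)) :
    HasQ m (fun z => F (qParam m z)) g := fun _ hz => h _ (norm_qParam_lt_one hm hz)

lemma periodic (h : HasQ m f g) (hm : 0 < m) {z : ℂ} (hz : 0 < z.im) : f (z + m) = f z := by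
  have hz' : 0 < (z + m).im := by simpa using hz
  have e : qParam m (z + m) = qParam m z := by
    rw [qParam, qParam, ← Complex.exp_periodic (2 * π * Complex.I * z / m)]
    congr 1
    have : (m : ℂ) ≠ 0 := by exact_mod_cast hm.ne'
    field_simp
  have := h _ hz'
  rw [e] at this
  exact this.unique (h z hz)

lemma isBounded (h : HasQ m f g) (hm : 0 < m) :
    UpperHalfPlane.IsBoundedAtImInfty (fun τ : ℍ => f τ) :=
  UpperHalfPlane.isBoundedAtImInfty_of_hasSum_qExpansion (c := fun n => coeff n g) hm
    fun τ => by simpa using h τ τ.im_pos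

lemma im_invQParam_pos (hm : 0 < m) {x : ℂ} (hx : ‖x‖ < 1) (h0 : x ≠ 0) :
    0 < (invQParam m x).im := by
  rw [im_invQParam]
  have := Real.log_neg (norm_pos_iff.mpr h0) hx
  have h2 : 0 < m / (2 * π) := by positivity
  have : -m / (2 * π) * Real.log ‖x‖ = (m / (2 * π)) * (- Real.log ‖x‖) := by ring
  rw [this]; apply mul_pos h2; linarith

/-- The power series of `f` defines a holomorphic function of `q` in the unit disc. -/
lemma hasFPowerSeriesOnBall_disc (h : HasQ m f g) (hm : 0 < m) :
    HasFPowerSeriesOnBall (fun x : ℂ => ∑' n : ℕ, coeff n g * x ^ n)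
      (.ofScalars ℂ (fun n => coeff n g)) 0 1 := by
  have hs : ∀ x : ℂ, ‖x‖ < 1 → Summable fun n : ℕ => coeff n g * x ^ n := by
    intro x hx
    rcases eq_or_ne x 0 with rfl | h0
    · exact summable_of_ne_finset_zero (s := {0}) fun n hn => by
        simp only [Finset.mem_singleton] at hn; simp [hn]
    · have hz := im_invQParam_pos hm hx h0
      have := (h _ hz).summable
      rwa [qParam_right_inv hm.ne' h0] at this
  have hr : 1 ≤ (FormalMultilinearSeries.ofScalars ℂ (fun n => coeff n g)).radius := by
    refine le_of_forall_lt fun r hr => ?_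
    obtain ⟨r', hr1, hr2⟩ := ENNReal.lt_iff_exists_nnreal_btwn.mp hr
    refine hr1.trans_le ?_
    have hr' : (r' : ℝ) < 1 := by exact_mod_cast hr2
    apply FormalMultilinearSeries.le_radius_of_summable
    have := (hs (r' : ℝ) (by simpa using hr')).norm
    refine this.congr fun n => ?_
    rw [FormalMultilinearSeries.ofScalars_norm]
    simp
  have := (FormalMultilinearSeries.ofScalars ℂ (fun n => coeff n g)).hasFPowerSeriesOnBall
    (lt_of_lt_of_le one_pos hr)
  refine (this.mono one_pos hr).congr ?_
  intro x hx
  simp [FormalMultilinearSeries.sum, mul_comm]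

lemma differentiableOn_disc (h : HasQ m f g) (hm : 0 < m) :
    DifferentiableOn ℂ (fun x : ℂ => ∑' n : ℕ, coeff n g * x ^ n) (Metric.ball 0 1) := by
  refine (h.hasFPowerSeriesOnBall_disc hm).differentiableOn.mono ?_
  intro x hx
  rw [← ENNReal.ofReal_one, Metric.eball_ofReal]; exact hx

lemma differentiableAt (h : HasQ m f g) (hm : 0 < m) {z : ℂ} (hz : 0 < z.im) :
    DifferentiableAt ℂ f z := by
  have h1 := (h.differentiableOn_disc hm).differentiableAt
    (Metric.isOpen_ball.mem_nhds (x := qParam m z) (by simpa using norm_qParam_lt_one hm hz))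
  have h2 : DifferentiableAt ℂ (fun w => ∑' n : ℕ, coeff n g * qParam m w ^ n) z :=
    h1.comp z (differentiable_qParam.differentiableAt)
  refine h2.congr_of_eventuallyEq ?_
  filter_upwards [(isOpen_lt continuous_const Complex.continuous_im).mem_nhds hz] with w hw
  exact (h w hw).tsum_eq.symm

/-- Expansions are unique. -/
lemma unique (hm : 0 < m) (h₁ : HasQ m f g₁) (h₂ : HasQ m f g₂) : g₁ = g₂ := by
  have h := h₁.sub h₂
  rw [← sub_eq_zero]
  have hp := (h.hasFPowerSeriesOnBall_disc hm).hasFPowerSeriesAt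
  have h0 : ∀ x : ℂ, ‖x‖ < 1 → x ≠ 0 → ∑' n : ℕ, coeff n (g₁ - g₂) * x ^ n = 0 := by
    intro x hx hx0
    have := (h _ (im_invQParam_pos hm hx hx0)).tsum_eq
    simpa only [qParam_right_inv hm.ne' hx0, sub_self] using this
  have hev : ∀ᶠ x in 𝓝[≠] (0 : ℂ), (fun x => ∑' n : ℕ, coeff n (g₁ - g₂) * x ^ n) x
      = (fun _ => (0 : ℂ)) x := by
    have hb : Metric.ball (0 : ℂ) 1 ∈ 𝓝 (0 : ℂ) := Metric.ball_mem_nhds _ one_pos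
    filter_upwards [mem_nhdsWithin_of_mem_nhds hb, self_mem_nhdsWithin] with x hx hx0
    exact h0 x (by simpa using hx) hx0
  have hev' := (hp.continuousAt.eventuallyEq_nhds_iff_eventuallyEq_nhdsNE
    continuousAt_const).mp hev
  have := (hp.congr hev').eq_zero
  ext n
  have := congrArg (fun p => FormalMultilinearSeries.coeff p n) this
  rw [FormalMultilinearSeries.coeff_ofScalars] at this
  rw [this]; rfl

end HasQ

section Euler

/-- Partial products of Euler's function. -/
lemma prod_hasSum (N : ℕ) (x : ℂ) :
    HasSum (fun n : ℕ => coeff n (∏ i ∈ Finset.range N, (1 - (X : ℂ⟦X⟧) ^ (i + 1))) * x ^ n)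
      (∏ i ∈ Finset.range N, (1 - x ^ (i + 1))) := by
  have h1 : (∏ i ∈ Finset.range N, (1 - (X : ℂ⟦X⟧) ^ (i + 1)))
      = ((∏ i ∈ Finset.range N, (1 - (Polynomial.X : Polynomial ℂ) ^ (i + 1)) : Polynomial ℂ) :
        ℂ⟦X⟧) := by
    rw [← Polynomial.coeToPowerSeries.ringHom_apply, map_prod]
    simp
  have h2 : (∏ i ∈ Finset.range N, (1 - x ^ (i + 1))) =
      Polynomial.eval x (∏ i ∈ Finset.range N, (1 - (Polynomial.X : Polynomial ℂ) ^ (i + 1))) := by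
    rw [Polynomial.eval_prod]; simp
  rw [h1, h2, Polynomial.eval_eq_sum_range]
  simp only [Polynomial.coeff_coe]
  apply hasSum_sum_of_ne_finset_zero
  intro n hn
  rw [Polynomial.coeff_eq_zero_of_natDegree_lt (by simpa using hn), zero_mul]

/-- Euler's product equals the sum of the pentagonal series on the unit disc. -/
lemma hasSum_euler {x : ℂ} (hx : ‖x‖ < 1) :
    HasSum (fun n : ℕ => coeff n (pentagonalSeries ℂ) * x ^ n) (∏' n : ℕ, (1 - x ^ (n + 1))) := by
  set F : ℂ → ℂ := fun x => ∏' n : ℕ, (1 - x ^ (n + 1)) with hF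
  set FN : ℕ → ℂ → ℂ := fun N x => ∏ i ∈ Finset.range N, (1 - x ^ (i + 1)) with hFN
  have hU : IsOpen (Metric.ball (0 : ℂ) 1) := Metric.isOpen_ball
  have hlim : TendstoLocallyUniformlyOn FN F atTop (Metric.ball 0 1) := by
    have := ModularForm.multipliableLocallyUniformlyOn_one_sub_pow.hasProdLocallyUniformlyOn
    exact this.tendstoLocallyUniformlyOn_finsetRange
  have hd : ∀ N, Differentiable ℂ (FN N) := fun N => by
    simp only [hFN]; fun_prop
  have hder : ∀ n : ℕ, TendstoLocallyUniformlyOn (fun N => iteratedDeriv n (FN N))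
      (iteratedDeriv n F) atTop (Metric.ball 0 1) := by
    intro n
    induction n with
    | zero => simpa [iteratedDeriv_zero] using hlim
    | succ n ih =>
      have := ih.deriv (.of_forall fun N => ((hd N).contDiff.differentiable_iteratedDeriv n
        (WithTop.coe_lt_top (n : ℕ∞)) ).differentiableOn) hU
      simpa only [Function.comp_def, iteratedDeriv_succ] using this
  have hx' : x ∈ Metric.ball (0 : ℂ) 1 := by simpa using hx
  have hco : ∀ N n, coeff n (∏ i ∈ Finset.range N, (1 - (X : ℂ⟦X⟧) ^ (i + 1)))
      = (n.factorial : ℂ)⁻¹ * iteratedDeriv n (FN N) 0 := by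
    intro N n
    have h1 : HasQ 1 (fun z => FN N (qParam 1 z)) (∏ i ∈ Finset.range N, (1 - (X : ℂ⟦X⟧) ^ (i + 1))) :=
      HasQ.of_disc one_pos fun x _ => prod_hasSum N x
    have h2 : HasQ 1 (fun z => FN N (qParam 1 z))
        (PowerSeries.mk fun n => (n.factorial : ℂ)⁻¹ * iteratedDeriv n (FN N) 0) :=
      HasQ.of_disc one_pos fun x hx => by
        have := Complex.hasSum_taylorSeries_on_ball (hd N).differentiableOn
          (show x ∈ Metric.ball (0 : ℂ) 1 by simpa using hx)
        refine this.congr_fun fun n => ?_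
        simp only [coeff_mk, sub_zero, smul_eq_mul]; ring
    rw [h1.unique one_pos h2, coeff_mk]
  have hcoF : ∀ n, coeff n (pentagonalSeries ℂ) = (n.factorial : ℂ)⁻¹ * iteratedDeriv n F 0 := by
    intro n
    have h1 : Tendsto (fun N => coeff n (∏ i ∈ Finset.range N, (1 - (X : ℂ⟦X⟧) ^ (i + 1)))) atTop
        (𝓝 ((n.factorial : ℂ)⁻¹ * iteratedDeriv n F 0)) := by
      simp only [hco]
      exact ((hder n).tendsto_at (Metric.mem_ball_self one_pos)).const_mul _
    have h2 : Tendsto (fun N => coeff n (∏ i ∈ Finset.range N, (1 - (X : ℂ⟦X⟧) ^ (i + 1)))) atTop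
        (𝓝 (coeff n (pentagonalSeries ℂ))) := by
      apply tendsto_const_nhds.congr'
      have := tendsto_finset_range.eventually (coeff_prod_one_sub_X_pow_eventually_eq ℂ n)
      filter_upwards [this] with N hN
      exact hN.symm
    exact tendsto_nhds_unique h2 h1
  have := Complex.hasSum_taylorSeries_on_ball
    (ModularForm.differentiableOn_tprod_one_sub_pow) hx'
  refine this.congr_fun fun n => ?_
  simp only [hcoF, sub_zero, smul_eq_mul, hF]; ring

/-- Stable range of Euler's product. -/
lemma coeff_prod_eq (R : Type*) [CommRing R] (n N : ℕ) (h : n ≤ N) :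
    coeff n (∏ i ∈ Finset.range N, (1 - (X : R⟦X⟧) ^ (i + 1))) = coeff n (pentagonalSeries R) := by
  have h1 : ∀ M, n ≤ M → coeff n (∏ i ∈ Finset.range M, (1 - (X : R⟦X⟧) ^ (i + 1))) =
      coeff n (∏ i ∈ Finset.range n, (1 - (X : R⟦X⟧) ^ (i + 1))) := by
    intro M hM
    induction M, hM using Nat.le_induction with
    | base => rfl
    | succ M hM ih =>
      rw [Finset.prod_range_succ, mul_sub, mul_one, map_sub, ih, coeff_mul_X_pow', if_neg (by omega),
        sub_zero]
  obtain ⟨M, hM, hM2⟩ := ((tendsto_finset_range.eventually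
    (coeff_prod_one_sub_X_pow_eventually_eq R n)).and (eventually_ge_atTop n)).exists
  rw [h1 N h, ← h1 M hM2, hM]

/-- The expansion of `η`, in powers of `exp (2 π i z / 24)`. -/
lemma hasQ_eta : HasQ 24 ModularForm.eta (X * (pentagonalSeries ℂ).expand 24 (by norm_num)) := by
  have h1 : HasQ 1 (fun z => ∏' n : ℕ, (1 - (qParam 1 z) ^ (n + 1))) (pentagonalSeries ℂ) :=
    HasQ.of_disc (F := fun x => ∏' n : ℕ, (1 - x ^ (n + 1))) one_pos fun x hx => hasSum_euler hx
  have h2 := h1.expand 24 (by norm_num)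
  rw [show ((24 : ℕ) : ℝ) * 1 = 24 by norm_num] at h2
  have h3 := (HasQ.X_pow (m := 24) 1).mul h2
  rw [pow_one] at h3
  exact h3.congr fun z hz => by rw [pow_one]; rfl

end Euler

/-! ### Theta series and Poisson summation -/

section SquareRoot

/-- The holomorphic square root of `-i z` on the upper half plane. -/
noncomputable def sq (z : ℂ) : ℂ := (-Complex.I * z) ^ (1 / 2 : ℂ)

lemma neg_I_mul_re (z : ℂ) : (-Complex.I * z).re = z.im := by simp

lemma neg_I_mul_ne {z : ℂ} (hz : 0 < z.im) : -Complex.I * z ≠ 0 := by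
  intro h
  have := neg_I_mul_re z
  rw [h] at this; simp at this; linarith

lemma sq_ne_zero {z : ℂ} (hz : 0 < z.im) : sq z ≠ 0 := by
  rw [sq, Ne, Complex.cpow_eq_zero_iff]
  exact fun h => neg_I_mul_ne hz h.1

lemma sq_sq (z : ℂ) : sq z ^ 2 = -Complex.I * z := by
  rw [sq, ← Complex.cpow_nat_mul]
  simp

lemma sq_scale {c : ℝ} (hc : 0 < c) {z : ℂ} (hz : 0 < z.im) : sq (c * z) = √c * sq z := by
  have h := neg_I_mul_ne hz
  have h' : (c : ℂ) * (-Complex.I * z) ≠ 0 := mul_ne_zero (by exact_mod_cast hc.ne') h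
  rw [sq, sq, show -Complex.I * (c * z) = c * (-Complex.I * z) by ring,
    Complex.cpow_def_of_ne_zero h', Complex.cpow_def_of_ne_zero h, Complex.log_ofReal_mul hc h,
    add_mul, Complex.exp_add, Real.sqrt_eq_rpow, Real.rpow_def_of_pos hc]
  push_cast
  rfl

lemma sq_inv {z : ℂ} (hz : 0 < z.im) : sq (-1 / z) * sq z = 1 := by
  have hne : z ≠ 0 := by rintro rfl; simp at hz
  have h1 : -Complex.I * (-1 / z) = (-Complex.I * z)⁻¹ := by
    rw [mul_inv]; field_simp; simp
  have h2 : (-Complex.I * z).arg ≠ π := by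
    intro h
    rw [Complex.arg_eq_pi_iff, neg_I_mul_re] at h
    linarith [h.1]
  rw [sq, sq, h1, Complex.inv_cpow _ _ h2]
  exact inv_mul_cancel₀ (sq_ne_zero hz)

lemma im_neg_one_div {z : ℂ} (hz : 0 < z.im) : 0 < (-1 / z).im := by
  rw [neg_div, Complex.neg_im, one_div, Complex.inv_im]
  have : 0 < Complex.normSq z := Complex.normSq_pos.mpr (by rintro rfl; simp at hz)
  rw [neg_div, neg_neg]; positivity

end SquareRoot

section ThetaInversion

/-- Inversion of theta series with periodic coefficients. The residue classes modulo `m` are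
represented by the integers `-a i`. -/
lemma theta_inversion {ι : Type*} [Fintype ι] [DecidableEq ι] (m : ℕ) (hm : 0 < m) (a : ι → ℤ)
    (cls : ℤ → ι) (hcls : ∀ N i, (m : ℤ) ∣ N + a i ↔ cls N = i) (φ : ι → ℂ) {z : ℂ}
    (hz : 0 < z.im) {S : ℂ}
    (hS : HasSum (fun k : ℤ => (∑ i, φ i * Complex.exp (2 * π * Complex.I * (k * a i) / m)) *
      Complex.exp (π * Complex.I * k ^ 2 * z / m)) S) :
    HasSum (fun N : ℤ => φ (cls N) * Complex.exp (π * Complex.I * N ^ 2 * (-1 / z) / m))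
      (sq z / √m * S) := by
  have hm0 : (m : ℂ) ≠ 0 := by exact_mod_cast hm.ne'
  have hmR : (0 : ℝ) < m := by exact_mod_cast hm
  have hz0 : z ≠ 0 := by rintro rfl; simp at hz
  have hzm : 0 < (z / m).im := by
    rw [show z / m = ((1 / m : ℝ) : ℂ) * z by push_cast; ring, Complex.im_ofReal_mul]; positivity
  have hzm' := im_neg_one_div hzm
  -- the two sides of the Jacobi inversion for one class
  have h1 : ∀ i, HasSum (fun k : ℤ => φ i * Complex.exp (2 * π * Complex.I * (k * a i) / m) *
      Complex.exp (π * Complex.I * k ^ 2 * z / m))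
      (φ i * jacobiTheta₂ (a i / m) (z / m)) := by
    intro i
    have := (((summable_jacobiTheta₂_term_iff (a i / m) (z / m)).mpr hzm).hasSum).mul_left (φ i)
    refine this.congr_fun fun k => ?_
    rw [jacobiTheta₂_term, mul_assoc, ← Complex.exp_add]
    congr 2
    ring
  have h2 : ∀ i, HasSum (fun N : ℤ => (if cls N = i then φ i else 0) *
      Complex.exp (π * Complex.I * N ^ 2 * (-1 / z) / m))
      (sq z / √m * (φ i * jacobiTheta₂ (a i / m) (z / m))) := by
    intro i
    have hinj : Function.Injective (fun n : ℤ => (m : ℤ) * n - a i) := by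
      intro x y h
      have : (m : ℤ) * x = m * y := by simpa using h
      exact mul_left_cancel₀ (by exact_mod_cast hm.ne') this
    refine (hinj.hasSum_iff ?_).mp ?_
    · intro N hN
      have : cls N ≠ i := by
        intro h
        obtain ⟨n, hn⟩ := (hcls N i).mpr h
        exact hN ⟨n, by simp only; omega⟩
      rw [if_neg this, zero_mul]
    · have := (((summable_jacobiTheta₂_term_iff ((a i / m) / (z / m)) (-1 / (z / m))).mpr
        hzm').hasSum).mul_left (φ i * Complex.exp (-π * Complex.I * (a i / m) ^ 2 / (z / m)))
      have e : sq z / √m * (φ i * jacobiTheta₂ (a i / m) (z / m)) =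
          φ i * Complex.exp (-π * Complex.I * (a i / m) ^ 2 / (z / m)) *
          ∑' (b : ℤ), jacobiTheta₂_term b ((a i / m) / (z / m)) (-1 / (z / m)) := by
        rw [jacobiTheta₂_functional_equation]
        have : (-Complex.I * (z / m)) ^ (1 / 2 : ℂ) = sq z / √m := by
          change sq (z / m) = _
          rw [show z / m = ((1 / m : ℝ) : ℂ) * z by push_cast; ring, sq_scale (by positivity) hz,
            one_div, Real.sqrt_inv]
          push_cast; ring
        rw [this, jacobiTheta₂]
        have h3 : sq z ≠ 0 := sq_ne_zero hz
        have h4 : ((√m : ℝ) : ℂ) ≠ 0 := by exact_mod_cast (Real.sqrt_pos.mpr hmR).ne'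
        field_simp
      rw [e]
      refine this.congr_fun fun n => ?_
      have : cls (m * n - a i) = i := (hcls _ _).mp ⟨n, by ring⟩
      simp only [Function.comp, this, if_true, jacobiTheta₂_term]
      rw [mul_assoc, mul_assoc, mul_assoc, ← Complex.exp_add]
      congr 2
      push_cast
      field_simp
      ring
  have h3 := hasSum_sum (s := Finset.univ) fun i _ => h1 i
  have h4 := hasSum_sum (s := Finset.univ) fun i _ => h2 i
  have e3 : S = ∑ i, φ i * jacobiTheta₂ (a i / m) (z / m) := by
    refine hS.unique (h3.congr_fun fun k => ?_)
    rw [Finset.sum_mul]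
  rw [e3, Finset.mul_sum]
  refine h4.congr_fun fun N => ?_
  rw [← Finset.sum_mul]
  simp

end ThetaInversion

section Chi

/-- The primitive even character modulo `12`. -/
def chi (x : ZMod 12) : ℤ := if x = 1 ∨ x = 11 then 1 else if x = 5 ∨ x = 7 then -1 else 0

lemma chi_mul : ∀ x y : ZMod 12, chi (x * y) = chi x * chi y := by decide

lemma chi_neg : ∀ x : ZMod 12, chi (-x) = chi x := by decide

/-- The character `chi` is its own Fourier transform, with Gauss sum `√12`. -/
lemma chi_gauss (k : ZMod 12) :
    ∑ x : ZMod 12, (chi x : ℂ) * ZMod.stdAddChar (x * k) = √12 * chi k := by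
  have h0 : ∀ n : ℕ, ZMod.stdAddChar (n : ZMod 12) = ZMod.stdAddChar (1 : ZMod 12) ^ n := by
    intro n
    rw [← AddChar.map_nsmul_eq_pow]; simp
  set ζ : ℂ := ZMod.stdAddChar (1 : ZMod 12) with hζ
  have hζe : ζ = (√3 : ℝ) / 2 + Complex.I / 2 := by
    have := ZMod.stdAddChar_coe (N := 12) 1
    rw [Int.cast_one] at this
    rw [hζ, this, show 2 * (π : ℂ) * Complex.I * ((1 : ℤ) : ℂ) / ((12 : ℕ) : ℂ)
      = ((π / 6 : ℝ) : ℂ) * Complex.I by push_cast; ring, Complex.exp_mul_I,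
      ← Complex.ofReal_cos, ← Complex.ofReal_sin, Real.cos_pi_div_six, Real.sin_pi_div_six]
    push_cast; ring
  have h3 : ((√3 : ℝ) : ℂ) ^ 2 = 3 := by
    rw [← Complex.ofReal_pow, Real.sq_sqrt (by norm_num)]; norm_num
  have h4 : ζ ^ 4 = ζ ^ 2 - 1 := by
    have : ζ ^ 2 = 1 / 2 + (√3 : ℝ) * Complex.I / 2 := by
      rw [hζe]; linear_combination h3 / 4 + Complex.I_sq / 4
    rw [show ζ ^ 4 = (ζ ^ 2) ^ 2 by ring, this]
    linear_combination (Complex.I ^ 2 / 4) * h3 + 3 / 4 * Complex.I_sq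
  have h12 : ((√12 : ℝ) : ℂ) = 2 * (2 * ζ - ζ ^ 3) := by
    have e : √12 = 2 * √3 := by
      rw [show (12 : ℝ) = 2 ^ 2 * 3 by norm_num, Real.sqrt_mul (by norm_num),
        Real.sqrt_sq (by norm_num)]
    rw [e]
    push_cast
    have : 2 * ζ - ζ ^ 3 = (√3 : ℝ) := by
      rw [hζe]
      linear_combination (-((√3 : ℝ) : ℂ) / 8 - 3 * Complex.I / 8) * h3
        + (-3 * ((√3 : ℝ) : ℂ) / 8 - Complex.I / 8) * Complex.I_sq
    rw [this]
  have v0 : ZMod.stdAddChar (0 : ZMod 12) = (1 : ℂ) := AddChar.map_zero_eq_one _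
  have v2 : ZMod.stdAddChar (2 : ZMod 12) = ζ ^ 2 := h0 2
  have v3 : ZMod.stdAddChar (3 : ZMod 12) = ζ ^ 3 := h0 3
  have v4 : ZMod.stdAddChar (4 : ZMod 12) = ζ ^ 2 - 1 := (h0 4).trans h4
  have v5 : ZMod.stdAddChar (5 : ZMod 12) = ζ ^ 3 - ζ :=
    (h0 5).trans (by linear_combination ζ * h4)
  have v6 : ZMod.stdAddChar (6 : ZMod 12) = -1 :=
    (h0 6).trans (by linear_combination (ζ ^ 2 + 1) * h4)
  have v6' : ζ ^ 6 = -1 := by linear_combination (ζ ^ 2 + 1) * h4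
  have v7 : ZMod.stdAddChar (7 : ZMod 12) = -ζ := (h0 7).trans (by linear_combination ζ * v6')
  have v8 : ZMod.stdAddChar (8 : ZMod 12) = -ζ ^ 2 :=
    (h0 8).trans (by linear_combination ζ ^ 2 * v6')
  have v9 : ZMod.stdAddChar (9 : ZMod 12) = -ζ ^ 3 :=
    (h0 9).trans (by linear_combination ζ ^ 3 * v6')
  have v10 : ZMod.stdAddChar (10 : ZMod 12) = 1 - ζ ^ 2 :=
    (h0 10).trans (by linear_combination ζ ^ 4 * v6' - h4)
  have v11 : ZMod.stdAddChar (11 : ZMod 12) = ζ - ζ ^ 3 :=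
    (h0 11).trans (by linear_combination ζ ^ 5 * v6' - ζ * h4)
  have hsum : ∑ x : ZMod 12, (chi x : ℂ) * ZMod.stdAddChar (x * k) =
      ZMod.stdAddChar k + ZMod.stdAddChar (11 * k) - ZMod.stdAddChar (5 * k)
        - ZMod.stdAddChar (7 * k) := by
    have hs : ∑ x : ZMod 12, (chi x : ℂ) * ZMod.stdAddChar (x * k) =
      ∑ x ∈ ({1, 11, 5, 7} : Finset (ZMod 12)), (chi x : ℂ) * ZMod.stdAddChar (x * k) := by
      symm
      apply Finset.sum_subset (Finset.subset_univ _)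
      intro x _ hx
      have : chi x = 0 := by revert x; decide
      rw [this]; simp
    rw [hs, Finset.sum_insert (by decide), Finset.sum_insert (by decide),
      Finset.sum_insert (by decide), Finset.sum_singleton, show chi 1 = 1 by decide,
      show chi 11 = 1 by decide, show chi 5 = -1 by decide, show chi 7 = -1 by decide]
    push_cast
    rw [one_mul]; ring_nf
  rw [hsum, h12]
  have hk : k = 0 ∨ k = 1 ∨ k = 2 ∨ k = 3 ∨ k = 4 ∨ k = 5 ∨ k = 6 ∨ k = 7 ∨ k = 8 ∨ k = 9 ∨
    k = 10 ∨ k = 11 := by clear hsum; revert k; decide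
  rcases hk with rfl | rfl | rfl | rfl | rfl | rfl | rfl | rfl | rfl | rfl | rfl | rfl
  · rw [show (11 * 0 : ZMod 12) = 0 by decide, show (5 * 0 : ZMod 12) = 0 by decide,
      show (7 * 0 : ZMod 12) = 0 by decide, show chi 0 = 0 by decide]; push_cast; ring
  · rw [show (11 * 1 : ZMod 12) = 11 by decide, show (5 * 1 : ZMod 12) = 5 by decide,
      show (7 * 1 : ZMod 12) = 7 by decide, show chi 1 = 1 by decide, v11, v5, v7, ← hζ]
    push_cast; ring
  · rw [show (11 * 2 : ZMod 12) = 10 by decide, show (5 * 2 : ZMod 12) = 10 by decide,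
      show (7 * 2 : ZMod 12) = 2 by decide, show chi 2 = 0 by decide]; push_cast; ring
  · rw [show (11 * 3 : ZMod 12) = 9 by decide, show (5 * 3 : ZMod 12) = 3 by decide,
      show (7 * 3 : ZMod 12) = 9 by decide, show chi 3 = 0 by decide]; push_cast; ring
  · rw [show (11 * 4 : ZMod 12) = 8 by decide, show (5 * 4 : ZMod 12) = 8 by decide,
      show (7 * 4 : ZMod 12) = 4 by decide, show chi 4 = 0 by decide]; push_cast; ring
  · rw [show (11 * 5 : ZMod 12) = 7 by decide, show (5 * 5 : ZMod 12) = 1 by decide,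
      show (7 * 5 : ZMod 12) = 11 by decide, show chi 5 = -1 by decide, v11, v5, v7, ← hζ]
    push_cast; ring
  · rw [show (11 * 6 : ZMod 12) = 6 by decide, show (5 * 6 : ZMod 12) = 6 by decide,
      show (7 * 6 : ZMod 12) = 6 by decide, show chi 6 = 0 by decide]; push_cast; ring
  · rw [show (11 * 7 : ZMod 12) = 5 by decide, show (5 * 7 : ZMod 12) = 11 by decide,
      show (7 * 7 : ZMod 12) = 1 by decide, show chi 7 = -1 by decide, v11, v5, v7, ← hζ]
    push_cast; ring
  · rw [show (11 * 8 : ZMod 12) = 4 by decide, show (5 * 8 : ZMod 12) = 4 by decide,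
      show (7 * 8 : ZMod 12) = 8 by decide, show chi 8 = 0 by decide]; push_cast; ring
  · rw [show (11 * 9 : ZMod 12) = 3 by decide, show (5 * 9 : ZMod 12) = 9 by decide,
      show (7 * 9 : ZMod 12) = 3 by decide, show chi 9 = 0 by decide]; push_cast; ring
  · rw [show (11 * 10 : ZMod 12) = 2 by decide, show (5 * 10 : ZMod 12) = 2 by decide,
      show (7 * 10 : ZMod 12) = 10 by decide, show chi 10 = 0 by decide]; push_cast; ring
  · rw [show (11 * 11 : ZMod 12) = 1 by decide, show (5 * 11 : ZMod 12) = 7 by decide,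
      show (7 * 11 : ZMod 12) = 5 by decide, show chi 11 = 1 by decide, v11, v5, v7, ← hζ]
    push_cast; ring

/-- `η` as a theta series. -/
lemma hasSum_eta {z : ℂ} (hz : 0 < z.im) :
    HasSum (fun n : ℤ => (chi n : ℂ) * Complex.exp (π * Complex.I * n ^ 2 * z / 12))
      (2 * ModularForm.eta z) := by
  have h1 : HasSum (fun k : ℤ => ((Int.negOnePow k : ℤ) : ℂ) *
      Complex.exp (π * Complex.I * ((6 * k - 1 : ℤ) : ℂ) ^ 2 * z / 12)) (ModularForm.eta z) := by
    have h := hasQ_eta z hz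
    have hinj : Function.Injective (fun k : ℤ => 24 * pentagonal k + 1) := by
      intro a b hab
      exact pentagonal_injective (by simpa using hab)
    have h2 := (hinj.hasSum_iff ?_).mpr h
    · refine h2.congr_fun fun k => ?_
      simp only [Function.comp]
      rw [coeff_succ_X_mul, coeff_expand_mul, coeff_pentagonalSeries_pentagonal]
      congr 1
      · rw [qParam, ← Complex.exp_nat_mul]
        congr 1
        have h3 : ((6 * k - 1 : ℤ) : ℂ) ^ 2 = ((24 * pentagonal k + 1 : ℕ) : ℂ) := by
          have := two_mul_natCast_pentagonal k
          have h4 : (6 * k - 1 : ℤ) ^ 2 = ((24 * pentagonal k + 1 : ℕ) : ℤ) := by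
            push_cast; linear_combination -12 * this
          exact_mod_cast h4
        rw [h3]
        push_cast; ring
    · intro n hn
      rcases n with _ | n
      · simp
      · rw [coeff_succ_X_mul]
        by_cases hd : 24 ∣ n
        · obtain ⟨c, rfl⟩ := hd
          rw [coeff_expand_mul, coeff_pentagonalSeries_eq_zero, zero_mul]
          rintro ⟨k, rfl⟩
          exact hn ⟨k, rfl⟩
        · rw [coeff_expand_of_not_dvd _ _ _ hd, zero_mul]
  have chi1 : ∀ k : ℤ, chi ((6 * k - 1 : ℤ) : ZMod 12) = Int.negOnePow k := by
    intro k
    rcases Int.even_or_odd' k with ⟨c, rfl | rfl⟩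
    · rw [Int.negOnePow_two_mul]
      push_cast
      rw [show (6 * (2 * (c : ZMod 12)) - 1) = 12 * c - 1 by ring,
        show (12 : ZMod 12) = 0 by decide, zero_mul]
      decide
    · rw [Int.negOnePow_succ, Int.negOnePow_two_mul]
      push_cast
      rw [show (6 * (2 * (c : ZMod 12) + 1) - 1) = 12 * c + 5 by ring,
        show (12 : ZMod 12) = 0 by decide, zero_mul]
      decide
  have hA : HasSum (fun n : ℤ => if n % 6 = 5 then
      (chi n : ℂ) * Complex.exp (π * Complex.I * n ^ 2 * z / 12) else 0) (ModularForm.eta z) := by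
    have hinj : Function.Injective (fun k : ℤ => 6 * k - 1) := by intro a b h; simp at h; omega
    refine (hinj.hasSum_iff ?_).mp (h1.congr_fun fun k => ?_)
    · intro n hn
      rw [if_neg]
      intro h
      exact hn ⟨n / 6 + 1, by simp only; omega⟩
    · simp only [Function.comp]
      rw [if_pos (by omega), chi1]
  have hB : HasSum (fun n : ℤ => if n % 6 = 1 then
      (chi n : ℂ) * Complex.exp (π * Complex.I * n ^ 2 * z / 12) else 0) (ModularForm.eta z) := by
    have := (Equiv.neg ℤ).hasSum_iff.mpr hA
    refine this.congr_fun fun n => ?_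
    simp only [Function.comp, Equiv.neg_apply]
    by_cases h : n % 6 = 1
    · rw [if_pos h, if_pos (by omega)]
      push_cast
      rw [chi_neg]; simp
    · rw [if_neg h, if_neg (by omega)]
  have := hA.add hB
  rw [← two_mul] at this
  refine this.congr_fun fun n => ?_
  have h0 : n % 6 ≠ 5 → n % 6 ≠ 1 → chi n = 0 := by
    intro h5 h1
    have e : (n : ZMod 12) = ((n % 12 : ℤ) : ZMod 12) := by
      rw [ZMod.intCast_eq_intCast_iff]; simp [Int.ModEq]
    have : n % 12 = 0 ∨ n % 12 = 2 ∨ n % 12 = 3 ∨ n % 12 = 4 ∨ n % 12 = 6 ∨ n % 12 = 8 ∨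
      n % 12 = 9 ∨ n % 12 = 10 := by omega
    rw [e]
    rcases this with h | h | h | h | h | h | h | h <;> rw [h] <;> decide
  split_ifs with h5 h1 h1
  · omega
  · simp
  · simp
  · rw [h0 h5 h1]; simp

end Chi

/-! ### The multiplier of the eta function -/

section EtaMultiplier

/-- The Gauss sum part of the multiplier of `η` under `(24 a, *; M, *)`. -/
noncomputable def kappa (M : ℕ) [NeZero M] (a : ℤ) : ℂ :=
  chi M * ∑ y : ZMod M, ZMod.stdAddChar (144 * (a : ZMod M) * y ^ 2)

lemma exp_eq_stdAddChar (M : ℕ) [NeZero M] (j : ℤ) (w : ℂ)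
    (h : w = 2 * π * Complex.I * j / M) : Complex.exp w = ZMod.stdAddChar (j : ZMod M) := by
  rw [ZMod.stdAddChar_coe, h]

/-- Fourier transform of `n ↦ chi n * e(a n ^ 2 / M)`, computed by completing the square. -/
lemma gauss_fourier (M : ℕ) [NeZero M] (a a' : ℤ) (haa : (M : ℤ) ∣ 576 * a * a' + 1) (k : ℤ) :
    ∑ i : ZMod 12 × ZMod M, ((chi (M * i.1) : ℂ) * ZMod.stdAddChar (144 * (a : ZMod M) * i.2 ^ 2)) *
      (ZMod.stdAddChar (i.1 * (k : ZMod 12)) * ZMod.stdAddChar (i.2 * (k : ZMod M))) =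
    √12 * kappa M a * (chi k * ZMod.stdAddChar ((a' : ZMod M) * (k : ZMod M) ^ 2)) := by
  have hz : (576 : ZMod M) * a * a' + 1 = 0 := by
    have := (ZMod.intCast_zmod_eq_zero_iff_dvd (576 * a * a' + 1) M).mpr haa
    push_cast at this; exact this
  rw [Fintype.sum_prod_type]
  have h1 : ∀ (x : ZMod 12) (y : ZMod M),
      ((chi (M * x) : ℂ) * ZMod.stdAddChar (144 * (a : ZMod M) * y ^ 2)) *
      (ZMod.stdAddChar (x * (k : ZMod 12)) * ZMod.stdAddChar (y * (k : ZMod M))) =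
      ((chi x : ℂ) * ZMod.stdAddChar (x * (k : ZMod 12))) *
      (chi M * ZMod.stdAddChar (144 * (a : ZMod M) * y ^ 2 + y * (k : ZMod M))) := by
    intro x y
    rw [chi_mul, AddChar.map_add_eq_mul]; push_cast; ring
  simp only [h1]
  rw [← Finset.sum_mul_sum, chi_gauss, ← Finset.mul_sum]
  have h2 : ∑ y : ZMod M, (ZMod.stdAddChar (144 * (a : ZMod M) * y ^ 2 + y * (k : ZMod M)) : ℂ) =
      (∑ y : ZMod M, ZMod.stdAddChar (144 * (a : ZMod M) * y ^ 2)) *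
        (ZMod.stdAddChar ((a' : ZMod M) * (k : ZMod M) ^ 2) : ℂ) := by
    rw [Finset.sum_mul, ← Equiv.sum_comp (Equiv.addRight (2 * (a' : ZMod M) * k))]
    refine Finset.sum_congr rfl fun y _ => ?_
    rw [← AddChar.map_add_eq_mul]
    congr 1
    simp only [Equiv.coe_addRight]
    linear_combination ((k : ZMod M) * y + a' * k ^ 2) * hz
  rw [h2, kappa]; ring

/-- The transformation of `η ((z + 24 a) / M)` under `z ↦ -1 / z`, with its multiplier written as a
Gauss sum. It follows from the theta series of `η` by Poisson summation. -/
lemma eta_shift (M : ℕ) [NeZero M] (hM : Nat.Coprime M 12) (a a' : ℤ)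
    (haa : (M : ℤ) ∣ 576 * a * a' + 1) {z : ℂ} (hz : 0 < z.im) :
    ModularForm.eta ((-1 / z + 24 * a) / M) =
      sq z / √M * kappa M a * ModularForm.eta ((z + 24 * a') / M) := by
  have hMpos : 0 < M := Nat.pos_of_ne_zero (NeZero.ne M)
  have hMc : (M : ℂ) ≠ 0 := by exact_mod_cast NeZero.ne M
  have hMR : (0 : ℝ) < M := by exact_mod_cast hMpos
  have him : ∀ w : ℂ, 0 < w.im → ∀ b : ℤ, 0 < ((w + 24 * b) / M).im := by
    intro w hw b
    rw [show (w + 24 * b) / M = ((1 / M : ℝ) : ℂ) * (w + ((24 * b : ℝ) : ℂ)) by push_cast; ring,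
      Complex.im_ofReal_mul, Complex.add_im, Complex.ofReal_im, add_zero]
    positivity
  have hu12 : IsUnit (M : ZMod 12) := (ZMod.isUnit_iff_coprime M 12).mpr hM
  have huM : IsUnit ((12 : ℕ) : ZMod M) := (ZMod.isUnit_iff_coprime 12 M).mpr hM.symm
  set cls : ℤ → ZMod 12 × ZMod M :=
    fun N => (-(N : ZMod 12) * (M : ZMod 12)⁻¹, -(N : ZMod M) * ((12 : ℕ) : ZMod M)⁻¹) with hcls
  have i12 : (M : ZMod 12)⁻¹ * (M : ZMod 12) = 1 := ZMod.inv_mul_of_unit _ hu12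
  have iM : ((12 : ℕ) : ZMod M)⁻¹ * ((12 : ℕ) : ZMod M) = 1 := ZMod.inv_mul_of_unit _ huM
  set ai : ZMod 12 × ZMod M → ℤ := fun i => M * i.1.val + 12 * i.2.val with hai
  have ai12 : ∀ i, ((ai i : ℤ) : ZMod 12) = M * i.1 := by
    intro i
    simp only [hai]; push_cast
    rw [ZMod.natCast_val, ZMod.cast_id', id, show (12 : ZMod 12) = 0 by decide, zero_mul, add_zero]
  have aiM : ∀ i, ((ai i : ℤ) : ZMod M) = ((12 : ℕ) : ZMod M) * i.2 := by
    intro i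
    simp only [hai]; push_cast
    rw [ZMod.natCast_val i.2, ZMod.cast_id', id, CharP.cast_eq_zero, zero_mul, zero_add]
  have hclsi : ∀ N i, ((12 * M : ℕ) : ℤ) ∣ N + ai i ↔ cls N = i := by
    intro N i
    have hco : IsCoprime (12 : ℤ) (M : ℤ) := by
      exact_mod_cast (Nat.isCoprime_iff_coprime.mpr hM.symm)
    have e1 : ((12 * M : ℕ) : ℤ) ∣ N + ai i ↔ (12 : ℤ) ∣ N + ai i ∧ (M : ℤ) ∣ N + ai i := by
      push_cast
      exact ⟨fun h => ⟨(dvd_mul_right _ _).trans h, (dvd_mul_left _ _).trans h⟩,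
        fun h => hco.mul_dvd h.1 h.2⟩
    have e2 : (12 : ℤ) ∣ N + ai i ↔ (cls N).1 = i.1 := by
      rw [show (12 : ℤ) = ((12 : ℕ) : ℤ) by norm_num, ← ZMod.intCast_zmod_eq_zero_iff_dvd,
        Int.cast_add, ai12]
      simp only [hcls]
      constructor
      · intro h
        linear_combination (-(M : ZMod 12)⁻¹) * h + i.1 * i12
      · intro h
        rw [← h]
        linear_combination -(N : ZMod 12) * i12
    have e3 : (M : ℤ) ∣ N + ai i ↔ (cls N).2 = i.2 := by
      rw [← ZMod.intCast_zmod_eq_zero_iff_dvd, Int.cast_add, aiM]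
      simp only [hcls]
      constructor
      · intro h
        linear_combination (-((12 : ℕ) : ZMod M)⁻¹) * h + i.2 * iM
      · intro h
        rw [← h]
        linear_combination -(N : ZMod M) * iM
    rw [e1, e2, e3, Prod.ext_iff]
  set φ : ZMod 12 × ZMod M → ℂ :=
    fun i => (chi (M * i.1) : ℂ) * ZMod.stdAddChar (144 * (a : ZMod M) * i.2 ^ 2) with hφ
  have hS : HasSum (fun k : ℤ => (∑ i, φ i *
      Complex.exp (2 * π * Complex.I * (k * ai i) / (12 * M : ℕ))) *
      Complex.exp (π * Complex.I * k ^ 2 * z / (12 * M : ℕ)))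
      (√12 * kappa M a * (2 * ModularForm.eta ((z + 24 * a') / M))) := by
    have := (hasSum_eta (him z hz a')).mul_left (√12 * kappa M a)
    refine this.congr_fun fun k => ?_
    have e1 : ∀ i, Complex.exp (2 * π * Complex.I * (k * ai i) / (12 * M : ℕ)) =
        ZMod.stdAddChar (i.1 * (k : ZMod 12)) * ZMod.stdAddChar (i.2 * (k : ZMod M)) := by
      intro i
      have s1 : i.1 * (k : ZMod 12) = ((i.1.val * k : ℤ) : ZMod 12) := by
        push_cast; rw [ZMod.natCast_val, ZMod.cast_id', id]
      have s2 : i.2 * (k : ZMod M) = ((i.2.val * k : ℤ) : ZMod M) := by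
        push_cast; rw [ZMod.natCast_val, ZMod.cast_id', id]
      rw [s1, s2, ZMod.stdAddChar_coe, ZMod.stdAddChar_coe, ← Complex.exp_add]
      congr 1
      simp only [hai]
      push_cast
      field_simp
    simp only [e1, hφ]
    rw [gauss_fourier M a a' haa k]
    rw [mul_assoc (√12 * kappa M a : ℂ), mul_assoc (chi k : ℂ)]
    congr 2
    rw [show (a' : ZMod M) * (k : ZMod M) ^ 2 = ((a' * k ^ 2 : ℤ) : ZMod M) by push_cast; ring,
      ZMod.stdAddChar_coe, ← Complex.exp_add]
    congr 1
    push_cast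
    field_simp
    ring
  have hinv := theta_inversion (12 * M) (by positivity) ai cls hclsi φ hz hS
  have hL := hasSum_eta (him _ (im_neg_one_div hz) a)
  have := hL.unique (hinv.congr_fun fun N => ?_)
  · have h12 : √((12 * M : ℕ) : ℝ) = √12 * √M := by
      push_cast; rw [Real.sqrt_mul (by norm_num)]
    rw [h12] at this
    have h3 : ((√12 : ℝ) : ℂ) ≠ 0 := by
      exact_mod_cast (Real.sqrt_pos.mpr (by norm_num)).ne'
    have h4 : ((√M : ℝ) : ℂ) ≠ 0 := by exact_mod_cast (Real.sqrt_pos.mpr hMR).ne'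
    push_cast at this
    field_simp at this ⊢
    linear_combination this
  · have c1 : (M : ZMod 12) * (cls N).1 = -N := by
      simp only [hcls]; linear_combination -(N : ZMod 12) * i12
    have c2 : 144 * (a : ZMod M) * (cls N).2 ^ 2 = ((a * N ^ 2 : ℤ) : ZMod M) := by
      simp only [hcls]; push_cast
      push_cast at iM
      linear_combination (a : ZMod M) * N ^ 2 * (((12 : ZMod M))⁻¹ * 12 + 1) * iM
    simp only [hφ]
    rw [c1, c2, chi_neg, ZMod.stdAddChar_coe, mul_assoc (chi N : ℂ) (Complex.exp _), ← Complex.exp_add]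
    congr 2
    push_cast
    have : z ≠ 0 := by rintro rfl; simp at hz
    field_simp
    ring

lemma eta_neg_inv {z : ℂ} (hz : 0 < z.im) : ModularForm.eta (-1 / z) = sq z * ModularForm.eta z := by
  have := eta_shift 1 (by norm_num) 0 0 (by norm_num) hz
  have h1 : kappa 1 0 = 1 := by
    rw [kappa, show chi ((1 : ℕ) : ZMod 12) = 1 by decide]
    simp
  rw [h1] at this
  simpa using this

/-- For square modulus the normalised multiplier is trivial. -/
lemma kappa_sq (Q : ℕ) [NeZero Q] [NeZero (Q ^ 2)] (hQ : Nat.Coprime Q 12) (a : ℤ)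
    (ha : IsCoprime a (Q : ℤ)) : kappa (Q ^ 2) a = Q := by
  have hchi : chi ((Q ^ 2 : ℕ) : ZMod 12) = 1 := by
    have hu : IsUnit (Q : ZMod 12) := (ZMod.isUnit_iff_coprime Q 12).mpr hQ
    push_cast
    have : ∀ x y : ZMod 12, x * y = 1 → chi (x ^ 2) = 1 := by decide
    obtain ⟨y, hy⟩ := hu.exists_right_inv
    exact this _ y hy
  rw [kappa, hchi]
  push_cast
  rw [one_mul]
  have hQc : ((Q : ZMod (Q ^ 2))) ^ 2 = 0 := by
    have := CharP.cast_eq_zero (ZMod (Q ^ 2)) (Q ^ 2)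
    push_cast at this; exact this
  -- averaging over the translations by multiples of `Q`
  set G : ℂ := ∑ y : ZMod (Q ^ 2), ZMod.stdAddChar (144 * (a : ZMod (Q ^ 2)) * y ^ 2) with hG
  have hQ0 : (Q : ℂ) ≠ 0 := by exact_mod_cast NeZero.ne Q
  have h1 : ∀ t : ZMod Q, G = ∑ y : ZMod (Q ^ 2),
      ZMod.stdAddChar (144 * (a : ZMod (Q ^ 2)) * y ^ 2) *
      ZMod.stdAddChar (t * ((288 * a * y.val : ℤ) : ZMod Q)) := by
    intro t
    rw [hG, ← Equiv.sum_comp (Equiv.addRight ((Q : ZMod (Q ^ 2)) * (t.val : ZMod (Q ^ 2))))]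
    refine Finset.sum_congr rfl fun y _ => ?_
    simp only [Equiv.coe_addRight]
    rw [show 144 * (a : ZMod (Q ^ 2)) * (y + Q * (t.val : ZMod (Q ^ 2))) ^ 2 =
      144 * (a : ZMod (Q ^ 2)) * y ^ 2 + Q * (t.val * (288 * a * y)) by
        linear_combination 144 * (a : ZMod (Q ^ 2)) * (t.val : ZMod (Q ^ 2)) ^ 2 * hQc,
      AddChar.map_add_eq_mul]
    congr 1
    have s1 : (Q : ZMod (Q ^ 2)) * (t.val * (288 * a * y)) =
        ((Q * (t.val * (288 * a * y.val)) : ℤ) : ZMod (Q ^ 2)) := by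
      push_cast; rw [ZMod.natCast_val y, ZMod.cast_id', id]
    have s2 : t * ((288 * a * y.val : ℤ) : ZMod Q) =
        ((t.val * (288 * a * y.val) : ℤ) : ZMod Q) := by
      push_cast; rw [ZMod.natCast_val t, ZMod.cast_id', id]
    rw [s1, s2, ZMod.stdAddChar_coe, ZMod.stdAddChar_coe]
    congr 1
    push_cast
    field_simp
  have h2 : (Q : ℂ) * G = ∑ y : ZMod (Q ^ 2),
      ZMod.stdAddChar (144 * (a : ZMod (Q ^ 2)) * y ^ 2) *
      (if ((288 * a * y.val : ℤ) : ZMod Q) = 0 then (Q : ℂ) else 0) := by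
    have : (Q : ℂ) * G = ∑ t : ZMod Q, G := by simp [ZMod.card]
    rw [this, Finset.sum_congr rfl fun t _ => h1 t, Finset.sum_comm]
    refine Finset.sum_congr rfl fun y _ => ?_
    rw [← Finset.mul_sum, AddChar.sum_mulShift _ (ZMod.isPrimitive_stdAddChar Q), ZMod.card]
    split_ifs <;> simp
  have hdvd : ∀ y : ZMod (Q ^ 2), ((288 * a * y.val : ℤ) : ZMod Q) = 0 ↔ Q ∣ y.val := by
    intro y
    rw [ZMod.intCast_zmod_eq_zero_iff_dvd]
    have c1 : IsCoprime (Q : ℤ) (288 * a) := by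
      have c12 : IsCoprime (Q : ℤ) 12 := by
        exact_mod_cast Nat.isCoprime_iff_coprime.mpr hQ
      have c24 : IsCoprime (Q : ℤ) 24 := by
        have c2 : IsCoprime (Q : ℤ) 2 := c12.of_isCoprime_of_dvd_right (by norm_num)
        exact (c12.mul_right c2).of_isCoprime_of_dvd_right (by norm_num)
      rw [show (288 : ℤ) * a = 12 * 24 * a by ring]
      exact (c12.mul_right c24).mul_right ha.symm
    constructor
    · intro h
      exact_mod_cast c1.dvd_of_dvd_mul_left h
    · intro h
      exact (Int.natCast_dvd_natCast.mpr h).mul_left _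
  have hcard : (Finset.univ.filter fun y : ZMod (Q ^ 2) => Q ∣ y.val).card = Q := by
    have hQp : 0 < Q := Nat.pos_of_ne_zero (NeZero.ne Q)
    conv_rhs => rw [← Finset.card_range Q]
    refine Finset.card_nbij' (fun y => y.val / Q) (fun t => ((Q * t : ℕ) : ZMod (Q ^ 2)))
      ?_ ?_ ?_ ?_
    · intro y _
      have := ZMod.val_lt y
      simp only [Finset.coe_range, Set.mem_Iio]
      exact Nat.div_lt_of_lt_mul (lt_of_lt_of_eq this (pow_two Q))
    · intro t ht
      simp only [Finset.coe_range, Set.mem_Iio] at ht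
      simp only [Finset.coe_filter, Finset.mem_univ, true_and, Set.mem_ofPred_eq]
      rw [ZMod.val_natCast_of_lt (by nlinarith)]
      exact dvd_mul_right _ _
    · intro y hy
      simp only [Finset.coe_filter, Finset.mem_univ, true_and, Set.mem_ofPred_eq] at hy
      simp only [Nat.mul_div_cancel' hy]
      rw [ZMod.natCast_val, ZMod.cast_id', id]
    · intro t ht
      simp only [Finset.coe_range, Set.mem_Iio] at ht
      simp only
      rw [ZMod.val_natCast_of_lt (by nlinarith), Nat.mul_div_cancel_left _ hQp]
  have h3 : (Q : ℂ) * G = Q * Q := by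
    rw [h2]
    have : ∀ y : ZMod (Q ^ 2), ZMod.stdAddChar (144 * (a : ZMod (Q ^ 2)) * y ^ 2) *
        (if ((288 * a * y.val : ℤ) : ZMod Q) = 0 then (Q : ℂ) else 0) =
        if Q ∣ y.val then (Q : ℂ) else 0 := by
      intro y
      rw [if_congr (hdvd y) rfl rfl]
      split_ifs with h
      · obtain ⟨s, hs⟩ := h
        have : y = Q * s := by
          have := ZMod.natCast_zmod_val y
          rw [hs] at this; rw [← this]; push_cast; ring
        rw [show 144 * (a : ZMod (Q ^ 2)) * y ^ 2 = 0 by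
          rw [this]; linear_combination 144 * (a : ZMod (Q ^ 2)) * s ^ 2 * hQc]
        simp
      · simp
    rw [Finset.sum_congr rfl fun y _ => this y, ← Finset.sum_filter, Finset.sum_const, hcard,
      nsmul_eq_mul]
  exact mul_left_cancel₀ hQ0 h3

end EtaMultiplier

open scoped MatrixGroups ModularForm Manifold

/-! ### Modular forms of level one -/

section LevelOne

/-- `f` is a modular form of weight `w` for the full modular group with `q`-expansion `g`;
the form is viewed as a function on `ℂ`, of which only the values on the upper half plane matter. -/
structure IsMF (w : ℤ) (f : ℂ → ℂ) (g : ℂ⟦X⟧) : Prop where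
  hasQ : HasQ 1 f g
  inv : ∀ z : ℂ, 0 < z.im → f (-1 / z) = z ^ w * f z

namespace IsMF

variable {w w' : ℤ} {f f' : ℂ → ℂ} {g g' : ℂ⟦X⟧}

/-- Translation and inversion generate `SL(2, ℤ)`. -/
lemma slash_eq (h : IsMF w f g) (γ : SL(2, ℤ)) :
    (fun τ : ℍ => f τ) ∣[w] γ = (fun τ : ℍ => f τ) := by
  refine SlashInvariantForm.slash_action_generators_SL2Z ?_ ?_ γ
  · ext z
    rw [ModularForm.SL_slash_apply, UpperHalfPlane.modular_S_smul]
    have h1 := h.inv z z.im_pos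
    have h2 : ((-(z : ℂ))⁻¹) = -1 / (z : ℂ) := by rw [neg_div, one_div, inv_neg]
    have h3 : UpperHalfPlane.denom ModularGroup.S z = z := by
      rw [ModularGroup.denom_apply]; simp [ModularGroup.S]
    simp only [h2, h3, h1]
    rw [zpow_neg]
    field_simp [zpow_ne_zero w z.ne_zero]
  · ext z
    rw [ModularForm.SL_slash_apply, UpperHalfPlane.modular_T_smul]
    have h1 := h.hasQ.periodic one_pos z.im_pos
    have h3 : UpperHalfPlane.denom ModularGroup.T z = 1 := by
      rw [ModularGroup.denom_apply]; simp [ModularGroup.T]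
    simp only [h3, UpperHalfPlane.coe_vadd, add_comm _ (z : ℂ), h1]
    simp

/-- The transformation law under a general element of `SL(2, ℤ)`. -/
lemma smul_eq (h : IsMF w f g) {a b c d : ℤ} (hdet : a * d - b * c = 1) {z : ℂ} (hz : 0 < z.im) :
    f ((a * z + b) / (c * z + d)) = (c * z + d) ^ w * f z := by
  let γ : SL(2, ℤ) := ⟨!![a, b; c, d], by rw [Matrix.det_fin_two_of]; exact hdet⟩
  have := congrFun (h.slash_eq γ) ⟨z, hz⟩
  rw [ModularForm.SL_slash_apply] at this
  have hd : UpperHalfPlane.denom γ (⟨z, hz⟩ : ℍ) = c * z + d := by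
    rw [ModularGroup.denom_apply]; simp [γ]
  have hd0 : UpperHalfPlane.denom γ (⟨z, hz⟩ : ℍ) ≠ 0 := UpperHalfPlane.denom_ne_zero _ _
  rw [zpow_neg, ← div_eq_mul_inv, div_eq_iff (zpow_ne_zero _ hd0), hd] at this
  rw [UpperHalfPlane.coe_specialLinearGroup_apply] at this
  simp [γ] at this
  rw [this, mul_comm]

lemma exists_modularForm (h : IsMF w f g) :
    ∃ H : ModularForm 𝒮ℒ w, UpperHalfPlane.qExpansion 1 H = g ∧ ∀ τ : ℍ, H τ = f τ := by
  refine ⟨{ toFun := fun τ => f τ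
            slash_action_eq' := fun A hA => by
              obtain ⟨A, rfl⟩ := hA; exact h.slash_eq A
            holo' := by
              rw [UpperHalfPlane.mdifferentiable_iff]
              intro z hz
              have := (h.hasQ.differentiableAt one_pos hz)
              refine (this.differentiableWithinAt).congr (fun z hz => ?_) ?_
              · simp [UpperHalfPlane.ofComplex_apply_of_im_pos hz]
              · simp [UpperHalfPlane.ofComplex_apply_of_im_pos hz]
            bdd_at_cusps' := fun {c} hc => by
              rw [Subgroup.IsArithmetic.isCusp_iff_isCusp_SL2Z] at hc
              rw [OnePoint.isBoundedAt_iff_forall_SL2Z hc]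
              intro γ _
              rw [h.slash_eq γ]
              exact h.hasQ.isBounded one_pos }, ?_, fun τ => rfl⟩
  ext n
  refine (ModularFormClass.qExpansion_coeff_unique (c := fun n => coeff n g) one_pos
    one_mem_strictPeriods_SL ?_ n).symm
  intro τ
  simp only [smul_eq_mul]
  exact h.hasQ τ τ.im_pos

lemma of_modularForm (H : ModularForm 𝒮ℒ w) :
    IsMF w (fun z => H (UpperHalfPlane.ofComplex z)) (UpperHalfPlane.qExpansion 1 H) := by
  constructor
  · intro z hz
    have := UpperHalfPlane.hasSum_qExpansion one_pos
      (SlashInvariantFormClass.periodic_comp_ofComplex H one_mem_strictPeriods_SL)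
      (ModularFormClass.holo H) (ModularFormClass.bdd_at_infty H) ⟨z, hz⟩
    simp only [UpperHalfPlane.ofComplex_apply_of_im_pos hz]
    simpa using this
  · intro z hz
    have h1 := SlashInvariantForm.slash_action_eqn'' H
      (show (ModularGroup.S : GL (Fin 2) ℝ) ∈ 𝒮ℒ from ⟨_, rfl⟩) ⟨z, hz⟩
    have h3 : UpperHalfPlane.denom ModularGroup.S (⟨z, hz⟩ : ℍ) = z := by
      rw [ModularGroup.denom_apply]; simp [ModularGroup.S]
    have h4 : (ModularGroup.S : GL (Fin 2) ℝ) • (⟨z, hz⟩ : ℍ) = ⟨-1 / z, im_neg_one_div hz⟩ := by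
      have := UpperHalfPlane.modular_S_smul ⟨z, hz⟩
      ext
      rw [show ((ModularGroup.S : GL (Fin 2) ℝ) • (⟨z, hz⟩ : ℍ)) = ModularGroup.S • (⟨z, hz⟩ : ℍ)
        from rfl, this]
      simp [neg_div, inv_neg]
    rw [h4, h3] at h1
    rw [UpperHalfPlane.ofComplex_apply_of_im_pos hz,
      UpperHalfPlane.ofComplex_apply_of_im_pos (im_neg_one_div hz)]
    exact h1

lemma mul (h : IsMF w f g) (h' : IsMF w' f' g') :
    IsMF (w + w') (fun z => f z * f' z) (g * g') := by
  refine ⟨h.hasQ.mul h'.hasQ, fun z hz => ?_⟩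
  have hz0 : z ≠ 0 := by rintro rfl; simp at hz
  rw [h.inv z hz, h'.inv z hz, zpow_add₀ hz0]; ring

lemma add (h : IsMF w f g) (h' : IsMF w f' g') :
    IsMF w (fun z => f z + f' z) (g + g') :=
  ⟨h.hasQ.add h'.hasQ, fun z hz => by rw [h.inv z hz, h'.inv z hz]; ring⟩

lemma smul (a : ℂ) (h : IsMF w f g) : IsMF w (fun z => a * f z) (a • g) :=
  ⟨h.hasQ.smul a, fun z hz => by rw [h.inv z hz]; ring⟩

end IsMF

/-- The space of `q`-expansions of modular forms of weight `w` and level one. -/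
def MF (w : ℤ) : Submodule ℂ ℂ⟦X⟧ where
  carrier := {g | ∃ f, IsMF w f g}
  add_mem' := fun ⟨_, h⟩ ⟨_, h'⟩ => ⟨_, h.add h'⟩
  zero_mem' := ⟨fun _ => 0, HasQ.zero, by simp⟩
  smul_mem' := fun a _ ⟨_, h⟩ => ⟨_, h.smul a⟩

lemma mem_MF {w : ℤ} {g : ℂ⟦X⟧} : g ∈ MF w ↔ ∃ f, IsMF w f g := Iff.rfl

lemma MF_mul {w w' : ℤ} {g g' : ℂ⟦X⟧} (h : g ∈ MF w) (h' : g' ∈ MF w') : g * g' ∈ MF (w + w') := by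
  obtain ⟨f, h⟩ := h
  obtain ⟨f', h'⟩ := h'
  exact ⟨_, h.mul h'⟩

lemma one_mem_MF : (1 : ℂ⟦X⟧) ∈ MF 0 := ⟨_, HasQ.one, by simp⟩

lemma MF_pow {w : ℤ} {g : ℂ⟦X⟧} (h : g ∈ MF w) (n : ℕ) : g ^ n ∈ MF (n * w) := by
  induction n with
  | zero => simpa using one_mem_MF
  | succ n ih =>
    rw [pow_succ]
    have := MF_mul ih h
    rwa [show (n : ℤ) * w + w = ((n + 1 : ℕ) : ℤ) * w by push_cast; ring] at this

lemma qExpansion_mem_MF {w : ℤ} (H : ModularForm 𝒮ℒ w) : UpperHalfPlane.qExpansion 1 H ∈ MF w :=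
  ⟨_, IsMF.of_modularForm H⟩

/-- The `q`-expansion of the discriminant. -/
noncomputable def deltaSeries (R : Type*) [CommRing R] : R⟦X⟧ := X * pentagonalSeries R ^ 24

lemma isMF_delta : IsMF 12 (fun z => ModularForm.eta z ^ 24) (deltaSeries ℂ) := by
  constructor
  · intro z hz
    have hx : ‖qParam 1 z‖ < 1 := norm_qParam_lt_one one_pos hz
    have h1 : HasQ 1 (fun z => qParam 1 z) X := by
      simpa using HasQ.X_pow (m := 1) 1
    have h2 : HasQ 1 (fun z => ∏' n : ℕ, (1 - qParam 1 z ^ (n + 1))) (pentagonalSeries ℂ) :=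
      HasQ.of_disc one_pos fun x hx => hasSum_euler hx
    have h3 := (h1.mul (h2.pow 24)) z hz
    have h4 : ModularForm.eta z ^ 24 =
        qParam 1 z * (∏' n : ℕ, (1 - qParam 1 z ^ (n + 1))) ^ 24 := by
      have h5 := HasQ.qParam_pow 1 24 (by norm_num) z
      rw [show ((24 : ℕ) : ℝ) * 1 = 24 by norm_num] at h5
      rw [ModularForm.eta, mul_pow, h5]
    simpa only [h4] using! h3
  · intro z hz
    rw [eta_neg_inv hz, mul_pow, show sq z ^ 24 = (sq z ^ 2) ^ 12 by ring, sq_sq]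
    congr 1
    rw [mul_pow, show (-Complex.I) ^ 12 = ((-Complex.I) ^ 2) ^ 6 by ring]
    norm_num

lemma delta_mem_MF : deltaSeries ℂ ∈ MF 12 := ⟨_, isMF_delta⟩

lemma qExpansion_discriminant :
    UpperHalfPlane.qExpansion 1 ModularForm.discriminant = deltaSeries ℂ := by
  obtain ⟨H, hH, hH'⟩ := isMF_delta.exists_modularForm
  rw [← hH]
  congr 1
  ext τ
  rw [hH', ModularForm.discriminant]

lemma MF_neg_weight {w : ℤ} (hw : w < 0) {g : ℂ⟦X⟧} (h : g ∈ MF w) : g = 0 := by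
  obtain ⟨f, h⟩ := h
  obtain ⟨H, hH, -⟩ := h.exists_modularForm
  have := ModularFormClass.levelOne_neg_weight_eq_zero hw H
  rw [← hH, this, UpperHalfPlane.qExpansion_zero]

/-- A form vanishing to order `n` at the cusp is divisible by the `n`-th power of the discriminant. -/
lemma MF_div_delta (n : ℕ) : ∀ {w : ℤ} {g : ℂ⟦X⟧}, g ∈ MF w → (∀ i < n, coeff i g = 0) →
    ∃ g' ∈ MF (w - 12 * n), g = deltaSeries ℂ ^ n * g' := by
  induction n with
  | zero => intro w g h _; exact ⟨g, by simpa using h, by simp⟩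
  | succ n ih =>
    intro w g h hc
    obtain ⟨g₁, hg₁, rfl⟩ := ih h fun i hi => hc i (by omega)
    have h0 : coeff 0 g₁ = 0 := by
      have := hc n (by omega)
      have hE : constantCoeff (pentagonalSeries ℂ) = 1 := by
        rw [← coeff_zero_eq_constantCoeff_apply, ← coeff_prod_eq ℂ 0 0 le_rfl]; simp
      rw [deltaSeries, mul_pow, mul_assoc] at this
      have h2 := coeff_X_pow_mul (((pentagonalSeries ℂ) ^ 24) ^ n * g₁) n 0
      rw [zero_add] at h2
      rw [h2] at this
      simpa [hE] using this
    obtain ⟨f, hf⟩ := hg₁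
    obtain ⟨H, hH, -⟩ := hf.exists_modularForm
    rw [← hH] at h0
    have h1 := ModularForm.qExpansion_eq_qExpansion_discriminant_mul H h0
    have h4 : ∀ {v v' : ℤ} {x : ℂ⟦X⟧}, v = v' → x ∈ MF v → x ∈ MF v' := by
      rintro v _ x rfl h; exact h
    have h2 := qExpansion_mem_MF (CuspForm.discriminantEquiv (ModularForm.toCuspForm H h0))
    have h3 : w - 12 * (n : ℤ) - 12 = w - 12 * ((n + 1 : ℕ) : ℤ) := by push_cast; ring
    exact ⟨_, h4 h3 h2, by rw [← hH, h1, qExpansion_discriminant, ← mul_assoc, ← pow_succ]⟩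

/-- Sturm's bound for level one. -/
lemma MF_sturm {w : ℤ} {g : ℂ⟦X⟧} (h : g ∈ MF w) (n : ℕ) (hn : w < 12 * n)
    (hc : ∀ i < n, coeff i g = 0) : g = 0 := by
  obtain ⟨g', hg', rfl⟩ := MF_div_delta n h hc
  rw [MF_neg_weight (by omega) hg', mul_zero]

end LevelOne

/-! ### Operators on `q`-expansions and the partition series -/

section HasQOperators

variable {m : ℝ} {f : ℂ → ℂ} {g : ℂ⟦X⟧}

namespace HasQ

lemma translate (h : HasQ m f g) (hm : 0 < m) (s : ℝ) :
    HasQ m (fun z => f (z + m * s))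
      (PowerSeries.mk fun n => Complex.exp (2 * π * Complex.I * s * n) * coeff n g) := by
  intro z hz
  have hz' : 0 < (z + m * s).im := by
    rw [Complex.add_im, ← Complex.ofReal_mul, Complex.ofReal_im, add_zero]; exact hz
  refine (h _ hz').congr_fun fun n => ?_
  rw [coeff_mk]
  have hmc : (m : ℂ) ≠ 0 := by exact_mod_cast hm.ne'
  have : qParam m (z + m * s) ^ n =
      qParam m z ^ n * Complex.exp (2 * π * Complex.I * s * n) := by
    rw [qParam, qParam, ← Complex.exp_nat_mul, ← Complex.exp_nat_mul, ← Complex.exp_add]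
    congr 1
    field_simp
  rw [this]; ring

/-- The operator `U_N`. -/
lemma average (h : HasQ m f g) (hm : 0 < m) (N : ℕ) [NeZero N] :
    HasQ m (fun z => ∑ j : ZMod N, f ((z + m * (j.val : ℕ)) / N))
      (PowerSeries.mk fun n => N * coeff (N * n) g) := by
  intro z hz
  have hN : (0 : ℝ) < N := by exact_mod_cast Nat.pos_of_ne_zero (NeZero.ne N)
  have hNc : (N : ℂ) ≠ 0 := by exact_mod_cast NeZero.ne N
  have hmc : (m : ℂ) ≠ 0 := by exact_mod_cast hm.ne'
  have hz1 : ∀ j : ZMod N, 0 < ((z + m * (j.val : ℕ)) / N).im := by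
    intro j
    rw [show (z + m * (j.val : ℕ)) / N =
      ((1 / N : ℝ) : ℂ) * (z + ((m * (j.val : ℕ) : ℝ) : ℂ)) by push_cast; ring,
      Complex.im_ofReal_mul, Complex.add_im, Complex.ofReal_im, add_zero]
    positivity
  have h1 : HasSum (fun n => ∑ j : ZMod N, coeff n g * qParam m ((z + m * (j.val : ℕ)) / N) ^ n)
      (∑ j : ZMod N, f ((z + m * (j.val : ℕ)) / N)) := hasSum_sum fun j _ => h _ (hz1 j)
  have h2 : ∀ n, ∑ j : ZMod N, coeff n g * qParam m ((z + m * (j.val : ℕ)) / N) ^ n =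
      if N ∣ n then N * coeff n g * qParam m (z / N) ^ n else 0 := by
    intro n
    have h3 : ∀ j : ZMod N, coeff n g * qParam m ((z + m * (j.val : ℕ)) / N) ^ n =
        coeff n g * qParam m (z / N) ^ n * ZMod.stdAddChar (j * ((n : ℤ) : ZMod N)) := by
      intro j
      have : j * ((n : ℤ) : ZMod N) = ((j.val * n : ℤ) : ZMod N) := by
        push_cast; rw [ZMod.natCast_val, ZMod.cast_id', id]
      rw [this, ZMod.stdAddChar_coe, qParam, qParam, ← Complex.exp_nat_mul, ← Complex.exp_nat_mul,
        mul_assoc (coeff n g), ← Complex.exp_add]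
      congr 2
      push_cast
      field_simp
    rw [Finset.sum_congr rfl fun j _ => h3 j, ← Finset.mul_sum,
      AddChar.sum_mulShift _ (ZMod.isPrimitive_stdAddChar N), ZMod.card]
    simp only [Int.cast_natCast, ZMod.natCast_eq_zero_iff]
    split_ifs
    · ring
    · simp
  simp only [h2] at h1
  have hinj : Function.Injective fun n : ℕ => N * n :=
    fun a b hab => Nat.eq_of_mul_eq_mul_left (Nat.pos_of_ne_zero (NeZero.ne N)) hab
  rw [← hinj.hasSum_iff] at h1
  · refine h1.congr_fun fun n => ?_
    have := HasQ.qParam_pow m N (NeZero.ne N) z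
    simp only [Function.comp, dvd_mul_right, if_true, coeff_mk]
    rw [pow_mul]
    congr 2
    rw [qParam, qParam, ← Complex.exp_nat_mul]
    congr 1
    field_simp
  · intro n hn
    rw [if_neg]
    rintro ⟨k, rfl⟩
    exact hn ⟨k, rfl⟩

lemma of_expand (k : ℕ) (hk : k ≠ 0) (h : HasQ (k * m) f (g.expand k hk)) : HasQ m f g := by
  intro z hz
  have h1 := h z hz
  have hinj : Function.Injective fun n : ℕ => k * n :=
    fun a b hab => Nat.eq_of_mul_eq_mul_left (Nat.pos_of_ne_zero hk) hab
  rw [← hinj.hasSum_iff] at h1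
  · refine h1.congr_fun fun n => ?_
    simp only [Function.comp]
    rw [coeff_expand_mul, pow_mul, qParam_pow m k hk z]
  · intro n hn
    rw [coeff_expand_of_not_dvd, zero_mul]
    rintro ⟨k, rfl⟩
    exact hn ⟨k, rfl⟩

end HasQ

/-- The product `∏ (1 - q ^ n)` as a function on the upper half plane. -/
noncomputable def eulerFun (z : ℂ) : ℂ := ∏' n : ℕ, (1 - qParam 1 z ^ (n + 1))

lemma hasQ_eulerFun : HasQ 1 eulerFun (pentagonalSeries ℂ) :=
  HasQ.of_disc (F := fun x => ∏' n : ℕ, (1 - x ^ (n + 1))) one_pos fun _ hx => hasSum_euler hx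

lemma eta_eq_eulerFun (z : ℂ) : ModularForm.eta z = qParam 24 z * eulerFun z := rfl

lemma eulerFun_ne_zero {z : ℂ} (hz : 0 < z.im) : eulerFun z ≠ 0 := by
  have := ModularForm.eta_ne_zero hz
  rw [eta_eq_eulerFun] at this
  exact right_ne_zero_of_mul this

lemma constantCoeff_pentagonalSeries (R : Type*) [CommRing R] :
    constantCoeff (pentagonalSeries R) = 1 := by
  rw [← coeff_zero_eq_constantCoeff_apply, ← coeff_prod_eq R 0 0 le_rfl]; simp

/-- The inverse of Euler's function, the generating function of partitions. -/
noncomputable def partSeries (R : Type*) [CommRing R] : R⟦X⟧ := invOfUnit (pentagonalSeries R) 1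

lemma pentagonal_mul_part (R : Type*) [CommRing R] : pentagonalSeries R * partSeries R = 1 :=
  mul_invOfUnit _ _ (by rw [constantCoeff_pentagonalSeries]; rfl)

lemma hasQ_eulerFun_inv : HasQ 1 (fun z => (eulerFun z)⁻¹) (partSeries ℂ) := by
  have hne : ∀ x : ℂ, ‖x‖ < 1 → ∏' n : ℕ, (1 - x ^ (n + 1)) ≠ 0 := by
    intro x hx
    by_cases h0 : x = 0
    · simp [h0]
    · have := eulerFun_ne_zero (HasQ.im_invQParam_pos one_pos hx h0)
      rwa [eulerFun, qParam_right_inv one_ne_zero h0] at this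
  have hd : DifferentiableOn ℂ (fun x : ℂ => (∏' n : ℕ, (1 - x ^ (n + 1)))⁻¹) (Metric.ball 0 1) := by
    refine DifferentiableOn.inv ?_ fun x hx => hne x (by simpa using hx)
    refine (hasQ_eulerFun.differentiableOn_disc one_pos).congr fun x hx => ?_
    exact (hasSum_euler (by simpa using hx)).tsum_eq.symm
  obtain ⟨p, hp⟩ : ∃ p : ℂ⟦X⟧, HasQ 1 (fun z => (eulerFun z)⁻¹) p := by
    refine ⟨PowerSeries.mk fun n => (n.factorial : ℂ)⁻¹ *
      iteratedDeriv n (fun x : ℂ => (∏' n : ℕ, (1 - x ^ (n + 1)))⁻¹) 0, ?_⟩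
    refine HasQ.of_disc (F := fun x : ℂ => (∏' n : ℕ, (1 - x ^ (n + 1)))⁻¹) one_pos fun x hx => ?_
    have := Complex.hasSum_taylorSeries_on_ball (r := 1) (c := 0) (by simpa using hd) (z := x)
      (by simpa using hx)
    refine this.congr_fun fun n => ?_
    rw [coeff_mk]; simp; ring
  have h1 := HasQ.unique one_pos
    ((hasQ_eulerFun.mul hp).congr fun z hz => (mul_inv_cancel₀ (eulerFun_ne_zero hz)).symm) HasQ.one
  have h2 := pentagonal_mul_part ℂ
  have : p = partSeries ℂ := by
    calc p = (pentagonalSeries ℂ * partSeries ℂ) * p := by rw [h2, one_mul]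
      _ = partSeries ℂ * (pentagonalSeries ℂ * p) := by ring
      _ = partSeries ℂ := by rw [h1, mul_one]
  rwa [← this]

end HasQOperators

/-! ### The Hecke operator of index `Q ^ 2` on `η ^ r φ` -/

section HeckeOperator

open ModularForm (eta)

/-- The matrix `!![1, a; 0, M] * S` equals an element of `SL(2, ℤ)` times `!![1, a'; 0, M]`
when `a a' ≡ -1` modulo `M`. -/
lemma IsMF.shift_one {w : ℤ} {φ : ℂ → ℂ} {h : ℂ⟦X⟧} (H : IsMF w φ h) (M : ℕ) [NeZero M]
    (a a' : ℤ) (haa : (M : ℤ) ∣ a * a' + 1) {z : ℂ} (hz : 0 < z.im) :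
    φ ((-1 / z + a) / M) = z ^ w * φ ((z + a') / M) := by
  obtain ⟨x, hx⟩ := haa
  have hM : (0 : ℝ) < M := by exact_mod_cast Nat.pos_of_ne_zero (NeZero.ne M)
  have hMc : (M : ℂ) ≠ 0 := by exact_mod_cast NeZero.ne M
  have hz0 : z ≠ 0 := by rintro rfl; simp at hz
  have hz' : 0 < ((z + a') / (M : ℝ)).im := by
    rw [Complex.div_ofReal_im, Complex.add_im, Complex.intCast_im, add_zero]; positivity
  have := H.smul_eq (a := a) (b := -x) (c := M) (d := -a') (by linarith) hz'
  have hxc : (a * a' + 1 : ℂ) = M * x := by exact_mod_cast hx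
  have h1 : (((M : ℤ) : ℂ) * ((z + a') / (M : ℝ)) + ((-a' : ℤ) : ℂ)) = z := by
    push_cast; field_simp; ring
  have h2 : ((a : ℂ) * ((z + a') / (M : ℝ)) + ((-x : ℤ) : ℂ)) / z = (-1 / z + a) / M := by
    push_cast; field_simp; linear_combination hxc
  rw [h1, h2] at this
  simpa using this

lemma IsMF.shift {w : ℤ} {φ : ℂ → ℂ} {h : ℂ⟦X⟧} (H : IsMF w φ h) (M : ℕ) [NeZero M]
    (a a' : ℤ) (haa : (M : ℤ) ∣ 576 * a * a' + 1) {z : ℂ} (hz : 0 < z.im) :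
    φ ((-1 / z + 24 * a) / M) = z ^ w * φ ((z + 24 * a') / M) := by
  have := H.shift_one M (24 * a) (24 * a') (by convert haa using 2; ring) hz
  push_cast at this
  exact this

/-- The automorphy factor of `η ^ r φ` with respect to `z ↦ -1 / z`, for `φ` of weight `w`. -/
noncomputable def autFac (r w : ℕ) (z : ℂ) : ℂ := sq z ^ r * z ^ w

lemma autFac_inv {r w : ℕ} (hw : Even w) {z : ℂ} (hz : 0 < z.im) :
    autFac r w (-1 / z) * autFac r w z = 1 := by
  have hz0 : z ≠ 0 := by rintro rfl; simp at hz
  have : autFac r w (-1 / z) * autFac r w z = (sq (-1 / z) * sq z) ^ r * (-1 / z * z) ^ w := by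
    rw [autFac, autFac, mul_pow, mul_pow]; ring
  rw [this, sq_inv hz, one_pow, div_mul_cancel₀ _ hz0, hw.neg_one_pow, one_mul]

/-- The form `η ^ r φ`. -/
noncomputable def etaMul (r : ℕ) (φ : ℂ → ℂ) (z : ℂ) : ℂ := eta z ^ r * φ z

/-- The expansion of `η ^ r φ` in powers of `q ^ (1 / 24)`. -/
noncomputable def etaSeries (R : Type*) [CommRing R] (r : ℕ) (h : R⟦X⟧) : R⟦X⟧ :=
  X ^ r * (pentagonalSeries R ^ r * h).expand 24 (by norm_num)

lemma hasQ_etaMul (r : ℕ) {φ : ℂ → ℂ} {h : ℂ⟦X⟧} (H : HasQ 1 φ h) :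
    HasQ 24 (etaMul r φ) (etaSeries ℂ r h) := by
  have h1 := (hasQ_eta.pow r).mul
    (show HasQ 24 φ (h.expand 24 (by norm_num)) from
      by simpa using H.expand 24 (by norm_num))
  have h2 : etaSeries ℂ r h = (X * (pentagonalSeries ℂ).expand 24 (by norm_num)) ^ r *
      h.expand 24 (by norm_num) := by
    rw [etaSeries, map_mul, map_pow, mul_pow, mul_assoc]
  rw [h2]; exact h1

lemma etaMul_neg_inv {r w : ℕ} {φ : ℂ → ℂ} {h : ℂ⟦X⟧} (H : IsMF w φ h) {z : ℂ} (hz : 0 < z.im) :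
    etaMul r φ (-1 / z) = autFac r w z * etaMul r φ z := by
  rw [etaMul, eta_neg_inv hz, H.inv z hz, autFac, etaMul, zpow_natCast, mul_pow]; ring

/-- Inversion of the translates `(η ^ r φ) ((z + 24 a) / M)`. -/
lemma etaMul_shift {r w : ℕ} {φ : ℂ → ℂ} {h : ℂ⟦X⟧} (H : IsMF w φ h) (M : ℕ) [NeZero M]
    (hM : Nat.Coprime M 12) (a a' : ℤ) (haa : (M : ℤ) ∣ 576 * a * a' + 1) {z : ℂ} (hz : 0 < z.im) :
    etaMul r φ ((-1 / z + 24 * a) / M) =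
      (kappa M a / √M) ^ r * autFac r w z * etaMul r φ ((z + 24 * a') / M) := by
  rw [etaMul, eta_shift M hM a a' haa hz, H.shift M a a' haa hz, autFac, etaMul, zpow_natCast,
    mul_pow]
  ring

lemma autFac_scale (r w : ℕ) {Q : ℕ} (hQ : 0 < Q) {z : ℂ} (hz : 0 < z.im) :
    autFac r w (Q * z) = (√Q : ℂ) ^ r * Q ^ w * autFac r w z := by
  have := sq_scale (c := Q) (by exact_mod_cast hQ) hz
  rw [Complex.ofReal_natCast] at this
  rw [autFac, this, autFac, mul_pow, mul_pow]; ring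

/-- The involution `u ↦ -(c u)⁻¹` of the unit group. -/
def dualUnit {M : ℕ} (c : (ZMod M)ˣ) : Equiv.Perm (ZMod M)ˣ where
  toFun u := -(c * u)⁻¹
  invFun u := -(c * u)⁻¹
  left_inv u := by
    simp only [mul_neg, inv_neg, neg_neg, mul_inv, inv_inv]; simp
  right_inv u := by
    simp only [mul_neg, inv_neg, neg_neg, mul_inv, inv_inv]; simp

lemma dualUnit_dvd_of {M : ℕ} [NeZero M] (c : (ZMod M)ˣ) (c₀ : ℤ) (hc : (c : ZMod M) = c₀)
    (u : (ZMod M)ˣ) :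
    (M : ℤ) ∣ c₀ * ((u : ZMod M).val : ℤ) * ((dualUnit c u : ZMod M).val : ℤ) + 1 := by
  rw [← ZMod.intCast_zmod_eq_zero_iff_dvd]
  push_cast
  simp only [ZMod.natCast_val, ZMod.cast_id', id]
  rw [← hc]
  change (c : ZMod M) * u * ((-(c * u)⁻¹ : (ZMod M)ˣ) : ZMod M) + 1 = 0
  rw [← Units.val_mul, ← Units.val_mul, mul_neg, mul_inv_cancel]
  simp

lemma dualUnit_dvd {M : ℕ} [NeZero M] (c : (ZMod M)ˣ) (hc : (c : ZMod M) = 576) (u : (ZMod M)ˣ) :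
    (M : ℤ) ∣ 576 * ((u : ZMod M).val : ℤ) * ((dualUnit c u : ZMod M).val : ℤ) + 1 :=
  dualUnit_dvd_of c 576 (by rw [hc]; norm_num) u

variable (Q : ℕ) [hQp : Fact Q.Prime] (r w : ℕ)

/-- The class of `576` as a unit modulo `M`. -/
noncomputable def unit576 {M : ℕ} (hM : Nat.Coprime M 12) : (ZMod M)ˣ :=
  ZMod.unitOfCoprime 576 (by
    rw [show 576 = 12 ^ 2 * 2 ^ 2 by norm_num]
    exact ((hM.symm.pow_left 2).mul_left
      ((Nat.Coprime.coprime_dvd_right (by norm_num) hM).symm.pow_left 2)))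

lemma unit576_val {M : ℕ} (hM : Nat.Coprime M 12) : (unit576 hM : ZMod M) = 576 := by
  rw [unit576, ZMod.coe_unitOfCoprime]; norm_num

variable (hQ : Nat.Coprime Q 12)

/-- The constants attached to the cosets of level `Q` in the operator `T(Q ^ 2)`. -/
noncomputable def heckeBeta (u : (ZMod Q)ˣ) : ℂ := kappa Q (u : ZMod Q).val ^ r * (Q : ℂ) ^ w

/-- The part of the `T(Q ^ 2)` sum over the translates by units modulo `Q ^ 2`. -/
noncomputable def heckeA (f : ℂ → ℂ) (z : ℂ) : ℂ :=
  ∑ u : (ZMod (Q ^ 2))ˣ, f ((z + 24 * (u : ZMod (Q ^ 2)).val) / (Q ^ 2 : ℕ))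

/-- The part of the `T(Q ^ 2)` sum over the cosets of level `Q`. -/
noncomputable def heckeB (f : ℂ → ℂ) (z : ℂ) : ℂ :=
  ∑ u : (ZMod Q)ˣ, (f ((z + 24 * (Q * (u : ZMod Q).val)) / (Q ^ 2 : ℕ)) +
    heckeBeta Q r w u * f (z + 24 * ((dualUnit (unit576 hQ) u : ZMod Q).val / Q)))

/-- The part of the `T(Q ^ 2)` sum over the two scalings. -/
noncomputable def heckeC (f : ℂ → ℂ) (z : ℂ) : ℂ :=
  f (z / (Q ^ 2 : ℕ)) + (Q : ℂ) ^ (r + 2 * w) * f ((Q ^ 2 : ℕ) * z)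

variable {r w} {φ : ℂ → ℂ} {h : ℂ⟦X⟧}

omit hQp in
lemma sqrt_sq_nat : (√((Q ^ 2 : ℕ) : ℝ) : ℂ) = Q := by
  push_cast
  rw [Real.sqrt_sq (Nat.cast_nonneg Q), Complex.ofReal_natCast]

include hQ in
/-- Inversion permutes the unit translates through `u ↦ -(576 u)⁻¹`; the multipliers are trivial
because the modulus is a square. -/
lemma heckeA_neg_inv (H : IsMF w φ h) {z : ℂ} (hz : 0 < z.im) :
    heckeA Q (etaMul r φ) (-1 / z) = autFac r w z * heckeA Q (etaMul r φ) z := by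
  have hQ2 : Nat.Coprime (Q ^ 2) 12 := hQ.pow_left 2
  have hQ0 : (Q : ℂ) ≠ 0 := by exact_mod_cast hQp.out.ne_zero
  have key : ∀ u : (ZMod (Q ^ 2))ˣ,
      etaMul r φ ((-1 / z + 24 * (u : ZMod (Q ^ 2)).val) / (Q ^ 2 : ℕ)) = autFac r w z *
        etaMul r φ ((z + 24 * (dualUnit (unit576 hQ2) u : ZMod (Q ^ 2)).val) / (Q ^ 2 : ℕ)) := by
    intro u
    have h1 := dualUnit_dvd (unit576 hQ2) (unit576_val hQ2) u
    have h2 := etaMul_shift (r := r) H (Q ^ 2) hQ2 _ _ h1 hz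
    have h3 : IsCoprime ((u : ZMod (Q ^ 2)).val : ℤ) (Q : ℤ) := by
      obtain ⟨x, hx⟩ := h1
      refine ⟨-576 * ((dualUnit (unit576 hQ2) u : ZMod (Q ^ 2)).val : ℤ), Q * x, ?_⟩
      push_cast at hx
      linarith
    rw [kappa_sq Q hQ _ h3, sqrt_sq_nat, div_self hQ0, one_pow, one_mul] at h2
    simpa using h2
  rw [heckeA, Finset.sum_congr rfl fun u _ => key u, ← Finset.mul_sum, heckeA]
  congr 1
  exact Equiv.sum_comp (dualUnit (unit576 hQ2)) fun u =>
    etaMul r φ ((z + 24 * (u : ZMod (Q ^ 2)).val) / (Q ^ 2 : ℕ))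

lemma heckeB_term (H : IsMF w φ h) (u : (ZMod Q)ˣ) {z : ℂ} (hz : 0 < z.im) :
    etaMul r φ ((-1 / z + 24 * (Q * (u : ZMod Q).val)) / (Q ^ 2 : ℕ)) =
      autFac r w z * (heckeBeta Q r w u *
        etaMul r φ (z + 24 * ((dualUnit (unit576 hQ) u : ZMod Q).val / Q))) := by
  have hQ0 : (Q : ℂ) ≠ 0 := by exact_mod_cast hQp.out.ne_zero
  have hQr : (0 : ℝ) < Q := by exact_mod_cast hQp.out.pos
  have hz0 : z ≠ 0 := by rintro rfl; simp at hz
  have hQz : 0 < ((Q : ℂ) * z).im := by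
    rw [← Complex.ofReal_natCast, Complex.im_ofReal_mul]; positivity
  have h1 := dualUnit_dvd (unit576 hQ) (unit576_val hQ) u
  have h2 := etaMul_shift (r := r) H Q hQ _ _ h1 hQz
  have e1 : ((-1 / z + 24 * (Q * (u : ZMod Q).val)) / (Q ^ 2 : ℕ) : ℂ) =
      (-1 / (Q * z) + 24 * (((u : ZMod Q).val : ℤ) : ℂ)) / Q := by
    push_cast; field_simp
  have e2 : (z + 24 * ((dualUnit (unit576 hQ) u : ZMod Q).val / Q) : ℂ) =
      (Q * z + 24 * (((dualUnit (unit576 hQ) u : ZMod Q).val : ℤ) : ℂ)) / Q := by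
    push_cast; field_simp
  have hs : (√(Q : ℝ) : ℂ) ≠ 0 := by
    exact_mod_cast (Real.sqrt_pos.mpr hQr).ne'
  rw [e1, e2, h2, autFac_scale r w hQp.out.pos hz, heckeBeta, div_pow]
  field_simp

/-- The two descriptions of the cosets of level `Q` are exchanged by inversion. -/
lemma heckeB_neg_inv (hw : Even w) (H : IsMF w φ h) {z : ℂ} (hz : 0 < z.im) :
    heckeB Q r w hQ (etaMul r φ) (-1 / z) = autFac r w z * heckeB Q r w hQ (etaMul r φ) z := by
  rw [heckeB, heckeB, Finset.mul_sum]
  refine Finset.sum_congr rfl fun u _ => ?_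
  have hz0 : z ≠ 0 := by rintro rfl; simp at hz
  have h1 := heckeB_term (r := r) Q hQ H u hz
  have h2 := heckeB_term (r := r) Q hQ H u (im_neg_one_div hz)
  rw [show -1 / (-1 / z) = z by field_simp] at h2
  have h3 := autFac_inv (r := r) hw hz
  rw [h1, h2, mul_add, ← mul_assoc (autFac r w z) (autFac r w (-1 / z)),
    mul_comm (autFac r w z) (autFac r w (-1 / z)), h3, one_mul, add_comm]

lemma heckeC_neg_inv (H : IsMF w φ h) {z : ℂ} (hz : 0 < z.im) :
    heckeC Q r w (etaMul r φ) (-1 / z) = autFac r w z * heckeC Q r w (etaMul r φ) z := by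
  have hQ0 : (Q : ℂ) ≠ 0 := by exact_mod_cast hQp.out.ne_zero
  have hQr : (0 : ℝ) < Q := by exact_mod_cast hQp.out.pos
  have hz0 : z ≠ 0 := by rintro rfl; simp at hz
  have hNz : 0 < (((Q ^ 2 : ℕ) : ℂ) * z).im := by
    rw [← Complex.ofReal_natCast, Complex.im_ofReal_mul]; push_cast; positivity
  have hzN : 0 < (z / ((Q ^ 2 : ℕ) : ℂ)).im := by
    rw [← Complex.ofReal_natCast, Complex.div_ofReal_im]; push_cast; positivity
  have h1 := etaMul_neg_inv (r := r) H hNz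
  have h2 := etaMul_neg_inv (r := r) H hzN
  have h3 := autFac_scale r w (Q := Q ^ 2) (pow_pos hQp.out.pos 2) hzN
  have hN0 : ((Q ^ 2 : ℕ) : ℂ) ≠ 0 := by push_cast; exact pow_ne_zero _ hQ0
  rw [mul_div_cancel₀ _ hN0] at h3
  have h4 := autFac_scale r w (Q := Q ^ 2) (pow_pos hQp.out.pos 2) hz
  rw [sqrt_sq_nat] at h3 h4
  have e1 : -1 / z / ((Q ^ 2 : ℕ) : ℂ) = -1 / (((Q ^ 2 : ℕ) : ℂ) * z) := by field_simp
  have e2 : ((Q ^ 2 : ℕ) : ℂ) * (-1 / z) = -1 / (z / ((Q ^ 2 : ℕ) : ℂ)) := by field_simp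
  rw [heckeC, heckeC, e1, e2, h1, h2, h4]
  push_cast at h3 ⊢
  linear_combination (-etaMul r φ (z / (Q : ℂ) ^ 2)) * h3

omit hQp in
lemma val_mul_lt [NeZero Q] (u : ZMod Q) : Q * u.val < Q ^ 2 := by
  rw [pow_two]; exact Nat.mul_lt_mul_of_pos_left (ZMod.val_lt u) (Nat.pos_of_ne_zero (NeZero.ne Q))

lemma sum_zmod_sq {A : Type*} [AddCommMonoid A] (F : ZMod (Q ^ 2) → A) :
    ∑ j, F j = (∑ u : (ZMod (Q ^ 2))ˣ, F u) +
      ((∑ u : (ZMod Q)ˣ, F ((Q * (u : ZMod Q).val : ℕ) : ZMod (Q ^ 2))) + F 0) := by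
  let e : (ZMod (Q ^ 2))ˣ ⊕ ((ZMod Q)ˣ ⊕ Unit) → ZMod (Q ^ 2) :=
    Sum.elim (fun u => u) (Sum.elim (fun u => ((Q * (u : ZMod Q).val : ℕ) : ZMod (Q ^ 2)))
      fun _ => 0)
  have hQ1 : Q ≠ 1 := hQp.out.one_lt.ne'
  have hnu : ∀ a : ℕ, ¬ IsUnit ((Q * a : ℕ) : ZMod (Q ^ 2)) := by
    intro a ha
    rw [ZMod.isUnit_iff_coprime] at ha
    have := Nat.Coprime.coprime_dvd_left (Dvd.intro _ rfl) ha
    rw [Nat.coprime_pow_right_iff (by norm_num), Nat.coprime_self] at this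
    exact hQ1 this
  have hval : ∀ u : ZMod Q, ((Q * u.val : ℕ) : ZMod (Q ^ 2)).val = Q * u.val := fun u =>
    ZMod.val_natCast_of_lt (val_mul_lt Q u)
  have hval0 : ∀ u : (ZMod Q)ˣ, ((Q * (u : ZMod Q).val : ℕ) : ZMod (Q ^ 2)) ≠ 0 := by
    intro u hu
    have h1 := hval u
    rw [hu, ZMod.val_zero] at h1
    rcases mul_eq_zero.mp h1.symm with h2 | h2
    · exact hQp.out.ne_zero h2
    · exact u.ne_zero ((ZMod.val_eq_zero _).mp h2)
  have hinj : Function.Injective e := by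
    rintro (u | u | u) (v | v | v) huv <;> simp only [e, Sum.elim_inl, Sum.elim_inr] at huv
    · rw [Units.ext huv]
    · exact absurd (huv ▸ u.isUnit) (hnu _)
    · exact absurd (by simpa [huv] using u.isUnit) (hnu 0)
    · exact absurd (huv.symm ▸ v.isUnit) (hnu _)
    · have := congrArg ZMod.val huv
      rw [hval, hval] at this
      have := ZMod.val_injective Q (Nat.eq_of_mul_eq_mul_left hQp.out.pos this)
      rw [Units.ext this]
    · exact absurd huv (hval0 u)
    · exact absurd (by simpa [← huv] using v.isUnit) (hnu 0)
    · exact absurd huv.symm (hval0 v)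
    · rfl
  have hbij : Function.Bijective e := by
    rw [Fintype.bijective_iff_injective_and_card]
    refine ⟨hinj, ?_⟩
    rw [Fintype.card_sum, Fintype.card_sum, ZMod.card_units_eq_totient, ZMod.card_units_eq_totient,
      ZMod.card, Nat.totient_prime_pow hQp.out (by norm_num), Nat.totient_prime hQp.out]
    obtain ⟨q, rfl⟩ : ∃ q, Q = q + 1 := ⟨Q - 1, by have := hQp.out.pos; omega⟩
    simp; ring
  rw [← hbij.sum_comp F, Fintype.sum_sum_type, Fintype.sum_sum_type]
  simp [e]

/-- The three parts together form an average over all residues modulo `Q ^ 2`, a twist by additive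
characters modulo `Q`, and a scaling; from this shape the `q`-expansion can be read off. -/
lemma heckeA_add_heckeB_add_heckeC (f : ℂ → ℂ) (z : ℂ) :
    heckeA Q f z + heckeB Q r w hQ f z + heckeC Q r w f z =
      ∑ j : ZMod (Q ^ 2), f ((z + (24 : ℝ) * (j.val : ℕ)) / (Q ^ 2 : ℕ)) +
      ∑ u : (ZMod Q)ˣ, heckeBeta Q r w u *
        f (z + (24 : ℝ) * ((dualUnit (unit576 hQ) u : ZMod Q).val / Q : ℝ)) +
      (Q : ℂ) ^ (r + 2 * w) * f ((Q ^ 2 : ℕ) * z) := by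
  have hval : ∀ u : ZMod Q, ((Q * u.val : ℕ) : ZMod (Q ^ 2)).val = Q * u.val := fun u =>
    ZMod.val_natCast_of_lt (val_mul_lt Q u)
  rw [sum_zmod_sq Q, heckeA, heckeB, heckeC, Finset.sum_add_distrib]
  simp only [hval, ZMod.val_zero]
  push_cast
  simp only [mul_zero, add_zero]
  ring

variable (r w)

/-- The coefficient of the middle term of `T(Q ^ 2)`. -/
noncomputable def heckeMid (n : ℕ) : ℂ :=
  ∑ u : (ZMod Q)ˣ, heckeBeta Q r w u * ZMod.stdAddChar ((dualUnit (unit576 hQ) u : ZMod Q) * (n : ZMod Q))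

lemma heckeMid_of_dvd {n : ℕ} (hn : Q ∣ n) : heckeMid Q r w hQ n = heckeMid Q r w hQ 0 := by
  rw [heckeMid, heckeMid]
  simp only [(ZMod.natCast_eq_zero_iff n Q).mpr hn, Nat.cast_zero]

/-- The action of `T(Q ^ 2)` on expansions in powers of `q ^ (1 / 24)`. -/
noncomputable def heckeSeries (S : ℂ⟦X⟧) : ℂ⟦X⟧ :=
  PowerSeries.mk fun n => (Q ^ 2 : ℕ) * coeff (Q ^ 2 * n) S + heckeMid Q r w hQ n * coeff n S +
    (Q : ℂ) ^ (r + 2 * w) * coeff n (S.expand (Q ^ 2) (pow_ne_zero 2 hQp.out.ne_zero))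

variable {r w}

/-- The `q`-expansion of the `T(Q ^ 2)` image. -/
lemma hasQ_hecke {f : ℂ → ℂ} {S : ℂ⟦X⟧} (H : HasQ 24 f S) :
    HasQ 24 (fun z => heckeA Q f z + heckeB Q r w hQ f z + heckeC Q r w f z)
      (heckeSeries Q r w hQ S) := by
  have h1 := H.average (by norm_num) (Q ^ 2)
  have h2 := HasQ.sum (m := 24) (Finset.univ : Finset (ZMod Q)ˣ)
    (fun u z => heckeBeta Q r w u *
        f (z + (24 : ℝ) * ((dualUnit (unit576 hQ) u : ZMod Q).val / Q : ℝ))) _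
    fun u _ => (H.translate (by norm_num)
      ((dualUnit (unit576 hQ) u : ZMod Q).val / Q : ℝ)).smul (heckeBeta Q r w u)
  have h3 := (H.scale (Q ^ 2) (pow_ne_zero 2 hQp.out.ne_zero)).smul ((Q : ℂ) ^ (r + 2 * w))
  refine HasQ.congr (g := heckeSeries Q r w hQ S) ?_
    fun z _ => heckeA_add_heckeB_add_heckeC Q hQ f z
  convert (h1.add h2).add h3 using 1
  ext n
  simp only [heckeSeries, coeff_mk, map_add, map_sum, map_smul, smul_eq_mul, heckeMid,
    Finset.sum_mul]
  congr 2
  refine Finset.sum_congr rfl fun u _ => ?_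
  rw [mul_assoc]
  congr 2
  have := ZMod.stdAddChar_coe (N := Q) (((dualUnit (unit576 hQ) u : ZMod Q).val : ℤ) * n)
  push_cast at this ⊢
  rw [ZMod.natCast_val, ZMod.cast_id', id] at this
  rw [this]
  congr 1
  ring

omit hQp in
lemma coeff_etaSeries_add {R : Type*} [CommRing R] (r : ℕ) (h : R⟦X⟧) (n : ℕ) :
    coeff (24 * n + r) (etaSeries R r h) = coeff n (pentagonalSeries R ^ r * h) := by
  rw [etaSeries, coeff_X_pow_mul, coeff_expand_mul]

omit hQp in
lemma coeff_etaSeries_of_ne {R : Type*} [CommRing R] {r : ℕ} (h : R⟦X⟧) {n : ℕ}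
    (hn : ∀ k, n ≠ 24 * k + r) : coeff n (etaSeries R r h) = 0 := by
  rw [etaSeries, coeff_X_pow_mul']
  split_ifs with hr
  · rw [coeff_expand_of_not_dvd]
    rintro ⟨k, hk⟩
    exact hn k (by omega)
  · rfl

omit hQp in
include hQ in
lemma sq_mod_24 : Q ^ 2 % 24 = 1 := by
  have h2 : ¬ 2 ∣ Q := fun hd => by
    have := Nat.dvd_gcd hd (show 2 ∣ 12 by norm_num)
    rw [hQ] at this; omega
  have h3 : ¬ 3 ∣ Q := fun hd => by
    have := Nat.dvd_gcd hd (show 3 ∣ 12 by norm_num)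
    rw [hQ] at this; omega
  have : Q % 24 < 24 := Nat.mod_lt _ (by norm_num)
  rw [Nat.pow_mod]
  have h2' : Q % 24 % 2 ≠ 0 := by omega
  have h3' : Q % 24 % 3 ≠ 0 := by omega
  interval_cases Q % 24 <;> simp_all

omit hQp in
include hQ in
lemma sq_mul_mod_24 (n : ℕ) : Q ^ 2 * n % 24 = n % 24 := by
  rw [Nat.mul_mod, sq_mod_24 Q hQ, one_mul, Nat.mod_mod]

variable (r w) in
/-- The action of `T(Q ^ 2)` on the weight `w` forms `h`, transported from `η ^ r h`. -/
noncomputable def heckeOp (h : ℂ⟦X⟧) : ℂ⟦X⟧ :=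
  partSeries ℂ ^ r *
    PowerSeries.mk fun n => coeff (24 * n + r) (heckeSeries Q r w hQ (etaSeries ℂ r h))

omit hQp in
lemma partSeries_pow_mul (R : Type*) [CommRing R] (r : ℕ) (g : R⟦X⟧) :
    pentagonalSeries R ^ r * (partSeries R ^ r * g) = g := by
  rw [← mul_assoc, ← mul_pow, pentagonal_mul_part, one_pow, one_mul]

/-- Since `Q ^ 2 ≡ 1` modulo `24`, `T(Q ^ 2)` preserves the exponents congruent to `r`, so its image
is again `η ^ r` times a power series. -/
lemma etaSeries_heckeOp (hr : r < 24) (h : ℂ⟦X⟧) :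
    etaSeries ℂ r (heckeOp Q r w hQ h) = heckeSeries Q r w hQ (etaSeries ℂ r h) := by
  ext n
  by_cases hn : ∃ k, n = 24 * k + r
  · obtain ⟨k, rfl⟩ := hn
    rw [coeff_etaSeries_add, heckeOp, partSeries_pow_mul, coeff_mk]
  · push Not at hn
    have hmod : ∀ n' : ℕ, n' % 24 = n % 24 → coeff n' (etaSeries ℂ r h) = 0 := by
      intro n' hn'
      refine coeff_etaSeries_of_ne h fun k hk => hn (n / 24) ?_
      omega
    rw [coeff_etaSeries_of_ne _ hn, heckeSeries, coeff_mk, hmod _ (sq_mul_mod_24 Q hQ n),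
      hmod n rfl]
    by_cases hd : Q ^ 2 ∣ n
    · obtain ⟨n', rfl⟩ := hd
      rw [coeff_expand_mul, hmod n' (sq_mul_mod_24 Q hQ n').symm]; simp
    · rw [coeff_expand_of_not_dvd _ _ _ hd]; simp

omit hQp in
lemma HasQ.div_qParam {m : ℝ} {f : ℂ → ℂ} {g : ℂ⟦X⟧} (H : HasQ m f (X ^ r * g)) :
    HasQ m (fun z => f z / qParam m z ^ r) g := by
  intro z hz
  have hq : qParam m z ^ r ≠ 0 := pow_ne_zero _ (qParam_ne_zero _)
  have hinj : Function.Injective fun n : ℕ => n + r := add_left_injective r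
  have h1 := H z hz
  rw [← hinj.hasSum_iff] at h1
  · refine (h1.div_const (qParam m z ^ r)).congr_fun fun n => ?_
    simp only [Function.comp]
    rw [coeff_X_pow_mul, pow_add]
    field_simp
  · intro n hn
    rw [coeff_X_pow_mul', if_neg, zero_mul]
    exact fun hr => hn ⟨n - r, Nat.sub_add_cancel hr⟩

/-- The operator `T(Q ^ 2)` on the forms `η ^ r φ` preserves the level one forms `φ` of even
weight. -/
theorem heckeOp_isMF (hr : r < 24) (hw : Even w) (H : IsMF w φ h) :
    ∃ ψ, IsMF w ψ (heckeOp Q r w hQ h) := by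
  set Tf : ℂ → ℂ := fun z => heckeA Q (etaMul r φ) z + heckeB Q r w hQ (etaMul r φ) z +
    heckeC Q r w (etaMul r φ) z with hTf
  have h1 : HasQ 24 Tf (heckeSeries Q r w hQ (etaSeries ℂ r h)) :=
    hasQ_hecke Q hQ (hasQ_etaMul r H.hasQ)
  rw [← etaSeries_heckeOp Q hQ hr, etaSeries] at h1
  have h2 : HasQ 1 (fun z => Tf z / qParam 24 z ^ r)
      (pentagonalSeries ℂ ^ r * heckeOp Q r w hQ h) :=
    HasQ.of_expand 24 (by norm_num) (by simpa using h1.div_qParam)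
  have h3 := h2.mul (hasQ_eulerFun_inv.pow r)
  have e3 : pentagonalSeries ℂ ^ r * heckeOp Q r w hQ h * partSeries ℂ ^ r =
      heckeOp Q r w hQ h := by
    rw [mul_right_comm, ← mul_pow, pentagonal_mul_part, one_pow, one_mul]
  rw [e3] at h3
  refine ⟨fun z => Tf z / eta z ^ r, h3.congr fun z _ => ?_, fun z hz => ?_⟩
  · rw [eta_eq_eulerFun, mul_pow, inv_pow, div_mul_eq_div_div, div_eq_mul_inv (_ / _)]
  · have e1 : Tf (-1 / z) = autFac r w z * Tf z := by
      simp only [hTf]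
      rw [heckeA_neg_inv Q hQ H hz, heckeB_neg_inv Q hQ hw H hz, heckeC_neg_inv Q H hz]
      ring
    rw [e1, eta_neg_inv hz, autFac, zpow_natCast, mul_pow]
    have := pow_ne_zero r (ModularForm.eta_ne_zero hz)
    have := pow_ne_zero r (sq_ne_zero hz)
    field_simp

lemma heckeOp_mem_MF (hr : r < 24) (hw : Even w) (H : h ∈ MF w) : heckeOp Q r w hQ h ∈ MF w := by
  obtain ⟨φ, hφ⟩ := H
  exact heckeOp_isMF Q hQ hr hw hφ

end HeckeOperator

/-! ### Periodicity along powers of `Q ^ 2` -/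

section Lattice

lemma map_pentagonalSeries {R S : Type*} [CommRing R] [CommRing S] (f : R →+* S) :
    PowerSeries.map f (pentagonalSeries R) = pentagonalSeries S := by
  ext n
  rw [coeff_map]
  by_cases hn : n ∈ Set.range pentagonal
  · obtain ⟨k, rfl⟩ := hn
    rw [coeff_pentagonalSeries_pentagonal, coeff_pentagonalSeries_pentagonal, map_intCast]
  · rw [coeff_pentagonalSeries_eq_zero _ hn, coeff_pentagonalSeries_eq_zero _ hn, map_zero]

lemma map_partSeries {R S : Type*} [CommRing R] [CommRing S] (f : R →+* S) :
    PowerSeries.map f (partSeries R) = partSeries S := by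
  have h1 := congrArg (PowerSeries.map f) (pentagonal_mul_part R)
  rw [map_mul, map_one, map_pentagonalSeries] at h1
  have h2 := pentagonal_mul_part S
  calc PowerSeries.map f (partSeries R)
      = (pentagonalSeries S * partSeries S) * PowerSeries.map f (partSeries R) := by rw [h2, one_mul]
    _ = (pentagonalSeries S * PowerSeries.map f (partSeries R)) * partSeries S := by ring
    _ = partSeries S := by rw [h1, one_mul]

/-- Power series with all coefficients in a subring `A` of `ℂ`. -/
def coeffsIn (A : Subalgebra ℤ ℂ) : Subring ℂ⟦X⟧ where
  carrier := {g | ∀ n, coeff n g ∈ A}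
  zero_mem' n := by rw [map_zero]; exact A.zero_mem
  one_mem' n := by
    rw [coeff_one]; split_ifs
    exacts [A.one_mem, A.zero_mem]
  add_mem' h h' n := by rw [map_add]; exact A.add_mem (h n) (h' n)
  neg_mem' h n := by rw [map_neg]; exact A.neg_mem (h n)
  mul_mem' h h' n := by
    rw [coeff_mul]; exact A.sum_mem fun p _ => A.mul_mem (h p.1) (h' p.2)

lemma mem_coeffsIn {A : Subalgebra ℤ ℂ} {g : ℂ⟦X⟧} : g ∈ coeffsIn A ↔ ∀ n, coeff n g ∈ A := Iff.rfl

lemma intCast_mem_subalgebra (A : Subalgebra ℤ ℂ) (n : ℤ) : (n : ℂ) ∈ A := A.intCast_mem n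

lemma map_int_mem_coeffsIn (A : Subalgebra ℤ ℂ) (g : ℤ⟦X⟧) :
    PowerSeries.map (Int.castRingHom ℂ) g ∈ coeffsIn A := fun n => by
  rw [coeff_map]; exact A.intCast_mem _

lemma pentagonalSeries_mem_coeffsIn (A : Subalgebra ℤ ℂ) : pentagonalSeries ℂ ∈ coeffsIn A := by
  rw [← map_pentagonalSeries (Int.castRingHom ℂ)]; exact map_int_mem_coeffsIn A _

lemma partSeries_mem_coeffsIn (A : Subalgebra ℤ ℂ) : partSeries ℂ ∈ coeffsIn A := by
  rw [← map_partSeries (Int.castRingHom ℂ)]; exact map_int_mem_coeffsIn A _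

lemma expand_mem_coeffsIn {A : Subalgebra ℤ ℂ} {g : ℂ⟦X⟧} (hg : g ∈ coeffsIn A) (k : ℕ)
    (hk : k ≠ 0) : g.expand k hk ∈ coeffsIn A := fun n => by
  by_cases hd : k ∣ n
  · obtain ⟨n, rfl⟩ := hd
    rw [coeff_expand_mul]; exact hg n
  · rw [coeff_expand_of_not_dvd _ _ _ hd]; exact A.zero_mem

lemma etaSeries_mem_coeffsIn {A : Subalgebra ℤ ℂ} {g : ℂ⟦X⟧} (hg : g ∈ coeffsIn A) (r : ℕ) :
    etaSeries ℂ r g ∈ coeffsIn A := by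
  refine Subring.mul_mem _ (Subring.pow_mem _ (fun n => ?_) r) (expand_mem_coeffsIn
    (Subring.mul_mem _ (Subring.pow_mem _ (pentagonalSeries_mem_coeffsIn A) r) hg) _ _)
  rw [coeff_X]; split_ifs
  exacts [A.one_mem, A.zero_mem]

variable (Q : ℕ) [hQp : Fact Q.Prime] (hQ : Nat.Coprime Q 12)

/-- The ring `ℤ[ζ]` of `Q`-th cyclotomic integers. -/
noncomputable def cycInt : Subalgebra ℤ ℂ := Algebra.adjoin ℤ {ZMod.stdAddChar (1 : ZMod Q)}

lemma stdAddChar_mem_cycInt (x : ZMod Q) : ZMod.stdAddChar x ∈ cycInt Q := by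
  have : x = x.val • (1 : ZMod Q) := by simp
  rw [this, AddChar.map_nsmul_eq_pow]
  exact (cycInt Q).pow_mem (Algebra.subset_adjoin (Set.mem_singleton _)) _

instance : Module.Finite ℤ (cycInt Q) := by
  have : IsIntegral ℤ (ZMod.stdAddChar (1 : ZMod Q) : ℂ) := by
    refine ⟨Polynomial.X ^ Q - 1, Polynomial.monic_X_pow_sub_C 1 hQp.out.ne_zero, ?_⟩
    rw [Polynomial.eval₂_sub, Polynomial.eval₂_X_pow, Polynomial.eval₂_one,
      ← AddChar.map_nsmul_eq_pow]
    simp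
  exact Module.Finite.iff_fg.mpr this.fg_adjoin_singleton

variable {r w : ℕ}

lemma heckeBeta_mem (u : (ZMod Q)ˣ) : heckeBeta Q r w u ∈ cycInt Q := by
  refine Subalgebra.mul_mem _ (Subalgebra.pow_mem _ (Subalgebra.mul_mem _ ?_
    (Subalgebra.sum_mem _ fun y _ => stdAddChar_mem_cycInt Q _)) r)
    (Subalgebra.pow_mem _ ?_ w)
  · exact (cycInt Q).intCast_mem _
  · exact (cycInt Q).natCast_mem _

lemma heckeMid_mem (n : ℕ) : heckeMid Q r w hQ n ∈ cycInt Q :=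
  Subalgebra.sum_mem _ fun u _ =>
    Subalgebra.mul_mem _ (heckeBeta_mem Q u) (stdAddChar_mem_cycInt Q _)

lemma heckeSeries_mem {S : ℂ⟦X⟧} (hS : S ∈ coeffsIn (cycInt Q)) :
    heckeSeries Q r w hQ S ∈ coeffsIn (cycInt Q) := fun n => by
  rw [heckeSeries, coeff_mk]
  refine Subalgebra.add_mem _ (Subalgebra.add_mem _ (Subalgebra.mul_mem _ ?_ (hS _))
    (Subalgebra.mul_mem _ (heckeMid_mem Q hQ n) (hS _))) (Subalgebra.mul_mem _
    (Subalgebra.pow_mem _ ?_ _) (expand_mem_coeffsIn hS _ _ _))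
  · exact (cycInt Q).natCast_mem _
  · exact (cycInt Q).natCast_mem _

lemma heckeOp_mem {h : ℂ⟦X⟧} (hh : h ∈ coeffsIn (cycInt Q)) :
    heckeOp Q r w hQ h ∈ coeffsIn (cycInt Q) := by
  refine Subring.mul_mem _ (Subring.pow_mem _ (partSeries_mem_coeffsIn _) r) fun n => ?_
  rw [coeff_mk]
  exact heckeSeries_mem Q hQ (etaSeries_mem_coeffsIn hh r) _

/-- The lattice of modular forms of weight `w` with coefficients in `ℤ[ζ]`. -/
noncomputable def lattice (w : ℕ) : Submodule ℤ ℂ⟦X⟧ where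
  carrier := {h | h ∈ MF w ∧ h ∈ coeffsIn (cycInt Q)}
  zero_mem' := ⟨Submodule.zero_mem _, Subring.zero_mem _⟩
  add_mem' h h' := ⟨Submodule.add_mem _ h.1 h'.1, Subring.add_mem _ h.2 h'.2⟩
  smul_mem' a _ h := ⟨(MF w).toAddSubgroup.zsmul_mem h.1 a, Subring.zsmul_mem _ h.2 a⟩

/-- By Sturm's bound, finitely many coefficients determine an element of the lattice. -/
instance (w : ℕ) : Module.Finite ℤ (lattice Q w) := by
  let F : lattice Q w →ₗ[ℤ] (Fin (w + 1) → cycInt Q) :=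
    { toFun := fun h i => ⟨coeff (i : ℕ) h.1, h.2.2 i⟩
      map_add' := fun h h' => by ext i; simp
      map_smul' := fun a h => by
        ext i; exact map_zsmul (coeff (R := ℂ) (i : ℕ)).toAddMonoidHom a h.1 }
  refine Module.Finite.of_injective F ?_
  rw [injective_iff_map_eq_zero]
  rintro ⟨h, hh⟩ h0
  have := MF_sturm hh.1 (w + 1) (by push_cast; omega) fun i hi => by
    have := congrArg Subtype.val (congrFun h0 ⟨i, hi⟩)
    simpa [F] using this
  exact Subtype.ext this

/-- A sequence in a finite set whose steps are reversible is periodic, with a period depending only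
on the set. -/
lemma exists_uniform_period (α : Type*) [Finite α] : ∃ K > 0, ∀ v : ℕ → α,
    (∀ a b, v a = v b ↔ v (a + 1) = v (b + 1)) → ∀ t, v (t * K) = v 0 := by
  refine ⟨(Nat.card α).factorial, Nat.factorial_pos _, fun v hv t => ?_⟩
  have hback : ∀ n a b, v (a + n) = v (b + n) ↔ v a = v b := by
    intro n a b
    induction n with
    | zero => rfl
    | succ n ih => rw [← ih, hv (a + n) (b + n)]; rfl
  have : ∃ a b : Fin (Nat.card α + 1), a ≠ b ∧ v a = v b := by
    by_contra! hne
    have hinj : Function.Injective fun a : Fin (Nat.card α + 1) => v a := fun a b hab => by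
      by_contra h; exact hne a b h hab
    have := Nat.card_le_card_of_injective _ hinj
    rw [Nat.card_fin] at this; omega
  obtain ⟨a, b, hab, hv'⟩ := this
  wlog hlt : (a : ℕ) < b generalizing a b
  · exact this b a hab.symm hv'.symm (by have := Fin.val_ne_of_ne hab; omega)
  have hp : v (0 + (b - a)) = v 0 := by
    have := (hback a 0 (b - a)).mp (by rw [Nat.sub_add_cancel hlt.le, zero_add]; exact hv')
    rw [zero_add]; exact this.symm
  have hper : ∀ s, v (s * (b - a)) = v 0 := by
    intro s
    induction s with
    | zero => rw [zero_mul]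
    | succ s ih =>
      rw [add_mul, one_mul, ← ih, add_comm]
      have := (hback (s * (b - a)) (0 + (b - a)) 0).mpr hp
      rwa [zero_add, zero_add] at this
  have hd : ((b : ℕ) - a) ∣ (Nat.card α).factorial :=
    Nat.dvd_factorial (by omega) (by have := b.2; omega)
  obtain ⟨s, hs⟩ := hd
  rw [hs, show t * (((b : ℕ) - a) * s) = t * s * (b - a) by ring]
  exact hper _

/-- An integer divisible by `d` in `ℤ[ζ]` is divisible by `d` in `ℤ`. -/
lemma dvd_of_cycInt {d c : ℤ} (hd : d ≠ 0) {y : ℂ} (hy : y ∈ cycInt Q) (h : (c : ℂ) = d * y) :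
    d ∣ c := by
  have h1 : IsIntegral ℤ y := by
    have := Algebra.IsIntegral.isIntegral (R := ℤ) (⟨y, hy⟩ : cycInt Q)
    exact this.map (cycInt Q).val
  have h2 : y = algebraMap ℚ ℂ ((c : ℚ) / d) := by
    have : (d : ℂ) ≠ 0 := by exact_mod_cast hd
    rw [eq_ratCast]; push_cast; rw [h]; field_simp
  rw [h2, isIntegral_algebraMap_iff (algebraMap ℚ ℂ).injective] at h1
  obtain ⟨x, hx⟩ := IsIntegrallyClosed.isIntegral_iff.mp h1
  refine ⟨x, ?_⟩
  have h3 : (d : ℚ) ≠ 0 := by exact_mod_cast hd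
  rw [eq_intCast, eq_div_iff h3] at hx
  have : x * d = c := by exact_mod_cast hx
  linarith

lemma isUnit_natCast_of_coprime {Y : Type*} [CommRing Y] {s d : ℕ} (h : Nat.Coprime s d)
    (hd : (d : Y) = 0) : IsUnit (s : Y) := by
  obtain ⟨x, y, hxy⟩ := Nat.isCoprime_iff_coprime.mpr h
  have h2 : (x : Y) * s + y * (d : Y) = 1 := by exact_mod_cast congrArg (Int.cast : ℤ → Y) hxy
  rw [hd, mul_zero, add_zero] at h2
  exact IsUnit.of_mul_eq_one _ (by rw [mul_comm]; exact h2)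

/-- The coefficients of `η ^ r h` at `Q ^ (2 k - 1) m`, with value `0` for `k = 0`. -/
noncomputable def towerCoeff (r m k : ℕ) (h : ℂ⟦X⟧) : ℂ :=
  if k = 0 then 0 else coeff (Q ^ (2 * k - 1) * m) (etaSeries ℂ r h)

include hQ in
/-- The second-order recurrence given by `T(Q ^ 2)`. Along exponents divisible by `Q` the middle
coefficient of the operator is constant. -/
lemma towerCoeff_rec (hr : r < 24) {m : ℕ} (hm : ¬ Q ∣ m) (k : ℕ) (h : ℂ⟦X⟧) :
    ((Q ^ 2 : ℕ) : ℂ) * towerCoeff Q r m (k + 2) h + (Q : ℂ) ^ (r + 2 * w) * towerCoeff Q r m k h =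
      towerCoeff Q r m (k + 1) (heckeOp Q r w hQ h) -
        heckeMid Q r w hQ 0 * towerCoeff Q r m (k + 1) h := by
  have e1 : 2 * (k + 2) - 1 = 2 + (2 * k + 1) := by omega
  have e2 : 2 * (k + 1) - 1 = 2 * k + 1 := by omega
  have e3 : heckeMid Q r w hQ (Q ^ (2 * k + 1) * m) = heckeMid Q r w hQ 0 :=
    heckeMid_of_dvd Q r w hQ ((dvd_pow_self Q (by omega)).mul_right m)
  simp only [towerCoeff, if_neg (show k + 2 ≠ 0 by omega), if_neg (show k + 1 ≠ 0 by omega)]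
  rw [etaSeries_heckeOp Q hQ hr, heckeSeries, coeff_mk, e1, e2, pow_add _ 2, mul_assoc (Q ^ 2), e3]
  have : coeff (Q ^ (2 * k + 1) * m)
      ((etaSeries ℂ r h).expand (Q ^ 2) (pow_ne_zero 2 hQp.out.ne_zero)) =
      if k = 0 then 0 else coeff (Q ^ (2 * k - 1) * m) (etaSeries ℂ r h) := by
    split_ifs with hk
    · subst hk
      refine coeff_expand_of_not_dvd _ _ _ fun hd => hm ?_
      rw [mul_zero, zero_add, pow_one, pow_two] at hd
      exact Nat.dvd_of_mul_dvd_mul_left hQp.out.pos hd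
    · rw [show 2 * k + 1 = 2 + (2 * k - 1) by omega, pow_add, mul_assoc, coeff_expand_mul]
  rw [this]
  ring

/-- The coefficients of `η ^ r h` at `Q ^ (2 t K - 1) m`, for `Q ∤ m`, vanish modulo `l ^ i`.
Modulo `l ^ i` the functionals `towerCoeff k` on the finitely generated lattice of forms take values
in a finite set, and the recurrence can be run backwards as `Q` is invertible; hence the sequence is
purely periodic, and it starts at zero. The period does not depend on `m`. -/
theorem eta_tower_dvd {l : ℕ} (hl : l.Prime) (hlQ : l ≠ Q) (i : ℕ) (hr : r < 24) (hw : Even w)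
    (hQ : Nat.Coprime Q 12) (h : ℤ⟦X⟧) (hh : PowerSeries.map (Int.castRingHom ℂ) h ∈ MF w) :
    ∃ K > 0, ∀ t > 0, ∀ n m : ℕ, 24 * n + r = Q ^ (2 * (t * K) - 1) * m → ¬ Q ∣ m →
      ((l ^ i : ℕ) : ℤ) ∣ coeff n (pentagonalSeries ℤ ^ r * h) := by
  let A := cycInt Q
  let Y := A ⧸ Ideal.span {((l ^ i : ℕ) : A)}
  let pr : A →+* Y := Ideal.Quotient.mk _
  have hli : (l ^ i : ℕ) ≠ 0 := pow_ne_zero _ hl.ne_zero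
  have hpr : ∀ y : A, ((l ^ i : ℕ) : Y) * pr y = 0 := by
    intro y
    rw [← map_natCast pr, ← map_mul, Ideal.Quotient.eq_zero_iff_mem]
    exact Ideal.mul_mem_right _ _ (Ideal.subset_span rfl)
  have hsurj : Function.Surjective pr := Ideal.Quotient.mk_surjective
  have hYfg : Module.Finite ℤ Y :=
    Module.Finite.of_surjective (pr.toAddMonoidHom.toIntLinearMap) hsurj
  have hYfin : Finite Y := by
    refine Module.finite_of_fg_torsion Y fun {y} => ?_
    obtain ⟨y, rfl⟩ := hsurj y
    refine ⟨⟨((l ^ i : ℕ) : ℤ), mem_nonZeroDivisors_of_ne_zero (by exact_mod_cast hli)⟩, ?_⟩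
    have := hpr y
    change ((l ^ i : ℕ) : ℤ) • pr y = 0
    rw [zsmul_eq_mul, Int.cast_natCast]; exact this
  -- a natural number prime to `l` is a unit in `Y`
  have hunit : ∀ s : ℕ, Nat.Coprime s l → IsUnit (s : Y) := by
    intro s hs
    exact isUnit_natCast_of_coprime (hs.pow_right i) (by simpa only [map_one, mul_one] using hpr 1)
  have hQl : Nat.Coprime Q l := (Nat.coprime_primes hQp.out hl).mpr hlQ.symm
  obtain ⟨S, hS⟩ := (inferInstance : Module.Finite ℤ (lattice Q w)).fg_top
  have hX : Finite (lattice Q w →ₗ[ℤ] Y) := by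
    refine Finite.of_injective (fun (f : lattice Q w →ₗ[ℤ] Y) (s : S) => f s.1) fun f g hfg => ?_
    refine LinearMap.ext_on hS fun s hs => ?_
    exact congrFun hfg ⟨s, hs⟩
  obtain ⟨K, hK, hper⟩ :=
    exists_uniform_period ((lattice Q w →ₗ[ℤ] Y) × (lattice Q w →ₗ[ℤ] Y))
  refine ⟨K, hK, fun t ht n m hnm hm => ?_⟩
  have hmem : ∀ (k : ℕ) (x : lattice Q w), towerCoeff Q r m k x.1 ∈ A := by
    intro k x
    rw [towerCoeff]; split_ifs
    exacts [A.zero_mem, etaSeries_mem_coeffsIn x.2.2 r _]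
  have hadd : ∀ (k : ℕ) (x y : ℂ⟦X⟧),
      towerCoeff Q r m k (x + y) = towerCoeff Q r m k x + towerCoeff Q r m k y := by
    intro k x y
    rw [towerCoeff, towerCoeff, towerCoeff]; split_ifs
    · rw [add_zero]
    · rw [etaSeries, mul_add, map_add, mul_add, map_add]; rfl
  let u : ℕ → (lattice Q w →ₗ[ℤ] Y) := fun k => AddMonoidHom.toIntLinearMap
    (AddMonoidHom.mk' (fun x => pr ⟨towerCoeff Q r m k x.1, hmem k x⟩) fun x y => by
      rw [← map_add]; congr 1; exact Subtype.ext (hadd k x.1 y.1))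
  have hu : ∀ k x, u k x = pr ⟨towerCoeff Q r m k x.1, hmem k x⟩ := fun k x => rfl
  let T : lattice Q w → lattice Q w := fun x =>
    ⟨heckeOp Q r w hQ x.1, heckeOp_mem_MF Q hQ hr hw x.2.1, heckeOp_mem Q hQ x.2.2⟩
  have hrec : ∀ k x, ((Q ^ 2 : ℕ) : Y) * u (k + 2) x + ((Q ^ (r + 2 * w) : ℕ) : Y) * u k x =
      u (k + 1) (T x) - pr ⟨_, heckeMid_mem Q hQ (r := r) (w := w) 0⟩ * u (k + 1) x := by
    intro k x
    simp only [hu]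
    rw [← map_natCast pr, ← map_natCast pr, ← map_mul, ← map_mul, ← map_mul, ← map_add, ← map_sub]
    congr 1
    refine Subtype.ext ?_
    have := towerCoeff_rec Q hQ (w := w) hr hm k x.1
    push_cast at this ⊢
    exact this
  have hv := hper (fun k => (u k, u (k + 1))) (fun a b => by
    simp only [Prod.mk.injEq]
    constructor
    · rintro ⟨h0, h1⟩
      refine ⟨h1, LinearMap.ext fun x => ?_⟩
      have e1 := hrec a x
      have e2 := hrec b x
      rw [← h0, ← h1, ← e1] at e2
      exact ((hunit _ (hQl.pow_left 2)).mul_left_cancel (add_right_cancel e2)).symm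
    · rintro ⟨h1, h2⟩
      refine ⟨LinearMap.ext fun x => ?_, h1⟩
      have e1 := hrec a x
      have e2 := hrec b x
      rw [show u (b + 2) = u (a + 2) from h2.symm, ← h1, ← e1] at e2
      exact ((hunit _ (hQl.pow_left _)).mul_left_cancel (add_left_cancel e2)).symm) t
  have hmap : PowerSeries.map (Int.castRingHom ℂ) h ∈ lattice Q w :=
    ⟨hh, map_int_mem_coeffsIn _ _⟩
  have h0 : u (t * K) ⟨_, hmap⟩ = 0 := by
    have h00 : u (t * K) = u 0 := congrArg Prod.fst hv
    rw [h00]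
    simp only [hu, towerCoeff, if_true]
    exact map_zero pr
  rw [hu, Ideal.Quotient.eq_zero_iff_mem, Ideal.mem_span_singleton] at h0
  obtain ⟨y, hy⟩ := h0
  have hy' := congrArg Subtype.val hy
  have htK : t * K ≠ 0 := (Nat.mul_pos ht hK).ne'
  simp only [towerCoeff, if_neg htK, ← hnm, coeff_etaSeries_add] at hy'
  refine dvd_of_cycInt Q (by exact_mod_cast hli) y.2 (y := y.1) ?_
  rw [← map_pentagonalSeries (Int.castRingHom ℂ), ← map_pow, ← map_mul, coeff_map] at hy'
  simpa using hy'

end Lattice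

/-! ### The operator `U_l` and the partition series -/

section UStep

lemma expand_eq_pow_zmod (l : ℕ) [Fact l.Prime] (f : (ZMod l)⟦X⟧) (hl : l ≠ 0) :
    f.expand l hl = f ^ l := by
  have := MvPowerSeries.map_frobenius_expand (R := ZMod l) l hl (f := f)
  rw [ZMod.frobenius_zmod] at this
  rw [← this]
  exact (congrFun (congrArg DFunLike.coe (MvPowerSeries.map_id)) _).symm

lemma natCast_dvd_iff_coeff (d : ℕ) (f : ℤ⟦X⟧) :
    ((d : ℕ) : ℤ⟦X⟧) ∣ f ↔ ∀ n, (d : ℤ) ∣ coeff n f := by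
  constructor
  · rintro ⟨g, rfl⟩ n
    rw [← nsmul_eq_mul, map_nsmul, nsmul_eq_mul]
    exact dvd_mul_right _ _
  · intro h
    choose c hc using h
    refine ⟨PowerSeries.mk c, ?_⟩
    ext n
    rw [← nsmul_eq_mul, map_nsmul, nsmul_eq_mul, coeff_mk, hc]

/-- `f(X) ^ (l ^ (k + 1)) ≡ f(X ^ l) ^ (l ^ k)` modulo `l ^ (k + 1)`. -/
lemma dvd_pow_sub_expand (l : ℕ) [hl : Fact l.Prime] (f : ℤ⟦X⟧) (k : ℕ) :
    ((l ^ (k + 1) : ℕ) : ℤ⟦X⟧) ∣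
      f ^ l ^ (k + 1) - f.expand l hl.out.ne_zero ^ l ^ k := by
  have h1 : ((l : ℕ) : ℤ⟦X⟧) ∣ f ^ l - f.expand l hl.out.ne_zero := by
    rw [natCast_dvd_iff_coeff]
    intro n
    rw [← ZMod.intCast_zmod_eq_zero_iff_dvd]
    have := congrArg (coeff n) (expand_eq_pow_zmod l (PowerSeries.map (Int.castRingHom (ZMod l)) f)
      hl.out.ne_zero)
    rw [← map_expand, ← map_pow, coeff_map, coeff_map] at this
    rw [map_sub, Int.cast_sub]
    simpa [sub_eq_zero] using this.symm
  have := dvd_sub_pow_of_dvd_sub h1 k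
  rw [← pow_mul, ← pow_succ'] at this
  exact_mod_cast this

/-- The operator `U_l`. -/
noncomputable def opU {R : Type*} [CommRing R] (l : ℕ) (f : R⟦X⟧) : R⟦X⟧ :=
  PowerSeries.mk fun n => coeff (l * n) f

lemma coeff_opU {R : Type*} [CommRing R] (l : ℕ) (f : R⟦X⟧) (n : ℕ) :
    coeff n (opU l f) = coeff (l * n) f := coeff_mk _ _

lemma opU_expand_mul {R : Type*} [CommRing R] (l : ℕ) (hl : l ≠ 0) (f g : R⟦X⟧) :
    opU l (g.expand l hl * f) = g * opU l f := by
  ext n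
  rw [coeff_opU, coeff_mul, coeff_mul]
  symm
  have hinj : Function.Injective fun p : ℕ × ℕ => (l * p.1, l * p.2) := fun p q hpq => by
    simp only [Prod.mk.injEq, mul_right_inj' hl] at hpq
    exact Prod.ext hpq.1 hpq.2
  have e1 : ∑ p ∈ Finset.HasAntidiagonal.antidiagonal n, coeff p.1 g * coeff p.2 (opU l f) =
      ∑ p ∈ (Finset.HasAntidiagonal.antidiagonal n).map ⟨_, hinj⟩, coeff p.1 (g.expand l hl) * coeff p.2 f := by
    rw [Finset.sum_map]
    refine Finset.sum_congr rfl fun p _ => ?_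
    simp only [Function.Embedding.coeFn_mk]
    rw [coeff_expand_mul, coeff_opU]
  rw [e1]
  refine Finset.sum_subset (fun p hp => ?_) fun p hp hp' => ?_
  · simp only [Finset.mem_map, Finset.HasAntidiagonal.mem_antidiagonal,
      Function.Embedding.coeFn_mk] at hp ⊢
    obtain ⟨q, hq, rfl⟩ := hp
    simp only; rw [← hq]; ring
  · rw [coeff_expand_of_not_dvd, zero_mul]
    rintro ⟨a, ha⟩
    refine hp' ?_
    rw [Finset.HasAntidiagonal.mem_antidiagonal] at hp
    obtain ⟨b, hb⟩ : l ∣ p.2 := (Nat.dvd_add_right ⟨a, ha⟩).mp (hp ▸ dvd_mul_right l n)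
    simp only [Finset.mem_map, Finset.HasAntidiagonal.mem_antidiagonal,
      Function.Embedding.coeFn_mk]
    refine ⟨(a, b), ?_, Prod.ext ha.symm hb.symm⟩
    rw [ha, hb, ← mul_add] at hp
    exact Nat.eq_of_mul_eq_mul_left (Nat.pos_of_ne_zero hl) hp

/-- The Hecke operator `T_l` in weight `k + 1`. -/
noncomputable def opT {R : Type*} [CommRing R] (l : ℕ) [hl : Fact l.Prime] (k : ℕ) (f : R⟦X⟧) :
    R⟦X⟧ :=
  opU l f + (l ^ k : ℕ) * f.expand l hl.out.ne_zero

lemma map_opT {R S : Type*} [CommRing R] [CommRing S] (φ : R →+* S) (l : ℕ) [hl : Fact l.Prime]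
    (k : ℕ) (f : R⟦X⟧) : PowerSeries.map φ (opT l k f) = opT l k (PowerSeries.map φ f) := by
  rw [opT, opT, map_add, map_mul, map_natCast, map_expand]
  rfl

lemma sum_zmod_prime (l : ℕ) [hl : Fact l.Prime] {A : Type*} [AddCommMonoid A] (F : ZMod l → A) :
    ∑ j, F j = F 0 + ∑ u : (ZMod l)ˣ, F u := by
  rw [← Finset.add_sum_erase _ _ (Finset.mem_univ 0)]
  congr 1
  symm
  refine Finset.sum_bij (fun u _ => (u : ZMod l)) (fun u _ => by simp) (fun u _ v _ h => Units.ext h)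
    (fun b hb => ⟨Units.mk0 b (Finset.ne_of_mem_erase hb), Finset.mem_univ _, rfl⟩) fun _ _ => rfl

/-- The Hecke operator at a prime preserves the forms of level one. -/
theorem opT_mem_MF (l : ℕ) [hl : Fact l.Prime] (k : ℕ) {f : ℂ⟦X⟧} (hf : f ∈ MF (k + 1 : ℕ)) :
    opT l k f ∈ MF (k + 1 : ℕ) := by
  obtain ⟨φ, H⟩ := hf
  have hl0 : (l : ℂ) ≠ 0 := by exact_mod_cast hl.out.ne_zero
  have hlr : (0 : ℝ) < l := by exact_mod_cast hl.out.pos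
  have h1 := H.hasQ.average one_pos l
  have h2 := H.hasQ.scale l hl.out.ne_zero
  have h3 := (h1.smul (1 / l)).add (h2.smul (l ^ k))
  have e : (1 / l : ℂ) • (PowerSeries.mk fun n => (l : ℂ) * coeff (l * n) f) +
      (l ^ k : ℂ) • f.expand l hl.out.ne_zero = opT l k f := by
    ext n
    rw [opT, map_add, map_add, ← nsmul_eq_mul, map_nsmul, coeff_opU, coeff_smul, coeff_smul,
      coeff_mk, nsmul_eq_mul, smul_eq_mul, smul_eq_mul]
    push_cast
    field_simp
  rw [e] at h3
  refine ⟨_, h3, fun z hz => ?_⟩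
  have hz0 : z ≠ 0 := by rintro rfl; simp at hz
  simp only [sum_zmod_prime l]
  have hu : ∀ u : (ZMod l)ˣ, φ ((-1 / z + (1 : ℝ) * ((u : ZMod l).val : ℕ)) / l) =
      z ^ (k + 1) * φ ((z + (1 : ℝ) * ((dualUnit 1 u : ZMod l).val : ℕ)) / l) := by
    intro u
    have h4 := H.shift_one l ((u : ZMod l).val : ℤ) ((dualUnit 1 u : ZMod l).val : ℤ) (by
      have := dualUnit_dvd_of (1 : (ZMod l)ˣ) 1 (by simp) u
      simpa using this) hz
    rw [zpow_natCast] at h4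
    simpa using h4
  rw [Finset.sum_congr rfl fun u _ => hu u, ← Finset.mul_sum,
    Equiv.sum_comp (dualUnit (1 : (ZMod l)ˣ)) fun u =>
      φ ((z + (1 : ℝ) * ((u : ZMod l).val : ℕ)) / l)]
  have hlz : 0 < ((l : ℂ) * z).im := by
    rw [← Complex.ofReal_natCast, Complex.im_ofReal_mul]; positivity
  have hzl : 0 < (z / (l : ℂ)).im := by
    rw [← Complex.ofReal_natCast, Complex.div_ofReal_im]; positivity
  have i1 := H.inv _ hlz
  have i2 := H.inv _ hzl
  have e1 : (-1 / z + (1 : ℝ) * ((0 : ZMod l).val : ℕ)) / l = -1 / (l * z) := by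
    rw [ZMod.val_zero]; push_cast; field_simp; ring
  have e2 : (l : ℂ) * (-1 / z) = -1 / (z / l) := by field_simp
  have e3 : (z + (1 : ℝ) * ((0 : ZMod l).val : ℕ)) / l = z / l := by
    rw [ZMod.val_zero]; push_cast; ring
  rw [e1, e2, e3, i1, i2, zpow_natCast, zpow_natCast, zpow_natCast, mul_pow, div_pow]
  field_simp
  ring

lemma pow_two_mul_mod_24 (l : ℕ) (hl : l.Prime) (hl5 : 5 ≤ l) (b : ℕ) : l ^ (2 * b) % 24 = 1 := by
  have h2 : l % 2 ≠ 0 := fun h => by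
    have := (Nat.prime_dvd_prime_iff_eq Nat.prime_two hl).mp (Nat.dvd_of_mod_eq_zero h)
    omega
  have h3 : l % 3 ≠ 0 := fun h => by
    have := (Nat.prime_dvd_prime_iff_eq Nat.prime_three hl).mp (Nat.dvd_of_mod_eq_zero h)
    omega
  have h1 : l ^ 2 % 24 = 1 := by
    have h4 : l % 24 = 1 ∨ l % 24 = 5 ∨ l % 24 = 7 ∨ l % 24 = 11 ∨ l % 24 = 13 ∨ l % 24 = 17 ∨
      l % 24 = 19 ∨ l % 24 = 23 := by omega
    rw [Nat.pow_mod]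
    rcases h4 with h | h | h | h | h | h | h | h <;> rw [h]
  rw [pow_mul, Nat.pow_mod, h1, one_pow]; norm_num

lemma deltaSeries_ne_zero : deltaSeries ℂ ≠ 0 := by
  intro h
  have h1 := partSeries_pow_mul ℂ 24 (1 : ℂ⟦X⟧)
  rw [deltaSeries] at h
  rcases mul_eq_zero.mp h with h | h
  · exact X_ne_zero h
  · have : pentagonalSeries ℂ = 0 := by simpa using h
    rw [this] at h1
    simp at h1

/-- The coefficients of `P h`, for `P` the partition series and `h` a level one form, vanish modulo
`l ^ b` in the progressions below. Modulo `l ^ b`, the series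
`∑ a((l m + 1) / 24) q ^ (m / 24)` formed from the coefficients `a` of `P h` is congruent to `η ^ r H` for some `0 ≤ r < 24` and some level one form `H`, to which `eta_tower_dvd`
applies. -/
theorem U_step (l : ℕ) [hl : Fact l.Prime] (hl5 : 5 ≤ l) (Q : ℕ) [Fact Q.Prime] (hlQ : l ≠ Q)
    (hQ : Nat.Coprime Q 12) {ks : ℕ} (hks : Even ks) (h : ℤ⟦X⟧)
    (hh : PowerSeries.map (Int.castRingHom ℂ) h ∈ MF ks) (b : ℕ) :
    ∃ K > 0, ∀ t > 0, ∀ n m : ℕ, 24 * n = l * (Q ^ (2 * (t * K) - 1) * m) + 1 → ¬ Q ∣ m →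
      ((l ^ b : ℕ) : ℤ) ∣ coeff n (partSeries ℤ * h) := by
  -- it suffices to treat a positive exponent
  suffices H : 0 < b → ∃ K > 0, ∀ t > 0, ∀ n m : ℕ,
      24 * n = l * (Q ^ (2 * (t * K) - 1) * m) + 1 → ¬ Q ∣ m →
      ((l ^ b : ℕ) : ℤ) ∣ coeff n (partSeries ℤ * h) by
    rcases Nat.eq_zero_or_pos b with rfl | hb
    · exact ⟨1, one_pos, fun _ _ _ _ _ _ => by simp⟩
    · exact H hb
  intro hb
  have hlp := hl.out.pos
  have hl0 := hl.out.ne_zero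
  -- multiplying by `E ^ (l ^ (2 b))`, a series in `X ^ l` modulo `l ^ (2 b)`, turns `P h` into
  -- `X ^ (-t₀) Δ ^ t₀ h`
  obtain ⟨t₀, ht₀⟩ : ∃ t₀, l ^ (2 * b) = 24 * t₀ + 1 :=
    ⟨l ^ (2 * b) / 24, by have := pow_two_mul_mod_24 l hl.out hl5 b; omega⟩
  obtain ⟨e, he⟩ : ∃ e, 2 * b = e + 1 := ⟨2 * b - 1, by omega⟩
  set L' := l ^ e with hL'
  have hLL : l * L' = 24 * t₀ + 1 := by rw [hL', ← pow_succ', ← he, ht₀]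
  have hbt : b ≤ t₀ := by
    have h1 : 25 ^ b ≤ l ^ (2 * b) := by
      rw [pow_mul]; exact Nat.pow_le_pow_left (by nlinarith) b
    have h2 : 1 + b * 24 ≤ 25 ^ b := by
      have := one_add_mul_le_pow (a := (24 : ℤ)) (by norm_num) b
      exact_mod_cast this
    omega
  -- `c = ⌈t₀ / l⌉` is a lower bound for the order of vanishing of `T_l G` at the cusp
  set c := (t₀ + l - 1) / l with hc
  have hc1 : l * c ≤ t₀ + l - 1 := Nat.mul_div_le _ _
  have hc2 : t₀ ≤ l * c := by
    have := Nat.lt_mul_div_succ (t₀ + l - 1) hlp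
    rw [← hc, mul_add] at this
    omega
  have hct : c ≤ t₀ := by
    by_contra hcon
    have : l * (t₀ + 1) ≤ l * c := Nat.mul_le_mul_left _ (by omega)
    have h3 := Nat.le_mul_of_pos_left t₀ hlp
    rw [mul_add] at this
    omega
  have hr1 : L' ≤ 24 * c := by
    by_contra hcon
    have : l * (24 * c + 1) ≤ l * L' := Nat.mul_le_mul_left _ (by omega)
    rw [hLL, mul_add, mul_left_comm] at this
    omega
  have hr2 : 24 * c < L' + 24 := by
    by_contra hcon
    have : l * (L' + 24) ≤ l * (24 * c) := Nat.mul_le_mul_left _ (by omega)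
    rw [mul_add, hLL, mul_left_comm] at this
    omega
  obtain ⟨r, hr⟩ : ∃ r, 24 * c = L' + r := ⟨24 * c - L', by omega⟩
  set E := pentagonalSeries ℤ with hE
  set P := partSeries ℤ with hP
  have hPE : E * P = 1 := pentagonal_mul_part ℤ
  have hPEn : ∀ n, E ^ n * P ^ n = 1 := fun n => by rw [← mul_pow, hPE, one_pow]
  -- the form `G = h Δ ^ t₀`
  obtain ⟨k, hk⟩ : ∃ k, ks + 12 * t₀ = k + 1 := ⟨ks + 12 * t₀ - 1, by omega⟩
  set G := h * deltaSeries ℤ ^ t₀ with hG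
  have hmapdelta : PowerSeries.map (Int.castRingHom ℂ) (deltaSeries ℤ) = deltaSeries ℂ := by
    rw [deltaSeries, deltaSeries, map_mul, map_pow, map_pentagonalSeries, map_X]
  have hGMF : PowerSeries.map (Int.castRingHom ℂ) G ∈ MF (k + 1 : ℕ) := by
    rw [hG, map_mul, map_pow, hmapdelta, ← hk]
    have := MF_mul hh (MF_pow delta_mem_MF t₀)
    convert this using 2
    push_cast; ring
  have hGX : G = X ^ t₀ * (P * h * E ^ (l ^ (e + 1))) := by
    rw [hG, deltaSeries, ← he, ht₀, mul_pow, ← pow_mul, pow_succ E (24 * t₀)]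
    linear_combination (-X ^ t₀ * h * E ^ (24 * t₀)) * hPE
  -- `T_l` and `U_l` agree modulo `l ^ k`, and `k ≥ b`
  set T := opT l k G with hT
  have hTMF : PowerSeries.map (Int.castRingHom ℂ) T ∈ MF (k + 1 : ℕ) := by
    rw [hT, map_opT]
    exact opT_mem_MF l k hGMF
  have hT0 : ∀ i < c, coeff i T = 0 := by
    intro i hi
    rw [hT, opT, map_add, coeff_opU, ← nsmul_eq_mul, map_nsmul, hGX, coeff_X_pow_mul', if_neg,
      map_mul, map_pow, expand_X, ← pow_mul, coeff_X_pow_mul', if_neg, smul_zero, add_zero]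
    · nlinarith
    · intro hcon
      have : l * (i + 1) ≤ l * c := Nat.mul_le_mul_left _ (by omega)
      rw [mul_add] at this
      omega
  obtain ⟨T', hT'⟩ := X_pow_dvd_iff.mpr hT0
  set H := P ^ (24 * c) * T' with hH
  have hTH : T = deltaSeries ℤ ^ c * H := by
    rw [hT', hH, deltaSeries, mul_pow, ← pow_mul]
    linear_combination (-X ^ c * T') * hPEn (24 * c)
  have hHMF : PowerSeries.map (Int.castRingHom ℂ) H ∈ MF (ks + 12 * (t₀ - c) : ℕ) := by
    obtain ⟨g', hg', hg2⟩ := MF_div_delta c hTMF fun i hi => by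
      rw [coeff_map, hT0 i hi, map_zero]
    rw [hTH, map_mul, map_pow, hmapdelta] at hg2
    have := mul_left_cancel₀ (pow_ne_zero c deltaSeries_ne_zero) hg2
    rw [this]
    convert hg' using 2
    push_cast [Nat.cast_sub hct]
    have : (ks : ℤ) + 12 * t₀ = k + 1 := by exact_mod_cast hk
    linarith
  obtain ⟨K, hK, hKt⟩ := eta_tower_dvd Q hl.out hlQ b (r := r) (by omega)
    (hks.add (Even.mul_right (by decide) _)) hQ H hHMF
  refine ⟨K, hK, fun t ht n m hnm hm => ?_⟩
  -- the congruence `U (X ^ t₀ P h) ≡ X ^ c E ^ r H`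
  have hcong : ((l ^ b : ℕ) : ℤ⟦X⟧) ∣ opU l (X ^ t₀ * (P * h)) - X ^ c * (E ^ r * H) := by
    have d1 : ((l ^ b : ℕ) : ℤ⟦X⟧) ∣ T - opU l G := by
      rw [hT, opT, add_sub_cancel_left]
      refine Dvd.dvd.mul_right ?_ _
      exact_mod_cast Nat.cast_dvd_cast (α := ℤ⟦X⟧) (pow_dvd_pow l (by omega : b ≤ k))
    have d2 : ((l ^ b : ℕ) : ℤ⟦X⟧) ∣ opU l G - E ^ L' * opU l (X ^ t₀ * (P * h)) := by
      have d3 : ((l ^ b : ℕ) : ℤ⟦X⟧) ∣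
          G - (E ^ L').expand l hl0 * (X ^ t₀ * (P * h)) := by
        have d4 := dvd_pow_sub_expand l E e
        have d5 : ((l ^ b : ℕ) : ℤ⟦X⟧) ∣ ((l ^ (e + 1) : ℕ) : ℤ⟦X⟧) :=
          Nat.cast_dvd_cast (pow_dvd_pow l (by omega))
        have d6 := (d5.trans d4).mul_left (X ^ t₀ * (P * h))
        convert d6 using 1
        rw [hGX, map_pow]; ring
      rw [← opU_expand_mul l hl0, natCast_dvd_iff_coeff]
      intro i
      have := (natCast_dvd_iff_coeff _ _).mp d3 (l * i)
      rwa [map_sub, coeff_opU, coeff_opU, ← map_sub]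
    have d7 := (d1.add d2).mul_left (P ^ L')
    rw [sub_add_sub_cancel, hTH, deltaSeries, mul_pow, ← pow_mul, hr, pow_add] at d7
    rw [← dvd_neg]
    convert d7 using 1
    linear_combination (opU l (X ^ t₀ * (P * h)) - X ^ c * (E ^ r * H)) * hPEn L'
  set M := Q ^ (2 * (t * K) - 1) * m with hM
  have hlN : l * (M + L') = 24 * (n + t₀) := by rw [mul_add, hLL, mul_add]; omega
  obtain ⟨N, hN⟩ : l ∣ n + t₀ := by
    refine (Nat.Coprime.dvd_of_dvd_mul_left ?_ (⟨_, hlN.symm⟩ : l ∣ 24 * (n + t₀)))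
    rw [Nat.Prime.coprime_iff_not_dvd hl.out]
    intro hd
    have h24 : l ∣ 2 ^ 3 * 3 := hd
    rcases (Nat.Prime.dvd_mul hl.out).mp h24 with h2 | h2
    · have := Nat.le_of_dvd (by norm_num) (hl.out.dvd_of_dvd_pow h2); omega
    · have := Nat.le_of_dvd (by norm_num) h2; omega
  have hN2 : 24 * N = M + L' := by
    rw [hN, mul_left_comm] at hlN
    exact (Nat.eq_of_mul_eq_mul_left hlp hlN).symm
  have h1 := (natCast_dvd_iff_coeff _ _).mp hcong N
  rw [map_sub, coeff_opU, ← hN, coeff_X_pow_mul] at h1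
  rw [coeff_X_pow_mul'] at h1
  split_ifs at h1 with hcN
  · have := hKt t ht (N - c) m (by omega) hm
    exact (dvd_iff_dvd_of_dvd_sub h1).mpr this
  · rwa [sub_zero] at h1

end UStep

/-! ### Derivatives of modular forms and `E₂` -/

section Theta

/-- The derivation `θ = q d/dq`. -/
noncomputable def theta (R : Type*) [CommRing R] : Derivation R R⟦X⟧ R⟦X⟧ :=
  (X : R⟦X⟧) • PowerSeries.derivative R

lemma coeff_theta (R : Type*) [CommRing R] (f : R⟦X⟧) (n : ℕ) :
    coeff n (theta R f) = n * coeff n f := by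
  rw [theta, Derivation.smul_apply, smul_eq_mul]
  cases n with
  | zero => simp
  | succ n => rw [coeff_succ_X_mul, coeff_derivative]; push_cast; ring

lemma map_theta {R S : Type*} [CommRing R] [CommRing S] (φ : R →+* S) (f : R⟦X⟧) :
    PowerSeries.map φ (theta R f) = theta S (PowerSeries.map φ f) := by
  ext n
  rw [coeff_map, coeff_theta, coeff_theta, coeff_map, map_mul, map_natCast]

/-- The normalised derivative `(2πi)⁻¹ d/dz` on functions of a complex variable. -/
noncomputable def nD (f : ℂ → ℂ) (z : ℂ) : ℂ := (2 * π * Complex.I)⁻¹ * deriv f z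

lemma two_pi_I_ne : (2 * π * Complex.I : ℂ) ≠ 0 := by
  simp [Real.pi_ne_zero]

lemma upper_mem_nhds {z : ℂ} (hz : 0 < z.im) : {w : ℂ | 0 < w.im} ∈ 𝓝 z :=
  (isOpen_lt continuous_const Complex.continuous_im).mem_nhds hz

/-- Termwise differentiation of a `q`-expansion. -/
lemma HasQ.theta {f : ℂ → ℂ} {g : ℂ⟦X⟧} (h : HasQ 1 f g) : HasQ 1 (nD f) (theta ℂ g) := by
  intro z hz
  set F : ℂ → ℂ := fun x => ∑' n : ℕ, coeff n g * x ^ n with hF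
  have hP := h.hasFPowerSeriesOnBall_disc one_pos
  have hq : qParam 1 z ∈ Metric.ball (0 : ℂ) 1 := by
    simpa using norm_qParam_lt_one one_pos hz
  have hq' : qParam 1 z ∈ Metric.eball (0 : ℂ) 1 := by
    rw [← ENNReal.ofReal_one, Metric.eball_ofReal]; exact hq
  have h1 := hP.fderiv.hasSum hq'
  rw [zero_add] at h1
  have h2 := h1.mapL (ContinuousLinearMap.apply ℂ ℂ (qParam 1 z))
  simp only [ContinuousLinearMap.apply_apply] at h2
  have hFd : DifferentiableAt ℂ F (qParam 1 z) :=
    (h.differentiableOn_disc one_pos).differentiableAt (Metric.isOpen_ball.mem_nhds hq)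
  have h3 : fderiv ℂ F (qParam 1 z) (qParam 1 z) = nD f z := by
    have e1 : HasDerivAt (qParam 1) (qParam 1 z * (2 * π * Complex.I)) z := by
      have : HasDerivAt (fun w : ℂ => Complex.exp (2 * π * Complex.I * w / (1 : ℝ)))
        (Complex.exp (2 * π * Complex.I * z / (1 : ℝ)) * (2 * π * Complex.I * 1 / (1 : ℝ))) z :=
        (((hasDerivAt_id z).const_mul _).div_const _).cexp
      have e0 : qParam (1 : ℝ) = fun w : ℂ => Complex.exp (2 * π * Complex.I * w / (1 : ℝ)) := rfl
      rw [e0]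
      refine this.congr_deriv ?_
      simp
    have e2 : HasDerivAt f (deriv F (qParam 1 z) * (qParam 1 z * (2 * π * Complex.I))) z := by
      refine (hFd.hasDerivAt.comp z e1).congr_of_eventuallyEq ?_
      filter_upwards [upper_mem_nhds hz] with w hw
      exact (h w hw).tsum_eq.symm
    rw [nD, e2.deriv, ← fderiv_apply_one_eq_deriv]
    have : fderiv ℂ F (qParam 1 z) (qParam 1 z) =
      fderiv ℂ F (qParam 1 z) (qParam 1 z • 1) := by simp
    rw [this, map_smul, smul_eq_mul]
    field_simp [two_pi_I_ne]
  rw [← h3]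
  rw [← hasSum_nat_add_iff' 1]
  simp only [Finset.sum_range_one, coeff_theta, Nat.cast_zero, zero_mul, sub_zero]
  refine h2.congr_fun fun n => ?_
  rw [FormalMultilinearSeries.derivSeries_apply_diag]
  simp only [FormalMultilinearSeries.ofScalars, smul_apply,
    ContinuousMultilinearMap.mkPiAlgebraFin_apply, List.ofFn_const, List.prod_replicate]
  simp [nsmul_eq_mul]
  ring

lemma hasDerivAt_neg_one_div {z : ℂ} (hz0 : z ≠ 0) :
    HasDerivAt (fun w : ℂ => -1 / w) (1 / z ^ 2) z := by
  refine HasDerivAt.congr_deriv ((hasDerivAt_const z (-1 : ℂ)).fun_div (hasDerivAt_id' z) hz0) ?_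
  simp

/-- Differentiating `f (-1/z) = z ^ k f z`. -/
lemma IsMF.nD_inv {k : ℤ} {f : ℂ → ℂ} {g : ℂ⟦X⟧} (h : IsMF k f g) {z : ℂ} (hz : 0 < z.im) :
    nD f (-1 / z) = z ^ (k + 2) * nD f z + k * (2 * π * Complex.I)⁻¹ * z ^ (k + 1) * f z := by
  have hz0 : z ≠ 0 := by rintro rfl; simp at hz
  have h1 : HasDerivAt (fun w : ℂ => f (-1 / w)) (deriv f (-1 / z) * (1 / z ^ 2)) z := by
    have e1 := hasDerivAt_neg_one_div hz0
    exact (h.hasQ.differentiableAt one_pos (im_neg_one_div hz)).hasDerivAt.comp z e1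
  have h2 : HasDerivAt (fun w : ℂ => f (-1 / w))
      (k * z ^ (k - 1) * f z + z ^ k * deriv f z) z := by
    refine ((hasDerivAt_zpow k z (Or.inl hz0)).mul
      (h.hasQ.differentiableAt one_pos hz).hasDerivAt).congr_of_eventuallyEq ?_
    filter_upwards [upper_mem_nhds hz] with w hw
    exact h.inv w hw
  have h3 := h1.unique h2
  have h4 : deriv f (-1 / z) = z ^ 2 * (k * z ^ (k - 1) * f z + z ^ k * deriv f z) := by
    rw [← h3]; field_simp
  rw [nD, nD, h4, zpow_sub_one₀ hz0, zpow_add₀ hz0, zpow_add_one₀ hz0]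
  rw [show z ^ (2 : ℤ) = z ^ 2 from zpow_ofNat z 2]
  field_simp
  ring

/-- The Eisenstein series `E₂` as a function on `ℂ`. -/
noncomputable def e2Fun (z : ℂ) : ℂ := EisensteinSeries.E2 (UpperHalfPlane.ofComplex z)

/-- The `q`-expansion of `E₂`. -/
noncomputable def e2Series (R : Type*) [CommRing R] : R⟦X⟧ :=
  PowerSeries.mk fun n => if n = 0 then 1 else -24 * (ArithmeticFunction.sigma 1 n : R)

lemma hasQ_e2 : HasQ 1 e2Fun (e2Series ℂ) := by
  intro z hz
  have := EisensteinSeries.hasSum_qExpansion_E2 (z := UpperHalfPlane.ofComplex z)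
  rw [UpperHalfPlane.ofComplex_apply_of_im_pos hz] at this
  rw [e2Fun, UpperHalfPlane.ofComplex_apply_of_im_pos hz]
  refine this.congr_fun fun n => ?_
  rw [e2Series, coeff_mk, smul_eq_mul]
  simp [qParam]

/-- `E₂` is the logarithmic derivative of the discriminant. -/
lemma nD_delta {z : ℂ} (hz : 0 < z.im) :
    nD (fun z => ModularForm.eta z ^ 24) z = ModularForm.eta z ^ 24 * e2Fun z := by
  have h1 := ModularForm.logDeriv_eta_eq_E2 (UpperHalfPlane.ofComplex z)
  rw [UpperHalfPlane.ofComplex_apply_of_im_pos hz] at h1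
  change logDeriv ModularForm.eta z = _ at h1
  have hne : ModularForm.eta z ≠ 0 := ModularForm.eta_ne_zero (z := z) hz
  have hd : DifferentiableAt ℂ ModularForm.eta z :=
    ModularForm.differentiableAt_eta_of_mem_upperHalfPlaneSet hz
  rw [logDeriv_apply, div_eq_iff hne] at h1
  rw [nD, e2Fun, UpperHalfPlane.ofComplex_apply_of_im_pos hz, (hd.hasDerivAt.fun_pow 24).deriv, h1]
  field_simp
  norm_num
  ring

lemma theta_deltaSeries : theta ℂ (deltaSeries ℂ) = deltaSeries ℂ * e2Series ℂ :=
  isMF_delta.hasQ.theta.unique one_pos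
    ((isMF_delta.hasQ.mul hasQ_e2).congr fun _ hz => nD_delta hz)

/-- The quasimodular transformation law of `E₂`. -/
lemma e2Fun_inv {z : ℂ} (hz : 0 < z.im) :
    e2Fun (-1 / z) = z ^ 2 * e2Fun z + 12 * (2 * π * Complex.I)⁻¹ * z := by
  have hz0 : z ≠ 0 := by rintro rfl; simp at hz
  have h1 := isMF_delta.nD_inv hz
  have h2 := isMF_delta.inv z hz
  have hne : ModularForm.eta z ≠ 0 := ModularForm.eta_ne_zero (z := z) hz
  rw [nD_delta hz, nD_delta (im_neg_one_div hz)] at h1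
  rw [h2] at h1
  rw [show z ^ (12 : ℤ) = z ^ 12 from zpow_ofNat z 12,
    show z ^ ((12 : ℤ) + 2) = z ^ 14 from zpow_ofNat z 14,
    show z ^ ((12 : ℤ) + 1) = z ^ 13 from zpow_ofNat z 13] at h1
  have h3 : z ^ 12 * ModularForm.eta z ^ 24 ≠ 0 := by positivity
  apply mul_left_cancel₀ h3
  rw [h1]
  push_cast
  ring

/-- The Serre derivative raises the weight by two. -/
lemma serre_mem_MF {k : ℕ} {g : ℂ⟦X⟧} (hg : g ∈ MF k) :
    theta ℂ g - (k / 12 : ℂ) • (e2Series ℂ * g) ∈ MF (k + 2 : ℕ) := by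
  obtain ⟨f, h⟩ := hg
  refine ⟨_, h.hasQ.theta.sub ((hasQ_e2.mul h.hasQ).smul _), fun z hz => ?_⟩
  have hz0 : z ≠ 0 := by rintro rfl; simp at hz
  rw [h.nD_inv hz, e2Fun_inv hz, h.inv z hz]
  push_cast
  rw [zpow_add₀ hz0, zpow_add_one₀ hz0, show z ^ (2 : ℤ) = z ^ 2 from zpow_ofNat z 2]
  field_simp [two_pi_I_ne]
  ring

/-- `E₂² - 12 θ E₂` is modular of weight four. -/
lemma e2_sq_mem_MF : e2Series ℂ ^ 2 - (12 : ℂ) • theta ℂ (e2Series ℂ) ∈ MF (4 : ℕ) := by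
  refine ⟨_, (hasQ_e2.pow 2).sub (hasQ_e2.theta.smul _), fun z hz => ?_⟩
  have hz0 : z ≠ 0 := by rintro rfl; simp at hz
  have h1 : HasDerivAt (fun w : ℂ => e2Fun (-1 / w)) (deriv e2Fun (-1 / z) * (1 / z ^ 2)) z := by
    have e1 := hasDerivAt_neg_one_div hz0
    exact (hasQ_e2.differentiableAt one_pos (im_neg_one_div hz)).hasDerivAt.comp z e1
  have h2 : HasDerivAt (fun w : ℂ => e2Fun (-1 / w))
      (2 * z * e2Fun z + z ^ 2 * deriv e2Fun z + 12 * (2 * π * Complex.I)⁻¹) z := by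
    have e1 : HasDerivAt (fun w : ℂ => w ^ 2) (2 * z) z := by simpa using hasDerivAt_pow 2 z
    have e2 := (e1.mul (hasQ_e2.differentiableAt one_pos hz).hasDerivAt).add
      ((hasDerivAt_id z).const_mul (12 * (2 * π * Complex.I)⁻¹))
    rw [mul_one] at e2
    refine e2.congr_of_eventuallyEq ?_
    filter_upwards [upper_mem_nhds hz] with w hw
    exact e2Fun_inv hw
  have h4 : deriv e2Fun (-1 / z) = z ^ 2 *
      (2 * z * e2Fun z + z ^ 2 * deriv e2Fun z + 12 * (2 * π * Complex.I)⁻¹) := by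
    rw [← h1.unique h2]; field_simp
  rw [nD, nD, h4, e2Fun_inv hz, show z ^ ((4 : ℕ) : ℤ) = z ^ 4 from zpow_natCast z 4]
  ring

lemma map_e2Series {R S : Type*} [CommRing R] [CommRing S] (φ : R →+* S) :
    PowerSeries.map φ (e2Series R) = e2Series S := by
  ext n
  rw [coeff_map, e2Series, e2Series, coeff_mk, coeff_mk]
  split_ifs
  · exact map_one φ
  · rw [map_mul, map_neg, map_ofNat, map_natCast]

lemma map_injective_of {R S : Type*} [CommRing R] [CommRing S] (φ : R →+* S)
    (hφ : Function.Injective φ) : Function.Injective (PowerSeries.map φ) := by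
  intro f g hfg
  ext n
  apply hφ
  rw [← coeff_map, ← coeff_map, hfg]

lemma theta_pentagonal_complex : 24 * theta ℂ (pentagonalSeries ℂ) =
    pentagonalSeries ℂ * (e2Series ℂ - 1) := by
  have h := theta_deltaSeries
  have hX : theta ℂ (X : ℂ⟦X⟧) = X := by
    rw [theta, Derivation.smul_apply, derivative_X, smul_eq_mul, mul_one]
  rw [deltaSeries, Derivation.leibniz, Derivation.leibniz_pow, hX] at h
  have hE : pentagonalSeries ℂ ≠ 0 := fun h0 => by
    have := pentagonal_mul_part ℂ
    rw [h0, zero_mul] at this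
    exact zero_ne_one this
  have h1 : (X * pentagonalSeries ℂ ^ 23 : ℂ⟦X⟧) ≠ 0 := mul_ne_zero X_ne_zero (pow_ne_zero _ hE)
  apply mul_left_cancel₀ h1
  simp only [smul_eq_mul, nsmul_eq_mul, Nat.cast_ofNat, Nat.reduceSub] at h
  linear_combination h

/-- Logarithmic derivative of the partition generating function. -/
lemma theta_part : 24 * theta ℚ (partSeries ℚ) = partSeries ℚ * (1 - e2Series ℚ) := by
  have h : 24 * theta ℚ (pentagonalSeries ℚ) = pentagonalSeries ℚ * (e2Series ℚ - 1) := by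
    apply map_injective_of (algebraMap ℚ ℂ) (algebraMap ℚ ℂ).injective
    have := theta_pentagonal_complex
    rw [map_mul, map_mul, map_sub, map_one, map_ofNat, map_theta, map_pentagonalSeries,
      map_e2Series, this]
  have h1 := pentagonal_mul_part ℚ
  have h2 := congrArg (theta ℚ) h1
  rw [Derivation.leibniz, Derivation.map_one_eq_zero, smul_eq_mul, smul_eq_mul] at h2
  linear_combination 24 * partSeries ℚ * h2 - partSeries ℚ ^ 2 * h +
    (-24 * theta ℚ (partSeries ℚ) + partSeries ℚ * (1 - e2Series ℚ)) * h1

end Theta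

/-! ### Quasimodular forms and good series -/

section Quasi

/-- Rational power series with bounded denominators. -/
def boundedDen : Subalgebra ℚ ℚ⟦X⟧ where
  carrier := {h | ∃ D : ℤ, D ≠ 0 ∧ ∃ g : ℤ⟦X⟧, (D : ℚ) • h = PowerSeries.map (Int.castRingHom ℚ) g}
  mul_mem' := by
    rintro h h' ⟨D, hD, g, hg⟩ ⟨D', hD', g', hg'⟩
    refine ⟨D * D', mul_ne_zero hD hD', g * g', ?_⟩
    rw [map_mul, ← hg, ← hg', smul_mul_smul_comm, Int.cast_mul]
  add_mem' := by
    rintro h h' ⟨D, hD, g, hg⟩ ⟨D', hD', g', hg'⟩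
    refine ⟨D * D', mul_ne_zero hD hD', D' • g + D • g', ?_⟩
    rw [map_add, map_zsmul, map_zsmul, ← hg, ← hg', smul_add, Int.cast_mul, ← Int.cast_smul_eq_zsmul ℚ D',
      ← Int.cast_smul_eq_zsmul ℚ D, smul_smul, smul_smul, mul_comm (D' : ℚ)]
  algebraMap_mem' := by
    intro r
    refine ⟨r.den, by exact_mod_cast r.den_ne_zero, PowerSeries.C r.num, ?_⟩
    rw [map_C, Algebra.algebraMap_eq_smul_one, smul_smul, ← Algebra.algebraMap_eq_smul_one]
    change PowerSeries.C _ = _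
    congr 1
    simp [mul_comm, Rat.mul_den_eq_num]

lemma map_int_mem_boundedDen (g : ℤ⟦X⟧) :
    PowerSeries.map (Int.castRingHom ℚ) g ∈ boundedDen :=
  ⟨1, one_ne_zero, g, by simp⟩

lemma theta_mem_boundedDen {h : ℚ⟦X⟧} (hh : h ∈ boundedDen) : theta ℚ h ∈ boundedDen := by
  obtain ⟨D, hD, g, hg⟩ := hh
  refine ⟨D, hD, theta ℤ g, ?_⟩
  rw [map_theta, ← hg, Derivation.map_smul]

lemma e2_mem_boundedDen : e2Series ℚ ∈ boundedDen := by
  rw [← map_e2Series (Int.castRingHom ℚ)]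
  exact map_int_mem_boundedDen _

/-- Modular forms of weight `k` and level one with rational coefficients of bounded denominators. -/
structure IsRMF (k : ℕ) (h : ℚ⟦X⟧) : Prop where
  mem : PowerSeries.map (algebraMap ℚ ℂ) h ∈ MF k
  den : h ∈ boundedDen

lemma IsRMF.mul {k k' : ℕ} {h h' : ℚ⟦X⟧} (H : IsRMF k h) (H' : IsRMF k' h') :
    IsRMF (k + k') (h * h') := by
  refine ⟨?_, mul_mem H.den H'.den⟩
  rw [map_mul, Nat.cast_add]
  exact MF_mul H.mem H'.mem

lemma isRMF_one : IsRMF 0 1 := ⟨by simpa using one_mem_MF, one_mem _⟩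

lemma map_smul_rat (c : ℚ) (f : ℚ⟦X⟧) : PowerSeries.map (algebraMap ℚ ℂ) (c • f) =
    (c : ℂ) • PowerSeries.map (algebraMap ℚ ℂ) f := by
  ext n
  simp

lemma IsRMF.serre {k : ℕ} {h : ℚ⟦X⟧} (H : IsRMF k h) :
    IsRMF (k + 2) (theta ℚ h - (k / 12 : ℚ) • (e2Series ℚ * h)) := by
  refine ⟨?_, sub_mem (theta_mem_boundedDen H.den)
    (Subalgebra.smul_mem _ (mul_mem e2_mem_boundedDen H.den) _)⟩
  rw [map_sub, map_theta, map_smul_rat, map_mul, map_e2Series]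
  have := serre_mem_MF H.mem
  push_cast at this ⊢
  exact this

lemma isRMF_e2_sq : IsRMF 4 (e2Series ℚ ^ 2 - (12 : ℚ) • theta ℚ (e2Series ℚ)) := by
  refine ⟨?_, sub_mem (pow_mem e2_mem_boundedDen 2)
    (Subalgebra.smul_mem _ (theta_mem_boundedDen e2_mem_boundedDen) _)⟩
  rw [map_sub, map_pow, map_smul_rat, map_theta, map_e2Series]
  have := e2_sq_mem_MF
  push_cast at this ⊢
  exact this

lemma bernoulli_even_ne_zero {k : ℕ} (hk : k ≠ 0) : bernoulli (2 * k) ≠ 0 := by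
  intro h
  have h1 := riemannZeta_two_mul_nat hk
  rw [h] at h1
  have h2 : riemannZeta (2 * k) ≠ 0 := by
    refine riemannZeta_ne_zero_of_one_lt_re ?_
    have : (1 : ℝ) ≤ k := by exact_mod_cast Nat.one_le_iff_ne_zero.mpr hk
    simp; linarith
  simp at h1
  exact h2 h1

/-- For odd `j ≥ 3`, `sigmaSeries j` is a combination of `1` and an Eisenstein series. -/
lemma sigmaSeries_eq {j : ℕ} (hj : 3 ≤ j) (hodd : Odd j) :
    ∃ (c d : ℚ) (h : ℚ⟦X⟧), IsRMF (j + 1) h ∧ sigmaSeries j = c • h + d • 1 := by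
  have hk2 : Even (j + 1) := hodd.add_one
  obtain ⟨s, hs⟩ := hk2.two_dvd
  set β : ℚ := -(2 * (j + 1 : ℕ) / bernoulli (j + 1)) with hβ
  have hB : bernoulli (j + 1) ≠ 0 := by rw [hs]; exact bernoulli_even_ne_zero (by omega)
  have hβ0 : β ≠ 0 := by
    rw [hβ, neg_ne_zero]
    refine div_ne_zero ?_ hB
    positivity
  set S : ℤ⟦X⟧ := PowerSeries.mk fun n => (ArithmeticFunction.sigma j n : ℤ) with hS
  have hsig : sigmaSeries j = (2 : ℚ) • PowerSeries.map (Int.castRingHom ℚ) S := by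
    ext n
    rw [sigmaSeries, coeff_mk, coeff_smul, coeff_map, coeff_mk, hodd.neg_one_pow,
      smul_eq_mul, eq_intCast, Int.cast_natCast]
    ring
  refine ⟨2 / β, -(2 / β), β • PowerSeries.map (Int.castRingHom ℚ) S + 1, ⟨?_, ?_⟩, ?_⟩
  · have h1 := qExpansion_mem_MF (ModularForm.E (show 3 ≤ j + 1 by omega))
    convert h1 using 1
    ext n
    rw [EisensteinSeries.E_qExpansion_coeff _ hk2, coeff_map, map_add, coeff_smul, coeff_map,
      coeff_mk, coeff_one]
    split_ifs with hn
    · subst hn; simp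
    · simp [hβ]
  · exact add_mem (Subalgebra.smul_mem _ (map_int_mem_boundedDen S) _) (one_mem _)
  · rw [hsig, smul_add, smul_smul, div_mul_cancel₀ _ hβ0, add_assoc, ← add_smul, add_neg_cancel,
      zero_smul, add_zero]

/-- The algebra of quasimodular forms, as the span of the products `E₂ ^ j h` with `h` modular of
even weight. -/
def quasiSpan : Submodule ℚ ℚ⟦X⟧ :=
  Submodule.span ℚ {y | ∃ (j k : ℕ) (h : ℚ⟦X⟧), Even k ∧ IsRMF k h ∧ y = e2Series ℚ ^ j * h}

lemma quasi_mem {k : ℕ} {h : ℚ⟦X⟧} (hk : Even k) (H : IsRMF k h) (j : ℕ) :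
    e2Series ℚ ^ j * h ∈ quasiSpan := Submodule.subset_span ⟨j, k, h, hk, H, rfl⟩

lemma quasi_one : (1 : ℚ⟦X⟧) ∈ quasiSpan := by
  simpa using quasi_mem (by decide) isRMF_one 0

lemma quasi_mul {x y : ℚ⟦X⟧} (hx : x ∈ quasiSpan) (hy : y ∈ quasiSpan) : x * y ∈ quasiSpan := by
  have h := Submodule.mul_mem_mul hx hy
  rw [quasiSpan, Submodule.span_mul_span] at h
  refine Submodule.span_mono ?_ h
  rintro _ ⟨_, ⟨j, k, h, hk, H, rfl⟩, _, ⟨j', k', h', hk', H', rfl⟩, rfl⟩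
  exact ⟨j + j', k + k', h * h', hk.add hk', H.mul H', by simp only; ring⟩

/-- `sigmaSeries j` is zero for even `j`, a combination of `1` and `E₂` for `j = 1`, and a
combination of `1` and a holomorphic Eisenstein series for odd `j ≥ 3`. -/
lemma quasi_sigma (j : ℕ) : sigmaSeries j ∈ quasiSpan := by
  rcases Nat.even_or_odd j with he | ho
  · have : sigmaSeries j = 0 := by
      ext n; rw [sigmaSeries, coeff_mk, he.neg_one_pow]; simp
    rw [this]; exact zero_mem _
  · rcases le_or_gt 3 j with hj | hj
    · obtain ⟨c, d, h, H, e⟩ := sigmaSeries_eq hj ho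
      rw [e]
      refine add_mem (Submodule.smul_mem _ _ ?_) (Submodule.smul_mem _ _ quasi_one)
      simpa using quasi_mem ho.add_one H 0
    · obtain rfl : j = 1 := by
        obtain ⟨s, hs⟩ := ho; omega
      have : sigmaSeries 1 = (1 / 12 : ℚ) • (1 : ℚ⟦X⟧) - (1 / 12 : ℚ) • (e2Series ℚ ^ 1 * 1) := by
        ext n
        simp only [sigmaSeries, e2Series, map_sub, coeff_smul, pow_one, mul_one, coeff_mk,
          coeff_one]
        split_ifs with h
        · subst h; simp
        · simp; ring
      rw [this]
      exact sub_mem (Submodule.smul_mem _ _ quasi_one)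
        (Submodule.smul_mem _ _ (quasi_mem (by decide) isRMF_one 1))

lemma aeval_mem_quasi (p : MvPolynomial ℕ ℚ) : MvPolynomial.aeval sigmaSeries p ∈ quasiSpan := by
  induction p using MvPolynomial.induction_on with
  | C a =>
    rw [MvPolynomial.aeval_C, Algebra.algebraMap_eq_smul_one]
    exact Submodule.smul_mem _ _ quasi_one
  | add p q hp hq => rw [map_add]; exact add_mem hp hq
  | mul_X p i hp =>
    rw [map_mul, MvPolynomial.aeval_X]
    exact quasi_mul hp (quasi_sigma i)

variable (l : ℕ) [hl : Fact l.Prime] (Q : ℕ)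

/-- The rational power series such that, for every `i`, the coefficients at all `n` for which
`24 n - 1 = l Q ^ (2 t K - 1) m` with `t > 0` and `Q ∤ m` are divisible by `l ^ i`, for a suitable
`K` depending on `i`. -/
def goodSeries : Submodule ℚ ℚ⟦X⟧ where
  carrier := {y | ∀ i : ℕ, ∃ K > 0, ∀ t > 0, ∀ n m : ℕ,
    24 * n = l * (Q ^ (2 * (t * K) - 1) * m) + 1 → ¬ Q ∣ m →
      ‖((coeff n y : ℚ) : ℚ_[l])‖ ≤ (l : ℝ) ^ (-(i : ℤ))}
  zero_mem' := fun i => ⟨1, one_pos, fun _ _ _ _ _ _ => by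
    rw [map_zero, Rat.cast_zero, norm_zero]; positivity⟩
  add_mem' := by
    intro x y hx hy i
    obtain ⟨K, hK, h⟩ := hx i
    obtain ⟨K', hK', h'⟩ := hy i
    refine ⟨K * K', Nat.mul_pos hK hK', fun t ht n m hn hm => ?_⟩
    rw [map_add, Rat.cast_add]
    refine (Padic.nonarchimedean _ _).trans (max_le ?_ ?_)
    · exact h (t * K') (Nat.mul_pos ht hK') n m (by rw [hn]; ring_nf) hm
    · exact h' (t * K) (Nat.mul_pos ht hK) n m (by rw [hn]; ring_nf) hm
  smul_mem' := by
    intro c x hx i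
    have hl1 : (1 : ℝ) < l := by exact_mod_cast hl.out.one_lt
    obtain ⟨e, he⟩ := pow_unbounded_of_one_lt ‖(c : ℚ_[l])‖ hl1
    obtain ⟨K, hK, h⟩ := hx (i + e)
    refine ⟨K, hK, fun t ht n m hn hm => ?_⟩
    rw [coeff_smul, smul_eq_mul, Rat.cast_mul, norm_mul]
    have h1 := h t ht n m hn hm
    have h2 := mul_le_mul he.le h1 (norm_nonneg _) (by positivity)
    refine h2.trans_eq ?_
    rw [← zpow_natCast, ← zpow_add₀ (by positivity)]
    congr 1; push_cast; ring

variable {l Q}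

/-- At the exponents `n` in question `24 n - 1` is an `l`-adic integer. -/
lemma good_theta {y : ℚ⟦X⟧} (hy : y ∈ goodSeries l Q) :
    (24 : ℚ) • theta ℚ y - y ∈ goodSeries l Q := by
  intro i
  obtain ⟨K, hK, h⟩ := hy i
  refine ⟨K, hK, fun t ht n m hn hm => ?_⟩
  have h1 := h t ht n m hn hm
  have e : coeff n ((24 : ℚ) • theta ℚ y - y) =
      ((l * (Q ^ (2 * (t * K) - 1) * m) : ℕ) : ℚ) * coeff n y := by
    rw [map_sub, coeff_smul, coeff_theta, smul_eq_mul]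
    have : (24 * n : ℚ) = ((l * (Q ^ (2 * (t * K) - 1) * m) : ℕ) : ℚ) + 1 := by exact_mod_cast hn
    linear_combination coeff n y * this
  rw [e, Rat.cast_mul, norm_mul, Rat.cast_natCast]
  refine le_trans ?_ h1
  refine mul_le_of_le_one_left (norm_nonneg _) ?_
  exact_mod_cast Padic.norm_int_le_one (p := l) ((l * (Q ^ (2 * (t * K) - 1) * m) : ℕ) : ℤ)

lemma good_modular [Fact Q.Prime] (hl5 : 5 ≤ l) (hlQ : l ≠ Q) (hQ : Nat.Coprime Q 12)
    {k : ℕ} (hk : Even k) {h : ℚ⟦X⟧} (H : IsRMF k h) : partSeries ℚ * h ∈ goodSeries l Q := by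
  obtain ⟨D, hD, g, hg⟩ := H.den
  have hD' : (D : ℚ) ≠ 0 := by exact_mod_cast hD
  have e : partSeries ℚ * h = (D : ℚ)⁻¹ • PowerSeries.map (Int.castRingHom ℚ) (partSeries ℤ * g) := by
    rw [map_mul, map_partSeries, ← hg, mul_smul_comm, smul_smul, inv_mul_cancel₀ hD', one_smul]
  rw [e]
  refine Submodule.smul_mem _ _ fun i => ?_
  have hgMF : PowerSeries.map (Int.castRingHom ℂ) g ∈ MF k := by
    have e2 : PowerSeries.map (Int.castRingHom ℂ) g =
        ((D : ℚ) : ℂ) • PowerSeries.map (algebraMap ℚ ℂ) h := by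
      rw [← map_smul_rat, hg]
      ext n
      simp
    rw [e2]
    exact Submodule.smul_mem _ _ H.mem
  obtain ⟨K, hK, hh⟩ := U_step l hl5 Q hlQ hQ hk g hgMF i
  refine ⟨K, hK, fun t ht n m hn hm => ?_⟩
  have := hh t ht n m hn hm
  rw [coeff_map, eq_intCast, Rat.cast_intCast]
  rw [Padic.norm_int_le_pow_iff_dvd]
  exact_mod_cast this

/-- The weight `2 j + 2 k - 1` is odd, so `E₂ ^ (j + 1) h` can be solved for. -/
lemma good_step (j k : ℕ) (h : ℚ⟦X⟧) :
    ((2 * j + 2 * k - 1 : ℤ) : ℚ) • (partSeries ℚ * (e2Series ℚ ^ (j + 1) * h)) =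
      ((24 : ℚ) • theta ℚ (partSeries ℚ * (e2Series ℚ ^ j * h)) - partSeries ℚ * (e2Series ℚ ^ j * h))
      + ((2 * j : ℕ) : ℚ) • (partSeries ℚ * (e2Series ℚ ^ (j - 1) *
          ((e2Series ℚ ^ 2 - (12 : ℚ) • theta ℚ (e2Series ℚ)) * h)))
      - (24 : ℚ) • (partSeries ℚ * (e2Series ℚ ^ j *
          (theta ℚ h - (k / 12 : ℚ) • (e2Series ℚ * h)))) := by
  have h1 := theta_part
  rw [Derivation.leibniz, Derivation.leibniz, Derivation.leibniz_pow]
  simp only [smul_eq_mul, nsmul_eq_mul, Algebra.smul_def]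
  have e24 : algebraMap ℚ ℚ⟦X⟧ 24 = 24 := map_ofNat _ _
  have e12 : algebraMap ℚ ℚ⟦X⟧ 12 = 12 := map_ofNat _ _
  have ek : 12 * algebraMap ℚ ℚ⟦X⟧ (k / 12) = k := by
    rw [← e12, ← map_mul, mul_div_cancel₀ _ (by norm_num), map_natCast]
  have ej : algebraMap ℚ ℚ⟦X⟧ ((2 * j + 2 * k - 1 : ℤ) : ℚ) = 2 * j + 2 * k - 1 := by
    rw [map_intCast]; push_cast; ring
  have ej' : algebraMap ℚ ℚ⟦X⟧ ((2 * j : ℕ) : ℚ) = 2 * j := by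
    rw [map_natCast]; push_cast; ring
  rw [e24, e12, ej, ej']
  cases j with
  | zero =>
    simp only [Nat.cast_zero, mul_zero, zero_mul, zero_add, pow_zero, pow_one, one_mul, add_zero]
    linear_combination (-h) * h1 + (-2 * partSeries ℚ * e2Series ℚ * h) * ek
  | succ j =>
    rw [Nat.add_sub_cancel]
    push_cast
    linear_combination (-h * e2Series ℚ ^ (j + 1)) * h1 +
      (-2 * partSeries ℚ * e2Series ℚ ^ (j + 2) * h) * ek

/-- Products of the partition series with quasimodular forms are good: by induction on the power of
`E₂`, since `24 θ - 1` maps `P E₂ ^ j h` to a nonzero multiple of `P E₂ ^ (j + 1) h` modulo lower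
powers of `E₂`. -/
theorem good_quasi [Fact Q.Prime] (hl5 : 5 ≤ l) (hlQ : l ≠ Q) (hQ : Nat.Coprime Q 12)
    {y : ℚ⟦X⟧} (hy : y ∈ quasiSpan) : partSeries ℚ * y ∈ goodSeries l Q := by
  have key : ∀ j : ℕ, ∀ j' ≤ j, ∀ (k : ℕ) (h : ℚ⟦X⟧), Even k → IsRMF k h →
      partSeries ℚ * (e2Series ℚ ^ j' * h) ∈ goodSeries l Q := by
    intro j
    induction j with
    | zero =>
      intro j' hj' k h hk H
      obtain rfl : j' = 0 := by omega
      simpa using good_modular hl5 hlQ hQ hk H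
    | succ j ih =>
      intro j' hj' k h hk H
      rcases Nat.lt_or_ge j' (j + 1) with hlt | hge
      · exact ih j' (by omega) k h hk H
      obtain rfl : j' = j + 1 := by omega
      have hne : ((2 * j + 2 * k - 1 : ℤ) : ℚ) ≠ 0 := by
        have : (2 * j + 2 * k - 1 : ℤ) ≠ 0 := by omega
        exact_mod_cast this
      have h1 : ((2 * j + 2 * k - 1 : ℤ) : ℚ) • (partSeries ℚ * (e2Series ℚ ^ (j + 1) * h)) ∈
          goodSeries l Q := by
        rw [good_step]
        refine sub_mem (add_mem (good_theta (ih j le_rfl k h hk H)) (Submodule.smul_mem _ _ ?_))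
          (Submodule.smul_mem _ _ ?_)
        · exact ih (j - 1) (by omega) (4 + k) _ ((by decide : Even 4).add hk) (isRMF_e2_sq.mul H)
        · exact ih j le_rfl (k + 2) _ (hk.add (by decide)) H.serre
      exact (Submodule.smul_mem_iff _ hne).mp h1
  induction hy using Submodule.span_induction with
  | mem y hy =>
    obtain ⟨j, k, h, hk, H, rfl⟩ := hy
    exact key j j le_rfl k h hk H
  | zero => rw [mul_zero]; exact zero_mem _
  | add x y _ _ hx hy => rw [mul_add]; exact add_mem hx hy
  | smul c x _ hx => rw [mul_smul_comm]; exact Submodule.smul_mem _ _ hx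

end Quasi

/-! ### From crank moments to residue classes -/

section Assembly

/-- The truncated product `aP ℚ N` agrees with `∏ 1 / (1 - Xⁿ)` up to degree `N`. -/
lemma coeff_aP_mul {n N : ℕ} (h : n ≤ N) (y : ℚ⟦X⟧) :
    coeff n (aP ℚ N * y) = coeff n (partSeries ℚ * y) := by
  have h1 : aP ℚ N * ∏ i ∈ Finset.range N, (1 - (X : ℚ⟦X⟧) ^ (i + 1)) = 1 := by
    rw [aP, ← Finset.prod_mul_distrib]
    refine Finset.prod_eq_one fun i _ => ?_
    have := geo_mul (1 : ℚ) i
    rwa [map_one, one_mul] at this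
  have h2 := pentagonal_mul_part ℚ
  have h3 : (X : ℚ⟦X⟧) ^ (N + 1) ∣
      pentagonalSeries ℚ - ∏ i ∈ Finset.range N, (1 - (X : ℚ⟦X⟧) ^ (i + 1)) := by
    rw [X_pow_dvd_iff]
    intro m hm
    rw [map_sub, coeff_prod_eq ℚ m N (by omega), sub_self]
  have h4 : aP ℚ N * y - partSeries ℚ * y = (pentagonalSeries ℚ -
      ∏ i ∈ Finset.range N, (1 - (X : ℚ⟦X⟧) ^ (i + 1))) * (aP ℚ N * partSeries ℚ * y) := by
    linear_combination (-aP ℚ N * y) * h2 + (partSeries ℚ * y) * h1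
  have h5 : (X : ℚ⟦X⟧) ^ (N + 1) ∣ aP ℚ N * y - partSeries ℚ * y := by
    rw [h4]; exact Dvd.dvd.mul_right h3 _
  have := (X_pow_dvd_iff.mp h5) n (by omega)
  rwa [map_sub, sub_eq_zero] at this

/-- The arithmetic condition on `n` forces `n ≥ 2`, where the crank has its usual
generating function. -/
lemma two_le_of_eq {l Q : ℕ} [Fact Q.Prime] (hl5 : 5 ≤ l) (hQ : Nat.Coprime Q 12) {n m e : ℕ} (he : 0 < e)
    (h : 24 * n = l * (Q ^ e * m) + 1) : 2 ≤ n := by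
  have hQ5 : 5 ≤ Q := by
    have hp : Q.Prime := Fact.out
    by_contra hlt
    have : Q ≤ 4 := by omega
    have h2 := hp.two_le
    interval_cases Q <;> revert hQ <;> decide
  rcases Nat.eq_zero_or_pos m with rfl | hm
  · omega
  · have h1 : Q ≤ Q ^ e := Nat.le_self_pow he.ne' Q
    have h2 : 5 * (5 * 1) ≤ l * (Q ^ e * m) :=
      Nat.mul_le_mul hl5 (Nat.mul_le_mul (hQ5.trans h1) hm)
    omega

variable {l Q : ℕ} [Fact l.Prime] [Fact Q.Prime]

/-- Sums over partitions of any polynomial in the crank are coefficients of a good series. -/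
lemma exists_good_poly (hl5 : 5 ≤ l) (hlQ : l ≠ Q) (hQ : Nat.Coprime Q 12) (q : Polynomial ℚ) :
    ∃ Z ∈ goodSeries l Q, ∀ n, 2 ≤ n →
      ∑ p : n.Partition, q.eval (p.crank : ℚ) = coeff n Z := by
  refine ⟨q.sum fun s c => c • (partSeries ℚ * MvPolynomial.aeval sigmaSeries (momentPoly s)),
    Submodule.sum_mem _ fun s _ => Submodule.smul_mem _ _
      (good_quasi hl5 hlQ hQ (aeval_mem_quasi _)), fun n hn => ?_⟩
  simp only [Polynomial.sum_def, Polynomial.eval_eq_sum, map_sum, coeff_smul]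
  rw [Finset.sum_comm]
  refine Finset.sum_congr rfl fun s _ => ?_
  rw [← Finset.mul_sum, crank_moment hn le_rfl, coeff_aP_mul le_rfl, smul_eq_mul]

/-- Binomial coefficients of integers are the values of a rational polynomial. -/
lemma choose_eq_eval (k : ℕ) (r : ℤ) : ((Ring.choose r k : ℤ) : ℚ) =
    (Polynomial.C ((k.factorial : ℚ)⁻¹) * descPochhammer ℚ k).eval (r : ℚ) := by
  have h := Ring.descPochhammer_eq_factorial_smul_choose r k
  rw [← Polynomial.eval_eq_smeval] at h
  have h2 : (descPochhammer ℚ k).eval (r : ℚ) = (k.factorial : ℚ) * ((Ring.choose r k : ℤ) : ℚ) := by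
    rw [← descPochhammer_map (Int.castRingHom ℚ)]
    have := Polynomial.eval_intCast_map (Int.castRingHom ℚ) (descPochhammer ℤ k) r
    rw [this, Int.cast_id, h]
    simp
  rw [Polynomial.eval_mul, Polynomial.eval_C, h2, inv_mul_cancel_left₀]
  exact_mod_cast k.factorial_ne_zero

/-- The binomial moments of the crank are divisible by any power of `l` in suitable
progressions. -/
lemma exists_dvd_choose (hl5 : 5 ≤ l) (hlQ : l ≠ Q) (hQ : Nat.Coprime Q 12) (k i : ℕ) :
    ∃ K > 0, ∀ t > 0, ∀ n m : ℕ, 24 * n = l * (Q ^ (2 * (t * K) - 1) * m) + 1 → ¬ Q ∣ m →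
      (l ^ i : ℤ) ∣ ∑ p : n.Partition, Ring.choose p.crank k := by
  obtain ⟨Z, hZ, hn⟩ := exists_good_poly hl5 hlQ hQ
    (Polynomial.C ((k.factorial : ℚ)⁻¹) * descPochhammer ℚ k)
  obtain ⟨K, hK, h⟩ := hZ i
  refine ⟨K, hK, fun t ht n m hnm hm => ?_⟩
  have h1 := h t ht n m hnm hm
  have htK : 0 < t * K := Nat.mul_pos ht hK
  rw [← hn n (two_le_of_eq hl5 hQ (by omega) hnm)] at h1
  simp_rw [← choose_eq_eval] at h1
  rw [← Int.cast_sum, Rat.cast_intCast, Padic.norm_int_le_pow_iff_dvd] at h1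
  exact_mod_cast h1

/-- The residue class of `m` modulo `l ^ j` in `ℤ_[l]`. -/
def residueClass (l : ℕ) [Fact l.Prime] (m : ℤ) (j : ℕ) : Set ℤ_[l] :=
  Metric.closedBall (m : ℤ_[l]) ((l : ℝ) ^ (-j : ℤ))

lemma isClopen_residueClass (m : ℤ) (j : ℕ) : IsClopen (residueClass l m j) := by
  refine IsUltrametricDist.isClopen_closedBall _ (zpow_ne_zero _ ?_)
  exact_mod_cast (Fact.out : l.Prime).ne_zero

lemma intCast_mem_residueClass (m r : ℤ) (j : ℕ) :
    (r : ℤ_[l]) ∈ residueClass l m j ↔ r ≡ m [ZMOD (l ^ j : ℕ)] := by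
  rw [residueClass, Metric.mem_closedBall, dist_eq_norm, ← Int.cast_sub,
    PadicInt.norm_int_le_pow_iff_dvd, Int.modEq_iff_dvd, ← dvd_neg, neg_sub]
  push_cast
  rfl

/-- Mahler's theorem: modulo `l ^ i`, the indicator function of a residue class is a finite
`ℤ_[l]`-combination of binomial coefficients. -/
lemma exists_mahler_approx (m : ℤ) (j i : ℕ) :
    ∃ (s : Finset ℕ) (a : ℕ → ℤ_[l]), ∀ x : ℤ_[l],
      ‖(residueClass l m j).indicator 1 x - ∑ k ∈ s, Ring.choose x k * a k‖
        ≤ (l : ℝ) ^ (-i : ℤ) := by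
  let f : C(ℤ_[l], ℤ_[l]) :=
    (LocallyConstant.charFn ℤ_[l] (isClopen_residueClass (l := l) m j) : C(ℤ_[l], ℤ_[l]))
  have hs := PadicInt.hasSum_mahler f
  have hpos : (0 : ℝ) < (l : ℝ) ^ (-i : ℤ) :=
    zpow_pos (by exact_mod_cast (Fact.out : l.Prime).pos) _
  obtain ⟨s, hs⟩ := (hs.eventually (Metric.ball_mem_nhds f hpos)).exists
  refine ⟨s, fun k => (fwdDiff 1)^[k] f 0, fun x => ?_⟩
  rw [dist_comm, dist_eq_norm] at hs
  refine le_trans ?_ hs.le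
  refine le_trans (le_of_eq ?_) (ContinuousMap.norm_coe_le_norm _ x)
  congr 1
  rw [ContinuousMap.sub_apply, ContinuousMap.sum_apply]
  rfl

/-- The crank count is the sum of an indicator function over the cranks. -/
lemma crankCountMod_cast (m : ℤ) (j n : ℕ) : (crankCountMod m (l ^ j) n : ℤ_[l]) =
    ∑ p : n.Partition, (residueClass l m j).indicator 1 (p.crank : ℤ_[l]) := by
  classical
  simp only [Set.indicator_apply, intCast_mem_residueClass, Pi.one_apply, Finset.sum_boole,
    crankCountMod, Fintype.card_subtype]

/-- The congruence for a single residue class `r`: the binomial moments handle the finite part of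
the Mahler expansion of its indicator function, and the tail vanishes modulo `l ^ i`. -/
lemma exists_dvd_crankCount (hl5 : 5 ≤ l) (hlQ : l ≠ Q) (hQ : Nat.Coprime Q 12) (r : ℤ)
    (i j : ℕ) : ∃ K > 0, ∀ t > 0, ∀ n m : ℕ,
      24 * n = l * (Q ^ (2 * (t * K) - 1) * m) + 1 → ¬ Q ∣ m → l ^ i ∣ crankCountMod r (l ^ j) n := by
  obtain ⟨s, a, hsa⟩ := exists_mahler_approx (l := l) r j i
  choose K hK h using fun k => exists_dvd_choose hl5 hlQ hQ k i
  refine ⟨∏ k ∈ s, K k, Finset.prod_pos fun k _ => hK k, fun t ht n m hnm hm => ?_⟩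
  have h0 : (0 : ℝ) ≤ (l : ℝ) ^ (-i : ℤ) := zpow_nonneg (Nat.cast_nonneg _) _
  have key : ‖(((crankCountMod r (l ^ j) n : ℕ) : ℤ) : ℤ_[l])‖ ≤ (l : ℝ) ^ (-i : ℤ) := by
    have e : (((crankCountMod r (l ^ j) n : ℕ) : ℤ) : ℤ_[l]) =
        (∑ p : n.Partition, ((residueClass l r j).indicator 1 (p.crank : ℤ_[l]) -
          ∑ k ∈ s, Ring.choose (p.crank : ℤ_[l]) k * a k)) +
        ∑ k ∈ s, ((∑ p : n.Partition, Ring.choose p.crank k : ℤ) : ℤ_[l]) * a k := by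
      rw [Finset.sum_sub_distrib, ← crankCountMod_cast, Finset.sum_comm (t := s), Int.cast_natCast]
      simp_rw [Int.cast_sum, Finset.sum_mul]
      have : ∀ (z : ℤ) (k : ℕ), ((Ring.choose z k : ℤ) : ℤ_[l]) = Ring.choose (z : ℤ_[l]) k :=
        fun z k => Ring.map_choose (Int.castRingHom ℤ_[l]) z k
      simp_rw [this]
      ring
    rw [e]
    refine (IsUltrametricDist.norm_add_le_max _ _).trans (max_le ?_ ?_)
    · exact IsUltrametricDist.norm_sum_le_of_forall_le_of_nonneg h0 fun p _ => hsa _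
    · refine IsUltrametricDist.norm_sum_le_of_forall_le_of_nonneg h0 fun k hk => ?_
      obtain ⟨d, hd⟩ := Finset.dvd_prod_of_mem K hk
      have hd0 : 0 < d := Nat.pos_of_ne_zero fun h' => by
        rw [h', mul_zero] at hd
        exact (Finset.prod_pos fun k _ => hK k : 0 < ∏ k ∈ s, K k).ne' hd
      have e2 : t * ∏ k ∈ s, K k = t * d * K k := by rw [hd]; ring
      rw [e2] at hnm
      have := h k (t * d) (Nat.mul_pos ht hd0) n m hnm hm
      rw [norm_mul]
      refine (mul_le_of_le_one_right (norm_nonneg _) (PadicInt.norm_le_one _)).trans ?_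
      rw [PadicInt.norm_int_le_pow_iff_dvd]
      exact_mod_cast this
  rw [PadicInt.norm_int_le_pow_iff_dvd] at key
  exact_mod_cast key

/-- One modulus works for all residue classes. -/
lemma exists_dvd_crankCount_unif (hl5 : 5 ≤ l) (hlQ : l ≠ Q) (hQ : Nat.Coprime Q 12)
    (i j : ℕ) : ∃ K > 0, ∀ n m : ℕ, 24 * n = l * (Q ^ (2 * K - 1) * m) + 1 → ¬ Q ∣ m →
      ∀ r : ℤ, 0 ≤ r → r ≤ (l : ℤ) ^ j - 1 → l ^ i ∣ crankCountMod r (l ^ j) n := by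
  choose K hK h using fun r : ℤ => exists_dvd_crankCount hl5 hlQ hQ r i j
  have hpos : 0 < ∏ r ∈ Finset.Icc (0 : ℤ) ((l : ℤ) ^ j - 1), K r :=
    Finset.prod_pos fun r _ => hK r
  refine ⟨_, hpos, fun n m hnm hm r hr0 hr => ?_⟩
  obtain ⟨d, hd⟩ := Finset.dvd_prod_of_mem K (Finset.mem_Icc.mpr ⟨hr0, hr⟩)
  have hd0 : 0 < d := Nat.pos_of_ne_zero fun h' => by
    rw [h', mul_zero] at hd
    exact hpos.ne' hd
  rw [hd, mul_comm (K r)] at hnm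
  exact h r d hd0 n m hnm hm

/-- A progression inside the set of `n` with `24 n - 1 = l Q ^ (2 K - 1) m`, `Q ∤ m`. -/
lemma exists_progression (hl5 : 5 ≤ l) (hQ : Nat.Coprime Q 12) (e : ℕ) :
    ∃ A > 0, ∃ B > 0, ∀ k : ℕ, ∃ m : ℕ, 24 * (A * k + B) = l * (Q ^ e * m) + 1 ∧ ¬ Q ∣ m := by
  have hlp : l.Prime := Fact.out
  have hQp : Q.Prime := Fact.out
  have hl24 : Nat.Coprime l 24 := by
    rw [Nat.coprime_comm, show 24 = 2 ^ 3 * 3 by norm_num]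
    refine Nat.Coprime.mul_left (Nat.Coprime.pow_left _ ?_) ?_
    · exact (Nat.coprime_primes Nat.prime_two hlp).mpr (by omega)
    · exact (Nat.coprime_primes Nat.prime_three hlp).mpr (by omega)
  have hQ24 : Nat.Coprime Q 24 := by
    rw [show 24 = 12 * 2 by norm_num]
    exact hQ.mul_right (Nat.Coprime.coprime_mul_left_right (k := 6) hQ)
  set c := l * Q ^ e with hc
  have hc24 : Nat.Coprime c 24 := hl24.mul_left (hQ24.pow_left _)
  -- every unit modulo `24` is its own inverse
  have hsq : c * (23 * c) + 1 ≡ 0 [MOD 24] := by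
    have h1 : Nat.Coprime (c % 24) 24 := by
      rw [Nat.Coprime, ← Nat.gcd_rec, Nat.gcd_comm]
      exact hc24
    have h2 : c % 24 < 24 := Nat.mod_lt _ (by norm_num)
    have h3 : ∀ d < 24, Nat.Coprime d 24 → d * (23 * d) + 1 ≡ 0 [MOD 24] := by decide
    have h4 := Nat.mod_modEq c 24
    exact (((h4.symm.mul (h4.symm.mul_left 23)).add_right 1)).trans (h3 _ h2 h1)
  obtain ⟨m₀, hm1, hm2⟩ := Nat.chineseRemainder hQ24 1 (23 * c)
  have hB : 24 ∣ c * m₀ + 1 :=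
    (Nat.modEq_zero_iff_dvd).mp (((hm2.mul_left c).add_right 1).trans hsq)
  obtain ⟨B, hB⟩ := hB
  refine ⟨c * Q, Nat.mul_pos (Nat.mul_pos hlp.pos (Nat.pow_pos hQp.pos)) hQp.pos, B, by omega,
    fun k => ⟨m₀ + 24 * Q * k, ?_, ?_⟩⟩
  · rw [mul_add 24, ← hB, ← mul_assoc l, ← hc]
    ring
  · intro hd
    have : Q ∣ m₀ := (Nat.dvd_add_left ⟨24 * k, by ring⟩).mp hd
    have h1 : 0 ≡ 1 [MOD Q] := (Nat.modEq_zero_iff_dvd.mpr this).symm.trans hm1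
    have := (Nat.modEq_iff_dvd' (by norm_num)).mp h1
    exact hQp.one_lt.ne' (Nat.dvd_one.mp this)

end Assembly

end MahlburgCrank

theorem mahlburg_crank_congruences (l : ℕ) (hl : l.Prime) (hl5 : 5 ≤ l)
    (i j : ℕ) (hi : 0 < i) (hj : 0 < j) :
    {AB : ℕ × ℕ | 0 < AB.1 ∧ 0 < AB.2 ∧
      ∀ m : ℤ, 0 ≤ m → m ≤ (l : ℤ) ^ j - 1 →
        ∀ k : ℕ, crankCountMod m (l ^ j) (AB.1 * k + AB.2) ≡ 0 [MOD l ^ i]}.Infinite := by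
  have : Fact l.Prime := ⟨hl⟩
  obtain ⟨Q, hQp, hlQ, hQ⟩ : ∃ Q : ℕ, Q.Prime ∧ l ≠ Q ∧ Nat.Coprime Q 12 := by
    rcases eq_or_ne l 5 with rfl | h
    · exact ⟨7, by norm_num, by norm_num, by norm_num⟩
    · exact ⟨5, by norm_num, h, by norm_num⟩
  have : Fact Q.Prime := ⟨hQp⟩
  obtain ⟨K, -, hK⟩ := MahlburgCrank.exists_dvd_crankCount_unif hl5 hlQ hQ i j
  obtain ⟨A, hA, B, hB, h⟩ := MahlburgCrank.exists_progression hl5 hQ (2 * K - 1)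
  refine Set.infinite_of_injective_forall_mem (f := fun s : ℕ => (A, A * s + B)) ?_ ?_
  · intro s t hst
    have : A * s + B = A * t + B := (Prod.ext_iff.mp hst).2
    exact Nat.eq_of_mul_eq_mul_left hA (by omega)
  · refine fun s => ⟨hA, Nat.add_pos_right _ hB, fun m hm0 hm k => ?_⟩
    obtain ⟨m', hm', hQm⟩ := h (k + s)
    have e : A * k + (A * s + B) = A * (k + s) + B := by ring
    rw [Nat.modEq_zero_iff_dvd]
    change l ^ i ∣ crankCountMod m (l ^ j) (A * k + (A * s + B))
    rw [e]
    exact hK _ m' hm' hQm m hm0 hm
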